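/- arXiv:1904.03818 — 4 statements merged into one kernel-verified Lean document; each statement's English description precedes it below -/
import Mathlib

section
/- Let k be a positive integer, let (G, x, y) be a 2-connected rooted graph, let H = G[S, T] be an l-core of G with respect to (x, y), and let C be the component of G − V(H) containing y. If l = k − 1, there is at least one edge of G between S \ {x} and C, and the induced subgraph G[T] contains at least one edge, then G contains k paths from x to y satisfying the semi-length condition. -/
/-!
Write `k = l + 1`, so `|S| = k ≥ 2` and `|T| ≥ k`. Let `s ∈ S \ {x}` have a neighbour in the
component `C` of `y`. There is a path `Q` from `s` to `y` whose vertices other than `s` lie in `C`,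
hence avoid `S ∪ T`. If `ab` is an edge inside `T`, then in front of `Q` one may put the path
`x, a, s` of length `2`, or the path `x, a, b, s₁, t₁, …, sₙ, tₙ, s` of length `2n + 3` with
`sᵢ ∈ S \ {x, s}` and `tᵢ ∈ T \ {a, b}`; both of these sets have at least `k - 2` elements, so every
`n ≤ k - 2` is allowed (`exists_zigzag_path`). The lengths `2, 3, 5, …, 2k - 1`, all shifted by
`|Q|`, satisfy the semi-length condition with switch `j = 1`.
-/

open SimpleGraph

/-- A finite simple graph is 2-connected if it is connected, has at least 3 vertices,
and remains connected after deleting any single vertex. -/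
def TwoConnected {V : Type*} [Fintype V] (G : SimpleGraph V) : Prop :=
  G.Connected ∧ 3 ≤ Fintype.card V ∧
    ∀ v : V, (G.induce ({v}ᶜ : Set V)).Connected

/-- The rooted graph `(G, x, y)` is 2-connected if `x ≠ y` and the graph obtained
from `G` by adding the edge `xy` (when absent) is 2-connected. -/
def RootedTwoConnected {V : Type*} [Fintype V] (G : SimpleGraph V) (x y : V) : Prop :=
  x ≠ y ∧ TwoConnected (G ⊔ SimpleGraph.fromEdgeSet {s(x, y)})

/-- `G[S, T]` is an `l`-core of `G` with respect to `(x, y)`: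
(C1) `G[S, T]` is complete bipartite (with `S`, `T` disjoint) and `|T| ≥ |S| = l + 1 ≥ 2`;
(C2) `x ∈ S` and `y ∉ S ∪ T`;
(C3) `e_G(v, S) ≤ l` for every vertex `v ∉ S ∪ T ∪ {y}`;
(C4) `e_G(v, T \ {v}) ≤ l + 1` for every vertex `v ∉ S ∪ {y}`. -/
def IsCore {V : Type*} [Fintype V] (G : SimpleGraph V) (x y : V) (l : ℕ)
    (S T : Set V) : Prop :=
  Disjoint S T ∧
  (∀ a ∈ S, ∀ b ∈ T, G.Adj a b) ∧
  S.ncard ≤ T.ncard ∧ S.ncard = l + 1 ∧ 2 ≤ S.ncard ∧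
  x ∈ S ∧ y ∉ S ∪ T ∧
  (∀ v : V, v ∉ S ∪ T ∪ {y} → {u ∈ S | G.Adj v u}.ncard ≤ l) ∧
  (∀ v : V, v ∉ S ∪ {y} → {u ∈ T \ {v} | G.Adj v u}.ncard ≤ l + 1)

/-- `v` lies in the component of `G − W` containing `y`, i.e. `y` and `v` both lie
outside `W` and are joined by a path in the subgraph of `G` induced on `Wᶜ`. -/
def InCompOf {V : Type*} (G : SimpleGraph V) (W : Set V) (y v : V) : Prop :=
  ∃ (hy : y ∈ Wᶜ) (hv : v ∈ Wᶜ), (G.induce Wᶜ).Reachable ⟨y, hy⟩ ⟨v, hv⟩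

/-- The sequence of lengths `f 1, …, f k` satisfies the semi-length condition:
`f 1 ≥ 2` and there is a switch `j` with `1 ≤ j ≤ k − 1` such that consecutive
lengths differ by `2` except at the switch, where they differ by `1`. -/
def SemiLengthSeq (k : ℕ) (f : ℕ → ℕ) : Prop :=
  2 ≤ f 1 ∧ ∃ j, 1 ≤ j ∧ j ≤ k - 1 ∧
    (∀ i, 1 ≤ i → i ≤ j - 1 → f (i + 1) = f i + 2) ∧
    f (j + 1) = f j + 1 ∧
    (∀ i, j + 1 ≤ i → i ≤ k - 1 → f (i + 1) = f i + 2)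

/-- Starting at a vertex `b` adjacent to everything in `A` and to `s`, zigzag `n` times between the
completely joined sets `A` and `B`, then step to `s`, to which all of `B` is adjacent too, and follow
the given path `Q`. -/
theorem exists_zigzag_path {V : Type*} [DecidableEq V] (G : SimpleGraph V) {s y : V}
    (Q : G.Walk s y) (hQ : Q.IsPath) (n : ℕ) :
    ∀ (A B : Finset V) (b : V), n ≤ A.card → n ≤ B.card → Disjoint A B → b ∉ A → b ∉ B →
      b ∉ Q.support → (∀ u ∈ A, u ∉ Q.support) → (∀ u ∈ B, u ∉ Q.support) →
      (∀ t ∈ insert b B, G.Adj t s ∧ ∀ u ∈ A, G.Adj t u) →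
      ∃ p : G.Walk b y, p.IsPath ∧ p.length = 2 * n + 1 + Q.length ∧
        ∀ z ∈ p.support, z = b ∨ z ∈ A ∨ z ∈ B ∨ z ∈ Q.support := by
  induction n with
  | zero =>
    intro A B b _ _ _ _ _ hbQ _ _ hadj
    refine ⟨Walk.cons (hadj b (by simp)).1 Q, hQ.cons hbQ, ?_, ?_⟩
    · simp; omega
    · intro z hz
      simp only [Walk.support_cons, List.mem_cons] at hz
      tauto
  | succ n ih =>
    intro A B b hA hB hAB hbA hbB hbQ hAQ hBQ hadj
    obtain ⟨u, hu⟩ := Finset.card_pos.1 (by omega : 0 < A.card)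
    obtain ⟨t, ht⟩ := Finset.card_pos.1 (by omega : 0 < B.card)
    have huB : u ∉ B := Finset.disjoint_left.1 hAB hu
    have htA : t ∉ A := Finset.disjoint_right.1 hAB ht
    obtain ⟨p, hp, hlen, hsupp⟩ := ih (A.erase u) (B.erase t) t
      (by rw [Finset.card_erase_of_mem hu]; omega)
      (by rw [Finset.card_erase_of_mem ht]; omega)
      (hAB.mono (Finset.erase_subset _ _) (Finset.erase_subset _ _))
      (fun h => htA (Finset.mem_of_mem_erase h)) (by simp) (hBQ t ht)
      (fun w hw => hAQ w (Finset.mem_of_mem_erase hw))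
      (fun w hw => hBQ w (Finset.mem_of_mem_erase hw))
      (fun w hw => by
        have hwB : w ∈ B := by
          rcases Finset.mem_insert.1 hw with rfl | h
          · exact ht
          · exact Finset.mem_of_mem_erase h
        have h := hadj w (Finset.mem_insert_of_mem hwB)
        exact ⟨h.1, fun v hv => h.2 v (Finset.mem_of_mem_erase hv)⟩)
    have hup : u ∉ p.support := by
      intro h
      have h1 := hsupp u h
      have h2 := hAQ u hu
      simp only [Finset.mem_erase] at h1
      rcases h1 with rfl | h1 | h1 | h1 <;> tauto
    have hbp : b ∉ p.support := by
      intro h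
      have h1 := hsupp b h
      simp only [Finset.mem_erase] at h1
      rcases h1 with rfl | h1 | h1 | h1 <;> tauto
    have hbu : G.Adj b u := (hadj b (by simp)).2 u hu
    have hut : G.Adj u t := ((hadj t (Finset.mem_insert_of_mem ht)).2 u hu).symm
    refine ⟨Walk.cons hbu (Walk.cons hut p), (hp.cons hup).cons ?_, ?_, ?_⟩
    · simp only [Walk.support_cons, List.mem_cons, not_or]
      exact ⟨hbu.ne, hbp⟩
    · simp only [Walk.length_cons, hlen]; ring
    · intro z hz
      simp only [Walk.support_cons, List.mem_cons] at hz
      rcases hz with rfl | rfl | hz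
      · exact Or.inl rfl
      · exact Or.inr (Or.inl hu)
      · have h1 := hsupp z hz
        simp only [Finset.mem_erase] at h1
        rcases h1 with rfl | h1 | h1 | h1 <;> tauto

/-- A vertex `s ∈ W` with a neighbour in the component of `G - W` containing `y` is joined to `y`
by a path that meets `W` only in `s`. -/
theorem exists_path_avoiding {V : Type*} (G : SimpleGraph V) {W : Set V} {s v y : V}
    (hs : s ∈ W) (hv : InCompOf G W y v) (hsv : G.Adj s v) :
    ∃ Q : G.Walk s y, Q.IsPath ∧ ∀ z ∈ Q.support, z ∈ W → z = s := by
  obtain ⟨hy, hv, hr⟩ := hv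
  obtain ⟨q, hq⟩ := hr.symm.exists_isPath
  have hq' : (q.map (Embedding.induce Wᶜ).toHom).IsPath :=
    Walk.IsPath.map (Embedding.induce (G := G) Wᶜ).injective hq
  have hsup : ∀ z ∈ (q.map (Embedding.induce (G := G) Wᶜ).toHom).support, z ∉ W := by
    intro z hz
    rw [Walk.support_map, List.mem_map] at hz
    obtain ⟨w, -, rfl⟩ := hz
    exact w.2
  refine ⟨Walk.cons hsv (q.map (Embedding.induce Wᶜ).toHom), hq'.cons fun h => hsup s h hs, ?_⟩
  intro z hz hzW
  rcases List.mem_cons.1 hz with h | h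
  · exact h
  · exact absurd hzW (hsup z h)

/-- Let `(G, x, y)` be a 2-connected rooted graph, `G[S, T]` an `l`-core of `G` with
respect to `(x, y)`, and `C` the component of `G − V(H)` containing `y`.
If `l = k − 1`, there is an edge of `G` between `S \ {x}` and `C`, and the induced
subgraph `G[T]` contains at least one edge, then `G` contains `k` paths from `x`
to `y` satisfying the semi-length condition. -/
theorem k_paths_semilength_of_core {V : Type*} [Fintype V] (k l : ℕ) (hk : 0 < k)
    (G : SimpleGraph V) (x y : V) (S T : Set V)
    (hroot : RootedTwoConnected G x y)
    (hcore : IsCore G x y l S T)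
    (hl : l = k - 1)
    (hSC : ∃ s ∈ S \ {x}, ∃ v : V, InCompOf G (S ∪ T) y v ∧ G.Adj s v)
    (hT : ∃ a ∈ T, ∃ b ∈ T, G.Adj a b) :
    ∃ p : ℕ → G.Walk x y,
      (∀ i, 1 ≤ i → i ≤ k → (p i).IsPath) ∧
      SemiLengthSeq k (fun i => (p i).length) := by
  classical
  obtain ⟨hdisj, hcomp, hST, hS, hS2, hxS, -, -, -⟩ := hcore
  obtain ⟨s, ⟨hsS, hsx⟩, v, hv, hsv⟩ := hSC
  obtain ⟨a, haT, b, hbT, hab⟩ := hT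
  obtain ⟨Q, hQ, hQW⟩ := exists_path_avoiding G (Set.mem_union_left T hsS) hv hsv
  have hST' : ∀ u ∈ S, u ∉ T := fun u h1 h2 => Set.disjoint_left.1 hdisj h1 h2
  have hxs : x ≠ s := fun h => hsx h.symm
  have hTQ : ∀ t ∈ T, t ∉ Q.support := fun t ht h =>
    hST' s hsS (hQW t h (Or.inr ht) ▸ ht)
  have hSQ : ∀ u ∈ S, u ≠ s → u ∉ Q.support := fun u hu hne h => hne (hQW u h (Or.inl hu))
  have hxa : G.Adj x a := hcomp x hxS a haT
  -- The interior vertices of the zigzag avoid `x`, `s` on one side and `a`, `b` on the other.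
  set A : Finset V := (S.toFinset.erase x).erase s with hAdef
  set B : Finset V := (T.toFinset.erase a).erase b with hBdef
  have hAm : ∀ u, u ∈ A ↔ u ≠ s ∧ u ≠ x ∧ u ∈ S := by simp [hAdef]
  have hBm : ∀ u, u ∈ B ↔ u ≠ b ∧ u ≠ a ∧ u ∈ T := by simp [hBdef]
  have hAc : k - 2 ≤ A.card := by
    rw [Set.ncard_eq_toFinset_card'] at hS
    rw [hAdef, Finset.card_erase_of_mem (by simp [hsS, hxs.symm]),
      Finset.card_erase_of_mem (by simp [hxS])]
    omega
  have hBc : k - 2 ≤ B.card := by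
    rw [Set.ncard_eq_toFinset_card' T] at hST
    rw [hBdef, Finset.card_erase_of_mem (by simp [hbT, hab.ne']),
      Finset.card_erase_of_mem (by simp [haT])]
    omega
  have key : ∀ i, ∃ p : G.Walk x y, 1 ≤ i → i ≤ k →
      p.IsPath ∧ p.length = (if i = 1 then 2 else 2 * i - 1) + Q.length := by
    intro i
    have hxaQ : x ∉ (Walk.cons (hcomp s hsS a haT).symm Q).support := by
      simp only [Walk.support_cons, List.mem_cons, not_or]
      exact ⟨hxa.ne, hSQ x hxS hxs⟩
    by_cases hi : 2 ≤ i ∧ i ≤ k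
    · obtain ⟨p, hp, hlen, hsupp⟩ := exists_zigzag_path G Q hQ (i - 2) A B b
        (by omega) (by omega)
        (Finset.disjoint_left.2 fun u h1 h2 => hST' u ((hAm u).1 h1).2.2 ((hBm u).1 h2).2.2)
        (fun h => hST' b ((hAm b).1 h).2.2 hbT) (fun h => ((hBm b).1 h).1 rfl) (hTQ b hbT)
        (fun u hu => hSQ u ((hAm u).1 hu).2.2 ((hAm u).1 hu).1)
        (fun u hu => hTQ u ((hBm u).1 hu).2.2)
        (fun t ht => by
          have htT : t ∈ T := by
            rcases Finset.mem_insert.1 ht with rfl | h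
            · exact hbT
            · exact ((hBm t).1 h).2.2
          exact ⟨(hcomp s hsS t htT).symm, fun u hu => (hcomp u ((hAm u).1 hu).2.2 t htT).symm⟩)
      have hap : a ∉ p.support := by
        intro h
        rcases hsupp a h with h | h | h | h
        · exact hab.ne h
        · exact hST' a ((hAm a).1 h).2.2 haT
        · exact ((hBm a).1 h).2.1 rfl
        · exact hTQ a haT h
      have hxp : x ∉ p.support := by
        intro h
        rcases hsupp x h with h | h | h | h
        · exact hST' x hxS (h ▸ hbT)
        · exact ((hAm x).1 h).2.1 rfl
        · exact hST' x hxS ((hBm x).1 h).2.2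
        · exact hSQ x hxS hxs h
      refine ⟨Walk.cons hxa (Walk.cons hab p), fun _ _ => ⟨(hp.cons hap).cons ?_, ?_⟩⟩
      · simp only [Walk.support_cons, List.mem_cons, not_or]
        exact ⟨hxa.ne, hxp⟩
      · rw [if_neg (by omega)]
        simp only [Walk.length_cons, hlen]
        omega
    · refine ⟨Walk.cons hxa (Walk.cons (hcomp s hsS a haT).symm Q), fun h1 h2 =>
        ⟨(hQ.cons (hTQ a haT)).cons hxaQ, ?_⟩⟩
      rw [if_pos (by omega)]
      simp only [Walk.length_cons]
      omega
  choose p hp using key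
  have hlen : ∀ i, 1 ≤ i → i ≤ k →
      (p i).length = (if i = 1 then 2 else 2 * i - 1) + Q.length :=
    fun i h1 h2 => (hp i h1 h2).2
  refine ⟨p, fun i h1 h2 => (hp i h1 h2).1, ?_, 1, le_rfl, by omega, ?_, ?_, ?_⟩
  · have := hlen 1 le_rfl hk
    simp only [if_true] at this
    show 2 ≤ (p 1).length
    omega
  · intro i h1 h2
    omega
  · show (p 2).length = (p 1).length + 1
    rw [hlen 1 le_rfl hk, hlen 2 (by omega) (by omega)]
    simp only [if_true, if_neg (show ¬ (2 = 1) by omega)]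
    omega
  · intro i h1 h2
    show (p (i + 1)).length = (p i).length + 2
    rw [hlen i (by omega) (by omega), hlen (i + 1) (by omega) (by omega),
      if_neg (by omega), if_neg (by omega)]
    omega
end

section
/- Let k and l be positive integers with k = 2l − 1 and k odd. Let G be a (finite simple) graph, let C be an oriented odd cycle in G of length 2m + 1 for some m ≥ 1, and let u be a vertex of C; denote by u^{+m} and u^{−m} the m-th successor and m-th predecessor of u along the orientation of C. If G contains l paths from u to the set {u^{+m}, u^{−m}} that are internally disjoint from V(C) and satisfy the length condition or the semi-length condition, then G contains k cycles having consecutive lengths. -/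
/-!
The two vertices of `c` opposite to `u` cut `c` into arcs of lengths `m` and `m + 1`. A path of
length `a ≥ 2` from `u` to either of them, internally disjoint from `c`, therefore closes up to
cycles of lengths `a + m` and `a + m + 1` (`exists_isCycle_of_path_of_getVert`). Lengths of
successive paths grow by at most `2`, so these pairs leave no gaps; as at most one step is
shorter than `2`, the lengths reach at least the `2 * l - 1` consecutive values starting at
`a₁ + m`, where `a₁` is the length of the first path (`exists_index_of_lengthCondition`).
-/

open SimpleGraph

/-- The sequence of lengths `f 1, …, f k` satisfies the length condition:
`f 1 ≥ 2` and consecutive lengths differ by exactly `2`. -/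
def LengthSeq (k : ℕ) (f : ℕ → ℕ) : Prop :=
  2 ≤ f 1 ∧ ∀ i, 1 ≤ i → i ≤ k - 1 → f (i + 1) = f i + 2

/-- The sequence of lengths `f 1, …, f k` has consecutive lengths:
`f 1 ≥ 2` and consecutive lengths differ by exactly `1`. -/
def ConsecSeq (k : ℕ) (f : ℕ → ℕ) : Prop :=
  2 ≤ f 1 ∧ ∀ i, 1 ≤ i → i ≤ k - 1 → f (i + 1) = f i + 1

/-- A path and an arc back to its start close up to a cycle, provided the interior of the path
avoids a vertex set `S` containing the arc. -/
lemma isCycle_append_of_internally_disjoint {V : Type*} {G : SimpleGraph V} {u w : V}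
    {p : G.Walk u w} {q : G.Walk w u} {S : Set V} (hp : p.IsPath) (hq : q.IsPath)
    (hlen : 2 ≤ p.length) (hqS : ∀ v ∈ q.support, v ∈ S)
    (hdisj : ∀ v ∈ p.support, v ≠ u → v ≠ w → v ∉ S) :
    (p.append q).IsCycle := by
  refine hp.isCycle_append hq ?_ (Or.inl (by omega))
  intro x hxp hxq
  have hpn := hp.support_nodup
  have hqn := hq.support_nodup
  rw [← Walk.cons_tail_support, List.nodup_cons] at hpn hqn
  exact hdisj x (List.mem_of_mem_tail hxp) (fun h => hpn.1 (h ▸ hxp)) (fun h => hqn.1 (h ▸ hxq))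
    (hqS x (List.mem_of_mem_tail hxq))

/-- A path of length at least `2` from `u` to the `n`-th vertex of a cycle `c`, internally
disjoint from `c`, forms a cycle with each of the two arcs of `c` between its ends. -/
lemma exists_isCycle_of_path_of_getVert {V : Type*} {G : SimpleGraph V} {u w : V}
    {c : G.Walk u u} (hc : c.IsCycle) {n : ℕ} (hn : 0 < n) (hnl : n < c.length)
    {p : G.Walk u w} (hp : p.IsPath) (hw : w = c.getVert n) (hlen : 2 ≤ p.length)
    (hdisj : ∀ v ∈ p.support, v ≠ u → v ≠ w → v ∉ c.support) :
    (∃ d : G.Walk u u, d.IsCycle ∧ d.length = p.length + n) ∧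
    (∃ d : G.Walk u u, d.IsCycle ∧ d.length = p.length + (c.length - n)) := by
  subst hw
  refine ⟨⟨p.append (c.take n).reverse, ?_, ?_⟩, ⟨p.append (c.drop n), ?_, ?_⟩⟩
  · refine isCycle_append_of_internally_disjoint (S := {v | v ∈ c.support}) hp
      (hc.isPath_take hnl).reverse hlen (fun v hv => ?_) hdisj
    rw [Walk.support_reverse, List.mem_reverse] at hv
    exact (c.isSubwalk_take n).support_subset hv
  · rw [Walk.length_append, Walk.length_reverse, Walk.take_length, min_eq_left hnl.le]
  · exact isCycle_append_of_internally_disjoint (S := {v | v ∈ c.support}) hp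
      (hc.isPath_drop hn) hlen (fun v hv => (c.isSubwalk_drop n).support_subset hv) hdisj
  · rw [Walk.length_append, Walk.drop_length]

/-- A sequence whose consecutive differences are all `2` on `[a, b]`, in closed form. -/
lemma eq_add_two_mul_of_step {f : ℕ → ℕ} {a b : ℕ}
    (h : ∀ i, a ≤ i → i < b → f (i + 1) = f i + 2) :
    ∀ i, a ≤ i → i ≤ b → f i = f a + 2 * (i - a) := by
  intro i hai
  induction i, hai using Nat.le_induction with
  | base => intro _; omega
  | succ i hai ih =>
    intro hib
    have := h i hai hib
    have := ih (by omega)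
    omega

/-- Closed form of both conditions: `j` is the last index before the switch, with `j = l` when
there is none. -/
lemma exists_switch {l : ℕ} (hl : 0 < l) {f : ℕ → ℕ} (hf : LengthSeq l f ∨ SemiLengthSeq l f) :
    2 ≤ f 1 ∧ ∃ j, 1 ≤ j ∧ j ≤ l ∧ (∀ i, 1 ≤ i → i ≤ j → f i = f 1 + 2 * (i - 1)) ∧
      ∀ i, j < i → i ≤ l → f i + 1 = f 1 + 2 * (i - 1) := by
  rcases hf with ⟨h2, h⟩ | ⟨h2, j, h1j, hjl, ha, hs, hb⟩
  · exact ⟨h2, l, hl, le_rfl,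
      eq_add_two_mul_of_step fun i h1 h3 => h i h1 (by omega), fun i h3 h4 => by omega⟩
  · have hA := eq_add_two_mul_of_step (f := f) (a := 1) (b := j)
      fun i h1 h3 => ha i h1 (by omega)
    refine ⟨h2, j, h1j, by omega, hA, fun i h3 h4 => ?_⟩
    have hB := eq_add_two_mul_of_step (f := f) (a := j + 1) (b := l)
      (fun i h1 h3 => hb i h1 (by omega)) i h3 h4
    have := hA j h1j le_rfl
    omega

lemma two_le_of_lengthCondition {l : ℕ} {f : ℕ → ℕ} (hf : LengthSeq l f ∨ SemiLengthSeq l f)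
    {i : ℕ} (h1 : 1 ≤ i) (h2 : i ≤ l) : 2 ≤ f i := by
  obtain ⟨h, j, h1j, -, ha, hb⟩ := exists_switch (by omega) hf
  rcases le_or_gt i j with hij | hij
  · have := ha i h1 hij
    omega
  · have := hb i hij h2
    omega

/-- The pairs `f i`, `f i + 1` cover the `2 * l - 1` consecutive values starting at `f 1`. -/
lemma exists_index_of_lengthCondition {l : ℕ} (hl : 0 < l) {f : ℕ → ℕ}
    (hf : LengthSeq l f ∨ SemiLengthSeq l f) (s : ℕ) (hs : s < 2 * l - 1) :
    ∃ i, 1 ≤ i ∧ i ≤ l ∧ (f 1 + s = f i ∨ f 1 + s = f i + 1) := by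
  obtain ⟨-, j, h1j, hjl, ha, hb⟩ := exists_switch hl hf
  -- Up to the switch the `i`-th pair has offsets `2 * i - 2, 2 * i - 1`; beyond it both offsets
  -- drop by one.
  by_cases hsj : s < 2 * j
  · have := ha (s / 2 + 1) (by omega) (by omega)
    exact ⟨s / 2 + 1, by omega, by omega, by omega⟩
  · have := hb ((s + 1) / 2 + 1) (by omega) (by omega)
    exact ⟨(s + 1) / 2 + 1, by omega, by omega, by omega⟩

/-- Let `k = 2l − 1` be odd, `c` an oriented odd cycle of length `2m + 1` through
`u`, with `u^{+m} = c.getVert m` and `u^{−m} = c.getVert (m + 1)`. If `G` contains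
`l` `(u, {u^{+m}, u^{−m}})`-paths internally disjoint from `V(C)` satisfying the
length condition or the semi-length condition, then `G` contains `k` cycles having
consecutive lengths. -/
theorem consecutive_cycles_of_odd_k {V : Type*} [Fintype V] (k l m : ℕ)
    (hk : 0 < k) (hl : 0 < l) (hkl : k = 2 * l - 1) (hodd : Odd k)
    (G : SimpleGraph V) (u : V) (c : G.Walk u u) (hc : c.IsCycle)
    (hm : 1 ≤ m) (hlen : c.length = 2 * m + 1)
    (hpaths : ∃ (w : ℕ → V) (p : ∀ i : ℕ, G.Walk u (w i)),
      (∀ i, 1 ≤ i → i ≤ l →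
        (p i).IsPath ∧
        (w i = c.getVert m ∨ w i = c.getVert (m + 1)) ∧
        (∀ v ∈ (p i).support, v ≠ u → v ≠ w i → v ∉ c.support)) ∧
      (LengthSeq l (fun i => (p i).length) ∨
       SemiLengthSeq l (fun i => (p i).length))) :
    ∃ (v : ℕ → V) (d : ∀ i : ℕ, G.Walk (v i) (v i)),
      (∀ i, 1 ≤ i → i ≤ k → (d i).IsCycle) ∧
      ConsecSeq k (fun i => (d i).length) := by
  obtain ⟨w, p, hp, hf⟩ := hpaths
  -- Each path supplies two cycles, since the arcs between `u` and either end have lengths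
  -- `m` and `m + 1`.
  have hpair : ∀ i, 1 ≤ i → i ≤ l → ∀ n, n = (p i).length + m ∨ n = (p i).length + (m + 1) →
      ∃ d : G.Walk u u, d.IsCycle ∧ d.length = n := by
    intro i h1 h2 n hn
    obtain ⟨hpath, hw, hdisj⟩ := hp i h1 h2
    have hlen2 := two_le_of_lengthCondition hf h1 h2
    rcases hw with hw | hw
    · obtain ⟨ha, hb⟩ := exists_isCycle_of_path_of_getVert hc (by omega) (by omega) hpath hw
        hlen2 hdisj
      rcases hn with rfl | rfl
      · exact ha
      · rwa [show c.length - m = m + 1 by omega] at hb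
    · obtain ⟨ha, hb⟩ := exists_isCycle_of_path_of_getVert hc (by omega) (by omega) hpath hw
        hlen2 hdisj
      rcases hn with rfl | rfl
      · rwa [show c.length - (m + 1) = m by omega] at hb
      · exact ha
  have hall : ∀ t, ∃ d : G.Walk u u, 1 ≤ t → t ≤ k →
      d.IsCycle ∧ d.length = (p 1).length + m + (t - 1) := by
    intro t
    by_cases ht : 1 ≤ t ∧ t ≤ k
    · obtain ⟨i, h1, h2, hi⟩ :=
        exists_index_of_lengthCondition hl hf (t - 1) (by omega)
      obtain ⟨d, hd⟩ := hpair i h1 h2 ((p 1).length + m + (t - 1)) (by omega)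
      exact ⟨d, fun _ _ => hd⟩
    · exact ⟨.nil, fun h1 h2 => absurd ⟨h1, h2⟩ ht⟩
  choose d hd using hall
  refine ⟨fun _ => u, d, fun i h1 h2 => (hd i h1 h2).1, ?_, fun i h1 h2 => ?_⟩
  · have := (hd 1 le_rfl (by omega)).1.three_le_length
    show 2 ≤ (d 1).length
    omega
  · have ha := (hd i h1 (by omega)).2
    have hb := (hd (i + 1) (by omega) (by omega)).2
    show (d (i + 1)).length = (d i).length + 1
    omega
end

section
/- Let k and l be positive integers with k = 2l and k even. Let G be a (finite simple) graph, let C be an oriented odd cycle in G of length 2m + 1 for some m ≥ 1, and let u be a vertex of C; denote by u^{+m} and u^{−m} the m-th successor and m-th predecessor of u along the orientation of C. If G contains l paths from u to the set {u^{+m}, u^{−m}} that are internally disjoint from V(C) and satisfy the length condition, then G contains k cycles having consecutive lengths. -/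
/-!
Write `n` for the position of the far end of a given path on the odd cycle: it is `m` or `m + 1`, so
the two arcs of the cycle between `u` and that end have lengths `m` and `m + 1` in some order. The
path meets the cycle only in its two ends, so it closes up with either arc to a cycle. A path of
length `q` thus yields cycles of lengths `q + m` and `q + m + 1`, and as the path lengths increase
in steps of `2`, these pairs follow on from each other without gaps. The work is done by
`exists_arc`, which produces the arcs, and `SimpleGraph.Walk.IsPath.isCycle_append`, which closes up
internally disjoint paths to cycles.
-/

open SimpleGraph

/-- A path that meets `S` only in its ends closes up to a cycle with any path back inside `S`. -/
lemma exists_cycle_of_path_of_arc {V : Type*} {G : SimpleGraph V} {u w : V} {S : List V}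
    {p : G.Walk u w} {q : G.Walk w u} (hp : p.IsPath) (hq : q.IsPath) (hp2 : 2 ≤ p.length)
    (hqS : ∀ x ∈ q.support, x ∈ S) (hpS : ∀ x ∈ p.support, x ≠ u → x ≠ w → x ∉ S) :
    (p.append q).IsCycle := by
  refine hp.isCycle_append hq (fun x hxp hxq => ?_) (Or.inl hp2)
  have hpn := hp.support_nodup
  have hqn := hq.support_nodup
  rw [← p.cons_tail_support, List.nodup_cons] at hpn
  rw [← q.cons_tail_support, List.nodup_cons] at hqn
  refine hpS x (List.mem_of_mem_tail hxp) ?_ ?_ (hqS x (List.mem_of_mem_tail hxq))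
  · rintro rfl
    exact hpn.1 hxp
  · rintro rfl
    exact hqn.1 hxq

/-- Each of the vertices opposite to `u` on an odd cycle is joined to `u` by arcs of both lengths
`m` and `m + 1`. -/
lemma exists_arc {V : Type*} {G : SimpleGraph V} {u w : V} {m a : ℕ} {c : G.Walk u u}
    (hc : c.IsCycle) (hm : 1 ≤ m) (hlen : c.length = 2 * m + 1)
    (hw : w = c.getVert m ∨ w = c.getVert (m + 1)) (ha : a = m ∨ a = m + 1) :
    ∃ q : G.Walk w u, q.IsPath ∧ q.length = a ∧ ∀ x ∈ q.support, x ∈ c.support := by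
  obtain ⟨n, rfl, hn⟩ : ∃ n, w = c.getVert n ∧ (n = m ∨ n = m + 1) := by
    rcases hw with h | h
    exacts [⟨m, h, Or.inl rfl⟩, ⟨m + 1, h, Or.inr rfl⟩]
  by_cases han : a = n
  · refine ⟨(c.take n).reverse, (hc.isPath_take (by omega)).reverse, ?_, fun x hx => ?_⟩
    · rw [Walk.length_reverse, Walk.take_length]
      omega
    · rw [Walk.support_reverse, List.mem_reverse] at hx
      exact (c.isSubwalk_take n).support_subset hx
  · refine ⟨c.drop n, hc.isPath_drop (by omega), ?_, fun x hx => ?_⟩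
    · rw [Walk.drop_length]
      omega
    · exact (c.isSubwalk_drop n).support_subset hx

/-- Let `k = 2l` be even, `c` an oriented odd cycle of length `2m + 1` through `u`,
with `u^{+m} = c.getVert m` and `u^{−m} = c.getVert (m + 1)`. If `G` contains `l`
`(u, {u^{+m}, u^{−m}})`-paths internally disjoint from `V(C)` satisfying the length
condition, then `G` contains `k` cycles having consecutive lengths. -/
theorem consecutive_cycles_of_even_k {V : Type*} [Fintype V] (k l m : ℕ)
    (hk : 0 < k) (hl : 0 < l) (hkl : k = 2 * l) (heven : Even k)
    (G : SimpleGraph V) (u : V) (c : G.Walk u u) (hc : c.IsCycle)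
    (hm : 1 ≤ m) (hlen : c.length = 2 * m + 1)
    (hpaths : ∃ (w : ℕ → V) (p : ∀ i : ℕ, G.Walk u (w i)),
      (∀ i, 1 ≤ i → i ≤ l →
        (p i).IsPath ∧
        (w i = c.getVert m ∨ w i = c.getVert (m + 1)) ∧
        (∀ v ∈ (p i).support, v ≠ u → v ≠ w i → v ∉ c.support)) ∧
      LengthSeq l (fun i => (p i).length)) :
    ∃ (v : ℕ → V) (d : ∀ i : ℕ, G.Walk (v i) (v i)),
      (∀ i, 1 ≤ i → i ≤ k → (d i).IsCycle) ∧
      ConsecSeq k (fun i => (d i).length) := by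
  obtain ⟨w, p, hp, hp1, hstep⟩ := hpaths
  have hlenp : ∀ i, i + 1 ≤ l → (p (i + 1)).length = (p 1).length + 2 * i := by
    intro i
    induction i with
    | zero => intro _; rfl
    | succ i ih =>
      intro h
      have h1 := ih (by omega)
      have h2 := hstep (i + 1) (by omega) (by omega)
      simp only at h2
      omega
  -- The `j`-th cycle uses path number `(j + 1) / 2`, and the short arc exactly when `j` is odd.
  have key : ∀ j, ∃ (v : V) (d : G.Walk v v), 1 ≤ j → j ≤ k →
      d.IsCycle ∧ d.length = (p 1).length + m + (j - 1) := by
    intro j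
    by_cases hj : 1 ≤ j ∧ j ≤ k
    · obtain ⟨i, a, hi, ha, hij⟩ : ∃ i a, i + 1 ≤ l ∧ (a = m ∨ a = m + 1) ∧
          2 * i + a = m + (j - 1) := by
        exact ⟨(j - 1) / 2, m + (j - 1) % 2, by omega, by omega, by omega⟩
      obtain ⟨hpath, hw, hdisj⟩ := hp (i + 1) (by omega) hi
      obtain ⟨q, hq, hql, hqs⟩ := exists_arc hc hm hlen hw ha
      have hl' := hlenp i hi
      simp only at hp1
      refine ⟨u, (p (i + 1)).append q, fun _ _ =>
        ⟨exists_cycle_of_path_of_arc hpath hq (by omega) hqs hdisj, ?_⟩⟩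
      rw [Walk.length_append]
      omega
    · exact ⟨u, Walk.nil, fun h1 h2 => absurd ⟨h1, h2⟩ hj⟩
  choose v d hd using key
  refine ⟨v, d, fun i h1 h2 => (hd i h1 h2).1, ?_, fun i h1 h2 => ?_⟩
  · have h := (hd 1 le_rfl (by omega)).2
    simp only at hp1 ⊢
    omega
  · have h := (hd i h1 (by omega)).2
    have h' := (hd (i + 1) (by omega) (by omega)).2
    simp only
    omega
end

section
/- For every odd positive integer k, every 2-connected (finite simple) graph of minimum degree at least k + 1 contains cycles of all even lengths modulo k; that is, for every even integer m there is a cycle in the graph whose length is congruent to m modulo k. -/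
/-!
The theorem follows from a rooted statement about paths. Let `x` and `y` be adjacent, let `W` be the
set of the other vertices, and let `X` and `Y` be the neighbourhoods of `x` and `y`. By `adm_of_good`
with `K = k - 1`, the subgraph induced on `W` contains `k` paths from `X` to `Y` whose lengths form an
arithmetic progression with difference `1` or `2` (`Adm`). Closing them up through `x` and `y` gives
`k` cycles whose lengths form such a progression. As `k` is odd, the difference is invertible modulo
`k`, and the cycle lengths cover all residues modulo `k`; for odd `k` the even integers do so as well.

In the rooted statement, `W`, `X`, `Y` are arbitrary sets satisfying the connectivity condition `Good`
and the degree condition `K + 2 ≤ dg G W v + ind X v + ind Y v`: each of the two roots `x` and `y`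
contributes at most one to the degree of `v`. The proof is by induction on `|W|`. Small cuts reduce to
smaller sets (`irred_of_not_adm`). Otherwise take a subgraph `H` containing families of paths that
start in `X` and end, with the same orders, at any prescribed vertex of a set `T`. Delete `H`, apply
induction to the rest with the neighbourhood of `T` as the new `X`, and concatenate. Two progressions
of index `ℓ` and `K - ℓ` with differences in `{1, 2}` contain such a progression of index `K` in their
sum (`progression_add`, `Fam.comp`), so it suffices that no vertex loses more than `ℓ` in the degree
condition. If part of the rest does not see `T`, a second family with index `δ` ending in another
set `A` is used there instead (`adm_engine`, `Irred.engine`, `Irred.engine_nb`).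

The subgraph `H` depends on `X`, or on `Y` after exchanging the two:
* if `X` contains an edge, a maximum clique in `X` (`Irred.adm_of_edge`);
* if `X` is independent and an edge has two common neighbours `a`, `b` in `X`, these two vertices and
  a maximum clique among their common neighbours (`Irred.adm_of_diamond`);
* otherwise a complete bipartite graph whose larger part lies in `X` and whose smaller part is as
  large as possible (`Irred.adm_of_bip`). If it is a star, the second family is too short, and the
  complement of the part that does not see `T` has to contribute one more path
  (`Irred.adm_of_star`). That uses the case `K = 1` with one vertex exempt from the degree condition
  (`adm_one_exceptional`), which also covers `K = 1` in the induction.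
-/

open SimpleGraph

namespace EvenCycles
open scoped Classical
noncomputable section

variable {V : Type*} {G : SimpleGraph V}

/-! ### Paths and neighbour-closed sets -/

/-- `Pth G W n u v`: the graph `G` has a path from `u` to `v` on exactly `n` vertices, all of them
in `W`.  Indexing by the number of vertices (instead of edges) makes concatenation additive. -/
inductive Pth (G : SimpleGraph V) : Finset V → ℕ → V → V → Prop
  | single {W : Finset V} {u : V} : u ∈ W → Pth G W 1 u u
  | cons {W : Finset V} {n : ℕ} {u w v : V} :
      u ∈ W → G.Adj u w → Pth G (W.erase u) n w v → Pth G W (n + 1) u v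

lemma Pth.mono {W W' : Finset V} {n : ℕ} {u v : V} (h : Pth G W n u v) (hW : W ⊆ W') :
    Pth G W' n u v := by
  induction h generalizing W' with
  | single hu => exact .single (hW hu)
  | cons hu ha _ ih => exact .cons (hW hu) ha (ih (Finset.erase_subset_erase _ hW))

lemma Pth.left_mem {W : Finset V} {n : ℕ} {u v : V} (h : Pth G W n u v) : u ∈ W := by
  cases h <;> assumption

lemma Pth.append {W₁ W₂ : Finset V} {n m : ℕ} {u v u' v' : V} (h : Pth G W₁ n u v)
    (ha : G.Adj v u') (hd : Disjoint W₁ W₂) (h' : Pth G W₂ m u' v') :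
    Pth G (W₁ ∪ W₂) (n + m) u v' := by
  induction h with
  | single hu =>
    rw [add_comm]
    refine .cons (by simp [hu]) ha (h'.mono ?_)
    intro x hx
    have := Finset.disjoint_left.1 hd hu
    grind
  | @cons W n u w v hu ha' _ ih =>
    rw [add_right_comm]
    refine .cons (by simp [hu]) ha' ((ih ha ?_).mono ?_)
    · exact hd.mono_left (Finset.erase_subset _ _)
    · intro x hx
      have := Finset.disjoint_left.1 hd hu
      grind

lemma Pth.right_mem {W : Finset V} {n : ℕ} {u v : V} (h : Pth G W n u v) : v ∈ W := by
  induction h with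
  | single hu => exact hu
  | cons _ _ _ ih => exact Finset.mem_of_mem_erase ih

lemma Pth.symm {W : Finset V} {n : ℕ} {u v : V} (h : Pth G W n u v) : Pth G W n v u := by
  induction h with
  | single hu => exact .single hu
  | @cons W n u w v hu ha _ ih =>
    refine (ih.append ha.symm (W₂ := {u}) (by simp) (.single (by simp))).mono ?_
    intro x hx
    grind

lemma Pth.extend {W : Finset V} {n : ℕ} {u v w : V} (h : Pth G W n u v) (hw : w ∈ W)
    (ha : G.Adj v w) : ∃ m, Pth G W m u w := by
  induction h with
  | @single W u hu =>
    exact ⟨_, .cons hu ha (.single (Finset.mem_erase.2 ⟨ha.ne', hw⟩))⟩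
  | @cons W n u x v hu hx _ ih =>
    by_cases hwu : w = u
    · subst hwu; exact ⟨1, .single hu⟩
    · obtain ⟨m, hm⟩ := ih (Finset.mem_erase.2 ⟨hwu, hw⟩) ha
      exact ⟨m + 1, .cons hu hx hm⟩

lemma Pth.toWalk {W : Finset V} {n : ℕ} {u v : V} (h : Pth G W n u v) :
    ∃ p : G.Walk u v, p.IsPath ∧ p.length + 1 = n ∧ ∀ x ∈ p.support, x ∈ W := by
  induction h with
  | single hu => exact ⟨.nil, by simp, by simp, by simpa⟩
  | @cons W n u w v hu ha _ ih =>
    obtain ⟨p, hp, hl, hs⟩ := ih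
    refine ⟨.cons ha p, ?_, by simp [hl], ?_⟩
    · rw [Walk.cons_isPath_iff]
      exact ⟨hp, fun hc => by simpa using hs _ hc⟩
    · intro x hx
      rw [Walk.support_cons, List.mem_cons] at hx
      rcases hx with rfl | hx
      · exact hu
      · exact Finset.mem_of_mem_erase (hs x hx)

/-- `D` is closed under taking neighbours inside `U`. -/
def Cl (G : SimpleGraph V) (D U : Finset V) : Prop :=
  ∀ u ∈ D, ∀ v ∈ U, G.Adj u v → v ∈ D

/-- A vertex `v` is joined to `Y` inside `W` as soon as every neighbour-closed subset of `W`
containing `v` meets `Y`. -/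
lemma exists_pth {W Y : Finset V} {v : V} (hv : v ∈ W)
    (h : ∀ D ⊆ W, v ∈ D → Cl G D W → ∃ y ∈ D, y ∈ Y) : ∃ m, ∃ y ∈ Y, Pth G W m v y := by
  obtain ⟨y, hy, hyY⟩ := h (W.filter fun w => ∃ m, Pth G W m v w) (Finset.filter_subset _ _)
    (by simp only [Finset.mem_filter]; exact ⟨hv, 1, .single hv⟩)
    (by
      intro u hu w hw ha
      simp only [Finset.mem_filter] at hu ⊢
      obtain ⟨_, m, hm⟩ := hu
      exact ⟨hw, hm.extend hw ha⟩)
  simp only [Finset.mem_filter] at hy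
  obtain ⟨_, m, hm⟩ := hy
  exact ⟨m, y, hyY, hm⟩

/-- The union of the components of `G[U]` that meet `Z`, described as the intersection of all
neighbour-closed subsets of `U` containing `Z ∩ U`. -/
def Reach (G : SimpleGraph V) (U Z : Finset V) : Finset V :=
  U.filter fun v => ∀ E ⊆ U, Cl G E U → Z ∩ U ⊆ E → v ∈ E

lemma reach_subset {U Z : Finset V} : Reach G U Z ⊆ U := Finset.filter_subset _ _

lemma reach_closed {U Z : Finset V} : Cl G (Reach G U Z) U := by
  intro u hu v hv ha
  simp only [Reach, Finset.mem_filter] at hu ⊢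
  exact ⟨hv, fun E hE hc hz => hc u (hu.2 E hE hc hz) v hv ha⟩

lemma mem_reach {U Z : Finset V} {v : V} (hU : v ∈ U) (hZ : v ∈ Z) : v ∈ Reach G U Z := by
  simp only [Reach, Finset.mem_filter]
  exact ⟨hU, fun E _ _ hz => hz (by simp [hU, hZ])⟩

/-- Every part of `Reach G U Z` meets `Z`; otherwise its complement would be a smaller closed set
containing `Z ∩ U`. -/
lemma reach_hits {U Z D : Finset V} (hD : D ⊆ Reach G U Z) (hne : D.Nonempty)
    (hc : Cl G D (Reach G U Z)) : ∃ z ∈ D, z ∈ Z := by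
  by_contra hcon
  push Not at hcon
  obtain ⟨d, hd⟩ := hne
  have hdR := hD hd
  have hdR' := hdR
  simp only [Reach, Finset.mem_filter] at hdR'
  have := hdR'.2 (Reach G U Z \ D) (Finset.sdiff_subset.trans reach_subset)
    (by
      intro u hu v hv ha
      rw [Finset.mem_sdiff] at hu ⊢
      have hvR := reach_closed u hu.1 v hv ha
      exact ⟨hvR, fun hvD => hu.2 (hc v hvD u hu.1 ha.symm)⟩)
    (by
      intro z hz
      rw [Finset.mem_inter] at hz
      exact Finset.mem_sdiff.2 ⟨mem_reach hz.2 hz.1, fun h => hcon z h hz.1⟩)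
  simp [hd] at this

/-! ### Families of paths -/

/-- A family of `K + 1` paths from `X` to `Y` inside `W` whose orders form an arithmetic progression
with difference `1` or `2`. -/
def Adm (G : SimpleGraph V) (W X Y : Finset V) (K : ℕ) : Prop :=
  ∃ m d : ℕ, (d = 1 ∨ d = 2) ∧ ∀ i ≤ K, ∃ u ∈ X, ∃ v ∈ Y, Pth G W (m + d * i) u v

/-- A family of paths as in `Adm`, available with the same orders for every endpoint `a ∈ A`. -/
def Fam (G : SimpleGraph V) (W X A : Finset V) (K : ℕ) : Prop :=
  ∃ m d : ℕ, (d = 1 ∨ d = 2) ∧ ∀ a ∈ A, ∀ i ≤ K, ∃ u ∈ X, Pth G W (m + d * i) u a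

lemma Adm.symm {W X Y : Finset V} {K : ℕ} (h : Adm G W X Y K) : Adm G W Y X K := by
  obtain ⟨m, d, hd, h⟩ := h
  refine ⟨m, d, hd, fun i hi => ?_⟩
  obtain ⟨u, hu, v, hv, hp⟩ := h i hi
  exact ⟨v, hv, u, hu, hp.symm⟩

lemma Adm.mono {W W' X Y : Finset V} {K K' : ℕ} (h : Adm G W X Y K) (hW : W ⊆ W') (hK : K' ≤ K) :
    Adm G W' X Y K' := by
  obtain ⟨m, d, hd, h⟩ := h
  refine ⟨m, d, hd, fun i hi => ?_⟩
  obtain ⟨u, hu, v, hv, hp⟩ := h i (hi.trans hK)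
  exact ⟨u, hu, v, hv, hp.mono hW⟩

lemma Fam.mono {W W' X A A' : Finset V} {K K' : ℕ} (h : Fam G W X A K) (hW : W ⊆ W')
    (hA : A' ⊆ A) (hK : K' ≤ K) : Fam G W' X A' K' := by
  obtain ⟨m, d, hd, h⟩ := h
  refine ⟨m, d, hd, fun a ha i hi => ?_⟩
  obtain ⟨u, hu, hp⟩ := h a (hA ha) i (hi.trans hK)
  exact ⟨u, hu, hp.mono hW⟩

/-- The sum of two progressions of index `p` and `q` with differences in `{1, 2}` contains such a
progression of index `p + q`. -/
lemma progression_add {d d' : ℕ} (hd : d = 1 ∨ d = 2) (hd' : d' = 1 ∨ d' = 2) (p q : ℕ) :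
    ∃ e : ℕ, (e = 1 ∨ e = 2) ∧ ∀ r ≤ p + q, ∃ i ≤ p, ∃ j ≤ q, d * i + d' * j = e * r := by
  have mixed : ∀ p q : ℕ, ∃ e : ℕ, (e = 1 ∨ e = 2) ∧ ∀ r ≤ p + q, ∃ i ≤ p, ∃ j ≤ q,
      1 * i + 2 * j = e * r := by
    intro p q
    rcases Nat.eq_zero_or_pos p with rfl | hp
    · exact ⟨2, .inr rfl, fun r hr => ⟨0, le_rfl, r, by omega, by omega⟩⟩
    · exact ⟨1, .inl rfl, fun r hr =>
        ⟨r - 2 * min q (r / 2), by omega, min q (r / 2), by omega, by omega⟩⟩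
  have same : ∀ d : ℕ, ∀ r ≤ p + q, ∃ i ≤ p, ∃ j ≤ q, d * i + d * j = d * r := fun d r hr =>
    ⟨min r p, by omega, r - min r p, by omega, by rw [← mul_add]; congr 1; omega⟩
  rcases hd with rfl | rfl <;> rcases hd' with rfl | rfl
  · exact ⟨1, .inl rfl, same 1⟩
  · exact mixed p q
  · obtain ⟨e, he, h⟩ := mixed q p
    refine ⟨e, he, fun r hr => ?_⟩
    obtain ⟨i, hi, j, hj, h⟩ := h r (by omega)
    exact ⟨j, hj, i, hi, by omega⟩
  · exact ⟨2, .inr rfl, same 2⟩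

set_option linter.unusedSectionVars false

variable [Fintype V]

/-- The set of vertices with a neighbour in `T`. -/
def nb (G : SimpleGraph V) (T : Finset V) : Finset V :=
  Finset.univ.filter fun v => ∃ t ∈ T, G.Adj v t

lemma mem_nb {T : Finset V} {v : V} : v ∈ nb G T ↔ ∃ t ∈ T, G.Adj v t := by simp [nb]

/-- Paths from `X` to `T` inside `H`, followed by paths from neighbours of `T` to `Y` in a disjoint
set `C`: the indices add up.  This is where it matters that `Fam` offers the same orders at every end
in `T`, since the second path dictates the end of the first. -/
lemma Fam.comp {H C X Y T : Finset V} {p q : ℕ} (h : Fam G H X T p) (h' : Adm G C (nb G T) Y q)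
    (hd : Disjoint H C) : Adm G (H ∪ C) X Y (p + q) := by
  obtain ⟨m, d, hd1, h⟩ := h
  obtain ⟨m', d', hd2, h'⟩ := h'
  obtain ⟨e, he, hr⟩ := progression_add hd1 hd2 p q
  refine ⟨m + m', e, he, fun r hr' => ?_⟩
  obtain ⟨i, hi, j, hj, hij⟩ := hr r hr'
  obtain ⟨s, hs, y, hy, hp⟩ := h' j hj
  obtain ⟨t, ht, hst⟩ := mem_nb.1 hs
  obtain ⟨u, hu, hp'⟩ := h t ht i hi
  refine ⟨u, hu, y, hy, ?_⟩
  have := hp'.append hst.symm hd hp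
  rwa [show m + m' + e * r = m + d * i + (m' + d' * j) by omega]

/-! ### Good triples -/

/-- The number of neighbours of `v` in `W`. -/
def dg (G : SimpleGraph V) (W : Finset V) (v : V) : ℕ := (W.filter (G.Adj v)).card

/-- The indicator of `v ∈ X`. -/
def ind (X : Finset V) (v : V) : ℕ := if v ∈ X then 1 else 0

lemma ind_of_mem {X : Finset V} {v : V} (h : v ∈ X) : ind X v = 1 := by simp [ind, h]
lemma ind_of_not_mem {X : Finset V} {v : V} (h : v ∉ X) : ind X v = 0 := by simp [ind, h]
lemma ind_le_one {X : Finset V} {v : V} : ind X v ≤ 1 := by unfold ind; split <;> omega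

/-- The set `W` is nonempty, every component of `G[W]` meets both `X` and `Y`, and after deleting any one vertex every
component still meets `X ∪ Y`.  This says that `G[W]` becomes 2-connected once two adjacent vertices,
one complete to `X` and one complete to `Y`, are added. -/
structure Good (G : SimpleGraph V) (W X Y : Finset V) : Prop where
  ne : W.Nonempty
  hitX : ∀ D ⊆ W, D.Nonempty → Cl G D W → ∃ x ∈ D, x ∈ X
  hitY : ∀ D ⊆ W, D.Nonempty → Cl G D W → ∃ y ∈ D, y ∈ Y
  hit : ∀ w ∈ W, ∀ D ⊆ W.erase w, D.Nonempty → Cl G D (W.erase w) → ∃ x ∈ D, x ∈ X ∨ x ∈ Y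

lemma Good.symm {W X Y : Finset V} (h : Good G W X Y) : Good G W Y X :=
  ⟨h.ne, h.hitY, h.hitX, fun w hw D hD hne hc => by
    obtain ⟨x, hx, hxx⟩ := h.hit w hw D hD hne hc; exact ⟨x, hx, hxx.symm⟩⟩

lemma dg_mono {W W' : Finset V} {v : V} (h : W ⊆ W') : dg G W v ≤ dg G W' v :=
  Finset.card_le_card (Finset.filter_subset_filter _ h)

lemma dg_le_add {W A B : Finset V} {v : V} (h : W ⊆ A ∪ B) : dg G W v ≤ dg G A v + dg G B v := by
  refine (dg_mono h).trans ?_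
  unfold dg
  rw [Finset.filter_union]
  exact Finset.card_union_le _ _

lemma dg_le_card {S : Finset V} {v : V} : dg G S v ≤ S.card := Finset.card_filter_le _ _

lemma dg_pos {S : Finset V} {v : V} (h : 1 ≤ dg G S v) : v ∈ nb G S := by
  obtain ⟨x, hx⟩ := Finset.card_pos.1 h
  rw [Finset.mem_filter] at hx
  exact mem_nb.2 ⟨x, hx⟩

lemma dg_eq_zero {S : Finset V} {v : V} (h : v ∉ nb G S) : dg G S v = 0 := by
  by_contra hc
  exact h (dg_pos (Nat.one_le_iff_ne_zero.2 hc))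

lemma dg_singleton {c v : V} : dg G {c} v = ind (nb G {c}) v := by
  by_cases h : v ∈ nb G {c}
  · rw [ind_of_mem h]
    obtain ⟨t, ht, ha⟩ := mem_nb.1 h
    rw [Finset.mem_singleton] at ht
    subst ht
    simp [dg, Finset.filter_singleton, ha]
  · rw [ind_of_not_mem h, dg_eq_zero h]

lemma dg_self {v : V} : dg G {v} v = 0 := dg_eq_zero (by simp [mem_nb])

lemma dg_closed {D U S W : Finset V} {v : V} (hc : Cl G D U) (hv : v ∈ D) (hW : W ⊆ U ∪ S) :
    dg G W v ≤ dg G D v + dg G S v := by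
  refine (dg_le_add hW).trans (Nat.add_le_add_right (Finset.card_le_card ?_) _)
  intro x hx
  rw [Finset.mem_filter] at hx ⊢
  exact ⟨hc v hv x hx.1 hx.2, hx.2⟩

lemma mem_nb_one {c v : V} : v ∈ nb G {c} ↔ G.Adj v c := by simp [mem_nb]

/-! ### Passing to a part of a good triple -/

lemma Good.closed {W X Y D : Finset V} (h : Good G W X Y) (hD : D ⊆ W) (hne : D.Nonempty)
    (hc : Cl G D W) : Good G D X Y := by
  have key : ∀ E ⊆ D, Cl G E D → Cl G E W := fun E hE hcE u hu v hv ha =>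
    hcE u hu v (hc u (hE hu) v hv ha) ha
  refine ⟨hne, fun E hE hn hcE => h.hitX E (hE.trans hD) hn (key E hE hcE),
    fun E hE hn hcE => h.hitY E (hE.trans hD) hn (key E hE hcE), fun w hw E hE hn hcE => ?_⟩
  refine h.hit w (hD hw) E (hE.trans (Finset.erase_subset_erase _ hD)) hn ?_
  intro u hu v hv ha
  rw [Finset.mem_erase] at hv
  have := Finset.mem_of_mem_erase (hE hu)
  exact hcE u hu v (Finset.mem_erase.2 ⟨hv.1, hc u this v hv.2 ha⟩) ha

/-- If deleting `c` cuts off a part `D` of a good triple that misses `Y`, then `D` is good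
towards the neighbours of `c`. -/
lemma Good.cut {W X Y D : Finset V} {c : V} (h : Good G W X Y) (hcW : c ∈ W)
    (hD : D ⊆ W.erase c) (hne : D.Nonempty) (hc : Cl G D (W.erase c)) (hY : ∀ d ∈ D, d ∉ Y) :
    Good G D X (nb G {c}) := by
  have hDW : D ⊆ W := hD.trans (Finset.erase_subset _ _)
  refine ⟨hne, ?_, ?_, ?_⟩
  · intro E hE hn hcE
    obtain ⟨x, hx, hxx⟩ := h.hit c hcW E (hE.trans hD) hn
      (fun u hu v hv ha => hcE u hu v (hc u (hE hu) v hv ha) ha)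
    exact ⟨x, hx, hxx.resolve_right (hY x (hE hx))⟩
  · intro E hE hn hcE
    by_contra hcon
    push Not at hcon
    obtain ⟨y, hy, hyy⟩ := h.hitY E (hE.trans hDW) hn (by
      intro u hu v hv ha
      by_cases hvc : v = c
      · subst hvc; exact absurd (mem_nb_one.2 ha) (hcon u hu)
      · exact hcE u hu v (hc u (hE hu) v (Finset.mem_erase.2 ⟨hvc, hv⟩) ha) ha)
    exact hY y (hE hy) hyy
  · intro w hw E hE hn hcE
    by_contra hcon
    push Not at hcon
    obtain ⟨y, hy, hyy⟩ := h.hit w (hDW hw) E (hE.trans (Finset.erase_subset_erase _ hDW)) hn (by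
      intro u hu v hv ha
      rw [Finset.mem_erase] at hv
      have huD := Finset.mem_of_mem_erase (hE hu)
      by_cases hvc : v = c
      · subst hvc; exact absurd (mem_nb_one.2 ha) (hcon u hu).2
      · exact hcE u hu v
          (Finset.mem_erase.2 ⟨hv.1, hc u huD v (Finset.mem_erase.2 ⟨hvc, hv.2⟩) ha⟩) ha)
    rcases hyy with hyy | hyy
    · exact (hcon y hy).1 hyy
    · exact hY y (Finset.mem_of_mem_erase (hE hy)) hyy

lemma dg_cut {W D : Finset V} {c v : V} (hv : v ∈ D) (hc : Cl G D (W.erase c)) :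
    dg G W v ≤ dg G D v + ind (nb G {c}) v := by
  rw [← dg_singleton]
  exact dg_closed hc hv (fun x hx => by by_cases h : x = c <;> simp [h, hx])

/-- If deleting `c` cuts off a part `D` that misses `Y`, then a family from `X` to the neighbours of
`c` inside `D` continues, through `c` and along one fixed path from `c` to `Y` outside `D`, to a
family from `X` to `Y` with the same index. -/
lemma Adm.of_cut {W X Y D : Finset V} {c : V} {K : ℕ}
    (hhit : ∀ D ⊆ W, D.Nonempty → Cl G D W → ∃ y ∈ D, y ∈ Y) (hcW : c ∈ W)
    (hD : D ⊆ W.erase c) (hc : Cl G D (W.erase c)) (hY : ∀ d ∈ D, d ∉ Y)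
    (hA : Adm G D X (nb G {c}) K) : Adm G W X Y K := by
  have hDW : D ⊆ W := hD.trans (Finset.erase_subset _ _)
  have hcD : c ∉ D := fun h => by simpa using hD h
  obtain ⟨m, y, hy, hp⟩ := exists_pth (G := G) (W := W \ D) (Y := Y) (v := c)
    (by simp [hcW, hcD]) (by
      intro E hE hcE hcl
      obtain ⟨y, hy, hyy⟩ := hhit (E ∪ D) (Finset.union_subset (hE.trans Finset.sdiff_subset) hDW)
        ⟨c, by simp [hcE]⟩ (by
          intro u hu v hv ha
          rw [Finset.mem_union] at hu ⊢
          by_cases hvD : v ∈ D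
          · exact .inr hvD
          left
          rcases hu with hu | hu
          · exact hcl u hu v (by simp [hv, hvD]) ha
          · by_cases hvc : v = c
            · exact hvc ▸ hcE
            · exact absurd (hc u hu v (by simp [hv, hvc]) ha) hvD)
      rw [Finset.mem_union] at hy
      exact ⟨y, hy.resolve_right fun h => hY y h hyy, hyy⟩)
  have hF : Fam G (W \ D) Y {c} 0 := ⟨m, 1, .inl rfl, fun a ha i hi => by
    rw [Finset.mem_singleton] at ha
    subst ha
    obtain rfl : i = 0 := by omega
    exact ⟨y, hy, hp.symm⟩⟩
  have := (hF.comp hA.symm Finset.sdiff_disjoint).symm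
  exact this.mono (Finset.union_subset Finset.sdiff_subset hDW) (by omega)

lemma Good.adm_zero {W X Y : Finset V} (h : Good G W X Y) : Adm G W X Y 0 := by
  obtain ⟨x, hx, hxX⟩ := h.hitX W subset_rfl h.ne (fun _ _ v hv _ => hv)
  obtain ⟨m, y, hy, hp⟩ := exists_pth hx (fun D hD hxD hc => h.hitY D hD ⟨x, hxD⟩ hc)
  refine ⟨m, 1, .inl rfl, fun i hi => ⟨x, hxX, y, hy, ?_⟩⟩
  obtain rfl : i = 0 := by omega
  exact hp

lemma adm_one {W X Y : Finset V} {m d : ℕ} {u v u' v' : V} (hd : d = 1 ∨ d = 2)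
    (h : Pth G W m u v) (hu : u ∈ X) (hv : v ∈ Y) (h' : Pth G W (m + d) u' v') (hu' : u' ∈ X)
    (hv' : v' ∈ Y) : Adm G W X Y 1 := by
  refine ⟨m, d, hd, fun i hi => ?_⟩
  obtain rfl | rfl : i = 0 ∨ i = 1 := by omega
  · exact ⟨u, hu, v, hv, h⟩
  · exact ⟨u', hu', v', hv', by simpa using h'⟩

lemma Pth.pair {W : Finset V} {u v : V} (hu : u ∈ W) (hv : v ∈ W) (ha : G.Adj u v) :
    Pth G W 2 u v := .cons hu ha (.single (Finset.mem_erase.2 ⟨ha.ne', hv⟩))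

lemma fam_self {S X : Finset V} (h : S ⊆ X) : Fam G S X S 0 :=
  ⟨1, 1, .inl rfl, fun a ha i hi => by
    obtain rfl : i = 0 := by omega
    exact ⟨a, h ha, .single ha⟩⟩

lemma exists_of_two_le_dg {S : Finset V} {v : V} (h : 2 ≤ dg G S v) :
    ∃ a ∈ S, ∃ b ∈ S, a ≠ b ∧ G.Adj v a ∧ G.Adj v b := by
  obtain ⟨a, ha, b, hb, hab⟩ := Finset.one_lt_card.1 (show 1 < (S.filter (G.Adj v)).card from h)
  rw [Finset.mem_filter] at ha hb
  exact ⟨a, ha.1, b, hb.1, hab, ha.2, hb.2⟩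

lemma dg_le_ind {S : Finset V} {v : V} (h : dg G S v ≤ 1) : dg G S v ≤ ind (nb G S) v := by
  by_cases hv : v ∈ nb G S
  · rwa [ind_of_mem hv]
  · rw [dg_eq_zero hv]; omega

/-- In a connected set `W` all of whose cut vertices separate only parts meeting `Y`, deleting `S`
and keeping the components that meet `Y` leaves a good triple. -/
lemma good_reach {W Y S : Finset V} (hconn : ∀ D ⊆ W, D.Nonempty → Cl G D W → D = W)
    (hcut : ∀ c ∈ W, ∀ D ⊆ W.erase c, D.Nonempty → Cl G D (W.erase c) → ∃ y ∈ D, y ∈ Y)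
    (hS : ∃ s ∈ S, s ∈ W) (hne : (Reach G (W \ S) Y).Nonempty) :
    Good G (Reach G (W \ S) Y) (nb G S) Y := by
  have hRW : Reach G (W \ S) Y ⊆ W := reach_subset.trans Finset.sdiff_subset
  refine ⟨hne, ?_, fun D hD hn hc => reach_hits hD hn hc, ?_⟩
  · intro E hE hn hc
    by_contra hcon
    push Not at hcon
    have : E = W := by
      refine hconn E (hE.trans hRW) hn ?_
      intro u hu v hv ha
      by_cases hvS : v ∈ S
      · exact absurd (mem_nb.2 ⟨v, hvS, ha⟩) (hcon u hu)
      · exact hc u hu v (reach_closed u (hE hu) v (by simp [hv, hvS]) ha) ha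
    obtain ⟨s, hs, hsW⟩ := hS
    have := reach_subset (hE (this ▸ hsW))
    simp [hs] at this
  · intro w hw E hE hn hc
    by_contra hcon
    push Not at hcon
    obtain ⟨y, hy, hyy⟩ := hcut w (hRW hw) E (hE.trans (Finset.erase_subset_erase _ hRW)) hn (by
      intro u hu v hv ha
      rw [Finset.mem_erase] at hv
      by_cases hvS : v ∈ S
      · exact absurd (mem_nb.2 ⟨v, hvS, ha⟩) (hcon u hu).1
      · exact hc u hu v (Finset.mem_erase.2 ⟨hv.1, reach_closed u (Finset.mem_of_mem_erase (hE hu))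
          v (by simp [hv, hvS]) ha⟩) ha)
    exact (hcon y hy).2 hyy

/-! ### Two admissible paths, allowing one vertex of small degree -/

/-- The case `K = 1` of the rooted theorem, with an exceptional vertex `e` that need not satisfy the
degree condition, for sets smaller than `W`. -/
def BelowOne (G : SimpleGraph V) (W : Finset V) : Prop :=
  ∀ (W' X Y : Finset V) (e : V), W'.card < W.card → Good G W' X Y →
    (∀ v ∈ W', v ≠ e → 3 ≤ dg G W' v + ind X v + ind Y v) → (∃ v ∈ W', v ≠ e) → Adm G W' X Y 1

/-- A part `D ≠ {e}` cut off from `Y` by a vertex `c` is handled by the induction hypothesis. -/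
lemma below_cut {W X Y D : Finset V} {c e : V} (ih : BelowOne G W) (h : Good G W X Y)
    (hdeg : ∀ v ∈ W, v ≠ e → 3 ≤ dg G W v + ind X v + ind Y v) (hcW : c ∈ W)
    (hD : D ⊆ W.erase c) (hne : D.Nonempty) (hc : Cl G D (W.erase c)) (hY : ∀ d ∈ D, d ∉ Y)
    (hDe : D ≠ {e}) : Adm G W X Y 1 := by
  have hDW : D ⊆ W := hD.trans (Finset.erase_subset _ _)
  refine Adm.of_cut h.hitY hcW hD hc hY (ih D X (nb G {c}) e ?_ (h.cut hcW hD hne hc hY) ?_ ?_)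
  · exact Finset.card_lt_card ((Finset.ssubset_iff_of_subset hDW).2
      ⟨c, hcW, fun h => by simpa using hD h⟩)
  · intro v hv hve
    have h1 := hdeg v (hDW hv) hve
    have h2 := dg_cut hv hc
    rw [ind_of_not_mem (hY v hv)] at h1
    omega
  · by_contra hcon
    push Not at hcon
    obtain ⟨d, hd⟩ := hne
    exact hDe (Finset.eq_singleton_iff_unique_mem.2 ⟨hcon d hd ▸ hd, hcon⟩)

/-- If the exceptional vertex `e` is pendant at `c`, it can be deleted, `c` becoming exceptional. -/
lemma below_pendant {W X Y : Finset V} {c e : V} (ih : BelowOne G W) (h : Good G W X Y)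
    (hdeg : ∀ v ∈ W, v ≠ e → 3 ≤ dg G W v + ind X v + ind Y v) (hcW : c ∈ W) (heW : e ∈ W)
    (hec : e ≠ c) (hc : Cl G {e} (W.erase c)) (heY : e ∉ Y) : Adm G W X Y 1 := by
  by_contra hno
  have hadj : ∀ v ∈ W, G.Adj e v → v = c := by
    intro v hv ha
    by_contra hvc
    have := hc e (by simp) v (by simp [hv, hvc]) ha
    rw [Finset.mem_singleton] at this
    exact ha.ne this.symm
  have hec' : G.Adj e c := by
    by_contra hcon
    obtain ⟨y, hy, hyy⟩ := h.hitY {e} (by simpa) (by simp) (by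
      intro u hu v hv ha
      rw [Finset.mem_singleton] at hu
      subst hu
      exact absurd (hadj v hv ha ▸ ha) hcon)
    rw [Finset.mem_singleton] at hy
    exact heY (hy ▸ hyy)
  have heX : e ∈ X := by
    obtain ⟨x, hx, hxx⟩ := h.hit c hcW {e} (by simp [heW, hec]) (by simp) hc
    rw [Finset.mem_singleton] at hx
    subst hx
    exact hxx.resolve_right heY
  have hdgW : ∀ v ∈ W, v ≠ c → dg G W v ≤ dg G (W.erase e) v := by
    intro v hv hvc
    have : dg G {e} v = 0 := dg_eq_zero fun hn => hvc (hadj v hv (mem_nb_one.1 hn).symm)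
    have h2 : dg G W v ≤ dg G (W.erase e) v + dg G {e} v :=
      dg_le_add (fun x hx => by by_cases h : x = e <;> simp [h, hx])
    omega
  by_cases hex : ∃ v ∈ W.erase e, v ≠ c
  · refine hno (Adm.mono (ih (W.erase e) X Y c (Finset.card_erase_lt_of_mem heW) ?_ ?_ hex)
      (Finset.erase_subset _ _) le_rfl)
    · obtain ⟨v₀, hv₀, -⟩ := hex
      refine ⟨⟨v₀, hv₀⟩, ?_, ?_, ?_⟩
      · intro E hE hn hcl
        by_contra hcon
        push Not at hcon
        by_cases hcE : c ∈ E
        · refine hno (below_cut ih h.symm (c := e) (e := e) ?_ heW hE hn hcl hcon ?_).symm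
          · intro v hv hve
            have := hdeg v hv hve
            omega
          · rintro rfl
            simp at hE
        · obtain ⟨x, hx, hxx⟩ := h.hitX E (hE.trans (Finset.erase_subset _ _)) hn (by
            intro u hu v hv ha
            by_cases hve : v = e
            · subst hve
              have := hadj u (Finset.mem_of_mem_erase (hE hu)) ha.symm
              exact absurd (this ▸ hu) hcE
            · exact hcl u hu v (by simp [hv, hve]) ha)
          exact hcon x hx hxx
      · intro E hE hn hcl
        have hEW : E ⊆ W := hE.trans (Finset.erase_subset _ _)
        by_cases hcE : c ∈ E
        · obtain ⟨y, hy, hyy⟩ := h.hitY (insert e E) (by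
              intro x hx; rcases Finset.mem_insert.1 hx with rfl | hx
              · exact heW
              · exact hEW hx) (by simp) (by
            intro u hu v hv ha
            rw [Finset.mem_insert] at hu ⊢
            by_cases hve : v = e
            · exact .inl hve
            right
            rcases hu with rfl | hu
            · exact hadj v hv ha ▸ hcE
            · exact hcl u hu v (by simp [hv, hve]) ha)
          rcases Finset.mem_insert.1 hy with rfl | hy
          · exact absurd hyy heY
          · exact ⟨y, hy, hyy⟩
        · exact h.hitY E hEW hn (by
            intro u hu v hv ha
            by_cases hve : v = e
            · subst hve
              have := hadj u (hEW hu) ha.symm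
              exact absurd (this ▸ hu) hcE
            · exact hcl u hu v (by simp [hv, hve]) ha)
      · intro w hw E hE hn hcl
        rw [Finset.mem_erase] at hw
        by_contra hcon
        push Not at hcon
        have hEW : E ⊆ W.erase w := fun x hx => by
          have := hE hx
          simp only [Finset.mem_erase] at this ⊢
          tauto
        by_cases hcE : c ∈ E
        · refine hno (below_cut (D := insert e E) ih h hdeg hw.2 ?_ (by simp) ?_ ?_ ?_)
          · intro x hx
            rcases Finset.mem_insert.1 hx with rfl | hx
            · simp [heW, Ne.symm hw.1]
            · exact hEW hx
          · intro u hu v hv ha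
            rw [Finset.mem_erase] at hv
            rw [Finset.mem_insert] at hu ⊢
            by_cases hve : v = e
            · exact .inl hve
            right
            rcases hu with rfl | hu
            · exact hadj v hv.2 ha ▸ hcE
            · exact hcl u hu v (by simp [hv, hve]) ha
          · intro d hd
            rcases Finset.mem_insert.1 hd with rfl | hd
            · exact heY
            · exact (hcon d hd).2
          · intro heq
            have : c ∈ insert e E := by simp [hcE]
            rw [heq, Finset.mem_singleton] at this
            exact hec this.symm
        · obtain ⟨x, hx, hxx⟩ := h.hit w hw.2 E hEW hn (by
            intro u hu v hv ha
            rw [Finset.mem_erase] at hv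
            by_cases hve : v = e
            · subst hve
              have := hadj u (Finset.mem_of_mem_erase (hEW hu)) ha.symm
              exact absurd (this ▸ hu) hcE
            · exact hcl u hu v (by simp [hv, hve]) ha)
          rcases hxx with hxx | hxx
          · exact (hcon x hx).1 hxx
          · exact (hcon x hx).2 hxx
    · intro v hv hvc
      have h1 := Finset.mem_erase.1 hv
      have := hdeg v h1.2 h1.1
      have := hdgW v h1.2 hvc
      omega
  · push Not at hex
    have hall : ∀ v ∈ W, v ≠ e → v = c := fun v hv hve => hex v (by simp [hv, hve])
    have hcY : c ∈ Y := by
      obtain ⟨y, hy, hyy⟩ := h.hitY W subset_rfl h.ne (fun _ _ v hv _ => hv)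
      by_cases hye : y = e
      · exact absurd (hye ▸ hyy) heY
      · exact hall y hy hye ▸ hyy
    have hcX : c ∈ X := by
      by_contra hcX
      have h1 := hdeg c hcW hec.symm
      have h2 : dg G W c ≤ dg G {e} c + dg G {c} c := dg_le_add (fun x hx => by
        by_cases hxe : x = e
        · simp [hxe]
        · simp [hall x hx hxe])
      have h3 : dg G {e} c ≤ 1 := dg_le_card
      rw [dg_self] at h2
      rw [ind_of_not_mem hcX] at h1
      have := ind_le_one (X := Y) (v := c)
      omega
    exact hno (adm_one (.inl rfl) (.single hcW) hcX hcY (Pth.pair heW hcW hec') heX hcY)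

/-- The core of `adm_one_exceptional`, after all reductions along small cuts. -/
lemma below_core {W X Y : Finset V} {e : V} (ih : BelowOne G W) (h : Good G W X Y)
    (hdeg : ∀ v ∈ W, v ≠ e → 3 ≤ dg G W v + ind X v + ind Y v) (hex : ∃ v ∈ W, v ≠ e)
    (hconn : ∀ D ⊆ W, D.Nonempty → Cl G D W → D = W)
    (hRx : ∀ c ∈ W, ∀ D ⊆ W.erase c, D.Nonempty → Cl G D (W.erase c) → ∃ y ∈ D, y ∈ Y)
    (hcard : (X ∩ W).card ≤ (Y ∩ W).card) : Adm G W X Y 1 := by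
  by_contra hno
  -- No vertex has two neighbours in `X`.
  have hC4 : ∀ z ∈ W, dg G (X ∩ W) z ≤ 1 := by
    intro z hz
    by_contra hcon
    obtain ⟨a, ha, b, hb, hab, hza, hzb⟩ := exists_of_two_le_dg (show 2 ≤ dg G (X ∩ W) z by omega)
    rw [Finset.mem_inter] at ha hb
    have p3 : ∀ a b : V, G.Adj z a → G.Adj z b → a ≠ b →
        ∀ S : Finset V, a ∈ S → b ∈ S → z ∈ S → Pth G S (1 + 2) b a := by
      intro a b hza hzb hab S haS hbS hzS
      exact .cons hbS hzb.symm (.cons (by simp [hzS, hzb.ne]) hza (.single (by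
        simp [haS, hza.ne', hab])))
    have haY : a ∉ Y := fun haY => hno (adm_one (.inr rfl) (.single ha.2) ha.1 haY
      (p3 a b hza hzb hab W ha.2 hb.2 hz) hb.1 haY)
    have hbY : b ∉ Y := fun hbY => hno (adm_one (.inr rfl) (.single hb.2) hb.1 hbY
      (p3 b a hzb hza hab.symm W hb.2 ha.2 hz) ha.1 hbY)
    set R := W \ {a, b, z} with hR
    have hCR : Reach G R Y ⊆ R := reach_subset
    have hCW : Reach G R Y ⊆ W := hCR.trans Finset.sdiff_subset
    by_cases htouch : ∃ c ∈ Reach G R Y, c ∈ nb G {a, b}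
    · obtain ⟨c, hc, hcn⟩ := htouch
      obtain ⟨m, y, hy, hp⟩ := exists_pth hc (Y := Y)
        (fun D hD hcD hcl => reach_hits hD ⟨c, hcD⟩ hcl)
      have hA : Adm G (Reach G R Y) (nb G {a, b}) Y 0 := ⟨m, 1, .inl rfl, fun i hi => by
        obtain rfl : i = 0 := by omega
        exact ⟨c, hcn, y, hy, hp⟩⟩
      have hF : Fam G {a, b, z} X {a, b} 1 := by
        refine ⟨1, 2, .inr rfl, fun t ht i hi => ?_⟩
        rw [Finset.mem_insert, Finset.mem_singleton] at ht
        obtain rfl | rfl : i = 0 ∨ i = 1 := by omega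
        · rcases ht with rfl | rfl
          · exact ⟨t, ha.1, .single (by simp)⟩
          · exact ⟨t, hb.1, .single (by simp)⟩
        · rcases ht with rfl | rfl
          · exact ⟨b, hb.1, p3 t b hza hzb hab _ (by simp) (by simp) (by simp)⟩
          · exact ⟨a, ha.1, p3 t a hzb hza hab.symm _ (by simp) (by simp) (by simp)⟩
      refine hno ((hF.comp hA ?_).mono ?_ le_rfl)
      · exact (Finset.disjoint_sdiff).mono_right hCR
      · refine Finset.union_subset ?_ hCW
        intro x hx
        simp only [Finset.mem_insert, Finset.mem_singleton] at hx
        rcases hx with rfl | rfl | rfl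
        exacts [ha.2, hb.2, hz]
    · push Not at htouch
      obtain ⟨y, hy, hyy⟩ := hRx z hz (W.erase z \ Reach G R Y) Finset.sdiff_subset
        ⟨a, by
          simp only [Finset.mem_sdiff, Finset.mem_erase]
          exact ⟨⟨hza.ne', ha.2⟩, fun hc => by simpa [hR] using hCR hc⟩⟩ (by
        intro u hu v hv ha'
        rw [Finset.mem_sdiff] at hu ⊢
        refine ⟨hv, fun hvC => ?_⟩
        by_cases hub : u = a ∨ u = b
        · exact htouch v hvC (mem_nb.2 ⟨u, by simpa using hub, ha'.symm⟩)
        · have hu1 := Finset.mem_erase.1 hu.1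
          refine hu.2 (reach_closed v hvC u ?_ ha'.symm)
          simp only [hR, Finset.mem_sdiff, Finset.mem_insert, Finset.mem_singleton]
          tauto)
      rw [Finset.mem_sdiff, Finset.mem_erase] at hy
      refine hy.2 (mem_reach ?_ hyy)
      simp only [hR, Finset.mem_sdiff, Finset.mem_insert, Finset.mem_singleton]
      refine ⟨hy.1.2, ?_⟩
      rintro (rfl | rfl | rfl)
      · exact haY hyy
      · exact hbY hyy
      · exact hy.1.1 rfl
  obtain ⟨x₀, hx₀W, hx₀⟩ := h.hitX W subset_rfl h.ne (fun _ _ v hv _ => hv)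
  have hSW : W \ (X ∩ W) ∪ X ∩ W = W := Finset.sdiff_union_of_subset Finset.inter_subset_right
  have hRX : ∀ v ∈ W \ (X ∩ W), v ∈ W ∧ v ∉ X := by
    intro v hv
    simp only [Finset.mem_sdiff, Finset.mem_inter] at hv
    tauto
  have hCR : Reach G (W \ (X ∩ W)) Y ⊆ W \ (X ∩ W) := reach_subset
  have hCW := hCR.trans Finset.sdiff_subset
  have hltW : ∀ C ⊆ W \ (X ∩ W), C.card < W.card := fun C hC => Finset.card_lt_card
    ((Finset.ssubset_iff_of_subset (hC.trans Finset.sdiff_subset)).2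
      ⟨x₀, hx₀W, fun hc => (hRX _ (hC hc)).2 hx₀⟩)
  rcases (Reach G (W \ (X ∩ W)) Y).eq_empty_or_nonempty with hC0 | hCne
  · -- Then `Y ⊆ X`, so that `X` and `Y` agree inside `W`.
    have hsub : Y ∩ W ⊆ X ∩ W := by
      intro y hy
      rw [Finset.mem_inter] at hy
      by_contra hyX
      exact absurd (mem_reach (G := G) (Finset.mem_sdiff.2 ⟨hy.2, hyX⟩) hy.1) (by rw [hC0]; simp)
    have hXY : Y ∩ W = X ∩ W := Finset.eq_of_subset_of_card_le hsub hcard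
    have hXY' : ∀ v ∈ W, (v ∈ X ↔ v ∈ Y) := by
      intro v hv
      have := congrArg (v ∈ ·) hXY
      simp only [Finset.mem_inter, hv, and_true] at this
      exact (iff_of_eq this).symm
    have hind : ∀ a ∈ W, a ∈ X → ∀ b ∈ W, b ∈ X → ¬ G.Adj a b := fun a ha haX b hb hbX hab =>
      hno (adm_one (.inl rfl) (.single ha) haX ((hXY' a ha).1 haX) (Pth.pair ha hb hab) haX
        ((hXY' b hb).1 hbX))
    obtain ⟨a₁, ha₁, ha₁e, ha₁X⟩ : ∃ a ∈ W, a ≠ e ∧ a ∈ X := by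
      by_contra hcon
      push Not at hcon
      have hXe : ∀ v ∈ W, v ∈ X → v = e := fun v hv hvX => by
        by_contra hne
        exact hcon v hv hne hvX
      obtain rfl := hXe x₀ hx₀W hx₀
      obtain ⟨v, hv, hve⟩ := hex
      obtain ⟨y, hy, hyy⟩ := hRx _ hx₀W (W.erase x₀) subset_rfl ⟨v, by simp [hv, hve]⟩
        (fun _ _ v hv _ => hv)
      rw [Finset.mem_erase] at hy
      exact hy.1 (hXe y hy.2 ((hXY' y hy.2).2 hyy))
    have hd1 := hdeg a₁ ha₁ ha₁e
    have hd2 := ind_le_one (X := X) (v := a₁)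
    have hd3 := ind_le_one (X := Y) (v := a₁)
    obtain ⟨r, hr, har⟩ := mem_nb.1 (dg_pos (show 1 ≤ dg G W a₁ by omega))
    have hrX : r ∉ X := fun hrX => hind a₁ ha₁ ha₁X r hr hrX har
    -- The ends are `a₁` on one side and `A`, the rest of `X`, on the other; induction applies to the
    -- vertices outside `X` reached from `a₁`.
    set A := (X ∩ W).erase a₁ with hA
    have hAX : X ∩ W ⊆ {a₁} ∪ A := fun x hx => by
      by_cases h : x = a₁
      · simp [h]
      · simp [hA, h, hx]
    have haX : a₁ ∈ X ∩ W := by simp [ha₁X, ha₁]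
    have hA' : A ⊆ X ∩ W := Finset.erase_subset _ _
    set C := Reach G (W \ (X ∩ W)) (nb G {a₁}) with hC
    have hrC : r ∈ C := mem_reach (by simp [hr, hrX]) (mem_nb_one.2 har.symm)
    have hC1 : C ⊆ W \ (X ∩ W) := reach_subset
    have hC2 : C ⊆ W := hC1.trans Finset.sdiff_subset
    have hCY : ∀ v ∈ C, v ∉ Y := fun v hv hvY =>
      (hRX v (hC1 hv)).2 ((hXY' v (hC2 hv)).2 hvY)
    have hg : Good G C (nb G {a₁}) (nb G A) := by
      refine ⟨⟨r, hrC⟩, fun D hD hn hc => reach_hits hD hn hc, ?_, ?_⟩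
      · intro E hE hn hc
        by_contra hcon
        push Not at hcon
        obtain ⟨y, hy, hyy⟩ := hRx a₁ ha₁ E (fun x hx => Finset.mem_erase.2
          ⟨fun h => (hRX x (hC1 (hE hx))).2 (h ▸ ha₁X), hC2 (hE hx)⟩) hn (by
          intro u hu v hv ha
          rw [Finset.mem_erase] at hv
          by_cases hvX : v ∈ X
          · exact absurd (mem_nb.2 ⟨v, by simp [hA, hv, hvX], ha⟩) (hcon u hu)
          · exact hc u hu v (reach_closed u (hE hu) v (by simp [hv, hvX]) ha) ha)
        exact hCY y (hE hy) hyy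
      · intro w hw E hE hn hc
        by_contra hcon
        push Not at hcon
        obtain ⟨y, hy, hyy⟩ := hRx w (hC2 hw) E (hE.trans (Finset.erase_subset_erase _ hC2)) hn (by
          intro u hu v hv ha
          rw [Finset.mem_erase] at hv
          by_cases hvX : v ∈ X
          · by_cases hva : v = a₁
            · subst hva
              exact absurd (mem_nb_one.2 ha) (hcon u hu).1
            · exact absurd (mem_nb.2 ⟨v, by simp [hA, hv, hvX, hva], ha⟩) (hcon u hu).2
          · exact hc u hu v (Finset.mem_erase.2 ⟨hv.1, reach_closed u
              (Finset.mem_of_mem_erase (hE hu)) v (by simp [hv, hvX]) ha⟩) ha)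
        exact hCY y (Finset.mem_of_mem_erase (hE hy)) hyy
    have key : Adm G C (nb G {a₁}) (nb G A) 1 := by
      refine ih C _ _ e (hltW C hC1) hg ?_ ?_
      · intro v hv hve
        have h1 := hdeg v (hC2 hv) hve
        rw [ind_of_not_mem (hRX v (hC1 hv)).2, ind_of_not_mem (hCY v hv)] at h1
        have h2 : dg G W v ≤ dg G C v + dg G (X ∩ W) v :=
          dg_closed reach_closed hv (by rw [hSW])
        have h3 : dg G (X ∩ W) v ≤ dg G {a₁} v + dg G A v := dg_le_add hAX
        have h4 := dg_le_ind ((dg_mono (v := v) hA').trans (hC4 v (hC2 hv)))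
        rw [dg_singleton] at h3
        omega
      · by_contra hcon
        push Not at hcon
        have hre := hcon r hrC
        obtain ⟨s, hs, hsA⟩ := hg.hitY C subset_rfl ⟨r, hrC⟩ (fun _ _ v hv _ => hv)
        obtain ⟨t, ht, hst⟩ := mem_nb.1 hsA
        have hsr : s = r := (hcon s hs).trans hre.symm
        subst hsr
        have : 2 ≤ dg G (X ∩ W) s := Finset.one_lt_card.2 ⟨a₁, by
          simp only [Finset.mem_filter]; exact ⟨haX, har.symm⟩, t, by
          simp only [Finset.mem_filter]; exact ⟨hA' ht, hst⟩, by
          simp only [hA, Finset.mem_erase] at ht; exact ht.1.symm⟩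
        have := hC4 s hr
        omega
    have hF1 : Fam G {a₁} X {a₁} 0 := fam_self (by simpa using ha₁X)
    have hF2 : Fam G A Y A 0 := fam_self (fun x hx => by
      have := Finset.mem_inter.1 (hA' hx)
      exact (hXY' x this.2).1 this.1)
    have hk := hF1.comp key (by
      rw [Finset.disjoint_singleton_left]
      exact fun hc => (hRX _ (hC1 hc)).2 ha₁X)
    have hk2 := hF2.comp hk.symm (by
      rw [Finset.disjoint_left]
      intro x hx hx'
      rw [Finset.mem_union, Finset.mem_singleton] at hx'
      rcases hx' with rfl | hx'
      · simp [hA] at hx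
      · exact (hRX _ (hC1 hx')).2 (Finset.mem_inter.1 (hA' hx)).1)
    refine hno (hk2.symm.mono ?_ (by omega))
    refine Finset.union_subset (hA'.trans Finset.inter_subset_right)
      (Finset.union_subset (by simpa using ha₁) hC2)
  · -- Otherwise delete `X`, the new roots being its neighbours: by `hC4` a vertex adjacent to `X`
    -- loses one neighbour and becomes a root.
    have hg : Good G (Reach G (W \ (X ∩ W)) Y) (nb G (X ∩ W)) Y :=
      good_reach hconn hRx ⟨x₀, by simp [hx₀W, hx₀], hx₀W⟩ hCne
    by_cases hCe : ∃ v ∈ Reach G (W \ (X ∩ W)) Y, v ≠ e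
    · have hA := ih _ _ _ e (hltW _ hCR) hg (fun v hv hve => by
        have h1 := hdeg v (hCW hv) hve
        rw [ind_of_not_mem (hRX v (hCR hv)).2] at h1
        have h2 : dg G W v ≤ dg G (Reach G (W \ (X ∩ W)) Y) v + dg G (X ∩ W) v :=
          dg_closed reach_closed hv (by rw [hSW])
        have h3 := dg_le_ind (hC4 v (hCW hv))
        omega) hCe
      have hF : Fam G (X ∩ W) X (X ∩ W) 0 := fam_self Finset.inter_subset_left
      refine hno ((hF.comp hA (Finset.disjoint_sdiff.mono_right hCR)).mono
        (Finset.union_subset Finset.inter_subset_right hCW) (by omega))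
    · -- Only `e` is left after deleting `X`.  Then some vertex lies in `X ∩ Y`, a path of order `1`,
      -- and `e` with a neighbour in `X` is a path of order `2`.
      push Not at hCe
      obtain ⟨e', he'⟩ := hCne
      obtain rfl := hCe e' he'
      have heX := (hRX _ (hCR he')).2
      obtain ⟨s, hs, hsX⟩ := hg.hitX _ subset_rfl ⟨e', he'⟩ (fun _ _ v hv _ => hv)
      obtain ⟨y, hy, hyY⟩ := hg.hitY _ subset_rfl ⟨e', he'⟩ (fun _ _ v hv _ => hv)
      obtain rfl := hCe s hs
      obtain rfl := hCe y hy
      obtain ⟨a, ha, hea⟩ := mem_nb.1 hsX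
      rw [Finset.mem_inter] at ha
      obtain ⟨v, hvW, hvX, hvY⟩ : ∃ v ∈ W, v ∈ X ∧ v ∈ Y := by
        by_contra hcon
        push Not at hcon
        have hYe : Y ∩ W ⊆ {y} := fun v hv => by
          rw [Finset.mem_inter] at hv
          have hvX : v ∉ X := fun h => hcon v hv.2 h hv.1
          simpa using hCe v (mem_reach (by simp [hv.2, hvX]) hv.1)
        have hc1 : (X ∩ W).card ≤ 1 := hcard.trans ((Finset.card_le_card hYe).trans (by simp))
        have haY := hcon a ha.2 ha.1
        have hXa : ∀ v ∈ W, v ∈ X → v = a := fun v hv hvX =>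
          Finset.card_le_one.1 hc1 v (by simp [hv, hvX]) a (by simp [ha])
        have hd := hdeg a ha.2 (fun h => heX (h ▸ ha.1))
        rw [ind_of_mem ha.1, ind_of_not_mem haY] at hd
        obtain ⟨b, hb, c, hc, hbc, hab, hac⟩ :=
          exists_of_two_le_dg (show 2 ≤ dg G W a by omega)
        obtain ⟨r, hr, hry, har⟩ : ∃ r ∈ W, r ≠ y ∧ G.Adj a r := by
          by_cases hby : b = y
          · exact ⟨c, hc, fun h => hbc (hby.trans h.symm), hac⟩
          · exact ⟨b, hb, hby, hab⟩
        obtain ⟨z, hz, hzY⟩ := hRx a ha.2 ((W.erase a).erase y) (Finset.erase_subset _ _)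
          ⟨r, by simp [hr, hry, har.ne']⟩ (by
          intro u hu v hv huv
          rw [Finset.mem_erase] at hu ⊢
          refine ⟨?_, hv⟩
          rintro rfl
          have hu2 := Finset.mem_erase.1 hu.2
          have huX : u ∉ X := fun h => hu2.1 (hXa u hu2.2 h)
          exact hu.1 (hCe u (reach_closed v he' u (by simp [hu2.2, huX]) huv.symm)))
        simp only [Finset.mem_erase] at hz
        have := hYe (Finset.mem_inter.2 ⟨hzY, hz.2.2⟩)
        rw [Finset.mem_singleton] at this
        exact hz.1 this
      exact hno (adm_one (.inl rfl) (.single hvW) hvX hvY (Pth.pair ha.2 (hCW he') hea.symm) ha.1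
        hyY)

/-- The case `K = 1` of the rooted theorem, where the degree condition may fail at one vertex `e`.
The exception is what makes the statement applicable to a part together with its cut vertex. -/
lemma adm_one_exceptional (W X Y : Finset V) (e : V) (h : Good G W X Y)
    (hdeg : ∀ v ∈ W, v ≠ e → 3 ≤ dg G W v + ind X v + ind Y v) (hex : ∃ v ∈ W, v ≠ e) :
    Adm G W X Y 1 := by
  induction hn : W.card using Nat.strong_induction_on generalizing W X Y e with
  | _ n ihn =>
  have ih : BelowOne G W := fun W' X' Y' e' hlt h' hd' he' =>
    ihn _ (hn ▸ hlt) W' X' Y' e' h' hd' he' rfl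
  by_contra hno
  have hdeg' : ∀ v ∈ W, v ≠ e → 3 ≤ dg G W v + ind Y v + ind X v := fun v hv hve => by
    have := hdeg v hv hve
    omega
  have hsub : ∀ D ⊆ W, D ≠ W → D.Nonempty → Cl G D W → D ≠ {e} → False := by
    intro D hD hDW hDn hc hDe
    refine hno ((ih D X Y e (Finset.card_lt_card (hD.ssubset_of_ne hDW)) (h.closed hD hDn hc)
      ?_ ?_).mono hD le_rfl)
    · intro v hv hve
      have h1 := hdeg v (hD hv) hve
      have h2 := dg_closed (S := ∅) hc hv (W := W) (by simp)
      have h3 : dg G ∅ v = 0 := by simp [dg]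
      omega
    · by_contra hcon
      push Not at hcon
      obtain ⟨d, hd⟩ := hDn
      exact hDe (Finset.eq_singleton_iff_unique_mem.2 ⟨hcon d hd ▸ hd, hcon⟩)
  have hconn : ∀ D ⊆ W, D.Nonempty → Cl G D W → D = W := by
    intro D hD hDn hc
    by_contra hDW
    by_cases hDe : D = {e}
    · refine hsub (W \ D) Finset.sdiff_subset ?_ ?_ ?_ ?_
      · intro heq
        obtain ⟨d, hd⟩ := hDn
        have := heq ▸ hD hd
        simp [hd] at this
      · rw [Finset.sdiff_nonempty]
        exact fun hs => hDW (hD.antisymm hs)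
      · intro u hu v hv ha
        rw [Finset.mem_sdiff] at hu ⊢
        exact ⟨hv, fun hvD => hu.2 (hc v hvD u hu.1 ha.symm)⟩
      · intro heq
        have : e ∈ W \ D := by simp [heq]
        simp [hDe] at this
    · exact hsub D hD hDW hDn hc hDe
  have hcut : ∀ X Y : Finset V, Good G W X Y → ¬ Adm G W X Y 1 →
      (∀ v ∈ W, v ≠ e → 3 ≤ dg G W v + ind X v + ind Y v) →
      ∀ c ∈ W, ∀ D ⊆ W.erase c, D.Nonempty → Cl G D (W.erase c) → ∃ y ∈ D, y ∈ Y := by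
    intro X Y h hno hdeg c hc D hD hDn hcl
    by_contra hcon
    push Not at hcon
    by_cases hDe : D = {e}
    · subst hDe
      have := Finset.mem_erase.1 (hD (Finset.mem_singleton_self e))
      exact hno (below_pendant ih h hdeg hc this.2 this.1 hcl (hcon e (by simp)))
    · exact hno (below_cut ih h hdeg hc hD hDn hcl hcon hDe)
  have hno' : ¬ Adm G W Y X 1 := fun h => hno h.symm
  rcases le_total (X ∩ W).card (Y ∩ W).card with hle | hle
  · exact hno (below_core ih h hdeg hex hconn (hcut X Y h hno hdeg) hle)
  · exact hno' (below_core ih h.symm hdeg' hex hconn (hcut Y X h.symm hno' hdeg') hle)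

/-! ### The induction step after deleting a subgraph -/

/-- The rooted theorem for sets smaller than `W`. -/
def Below (G : SimpleGraph V) (W : Finset V) : Prop :=
  ∀ (W' X Y : Finset V) (K : ℕ), W'.card < W.card → Good G W' X Y →
    (K = 0 ∨ ∀ v ∈ W', K + 2 ≤ dg G W' v + ind X v + ind Y v) → Adm G W' X Y K

lemma card_lt_of_not_mem {D W : Finset V} {c : V} (hD : D ⊆ W) (hc : c ∈ W) (hcD : c ∉ D) :
    D.card < W.card :=
  Finset.card_lt_card ((Finset.ssubset_iff_of_subset hD).2 ⟨c, hc, hcD⟩)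

/-- A family ending at the neighbours of `z` is prolonged by `z`. -/
lemma Adm.to_fam {D X : Finset V} {z : V} {p : ℕ} (h : Adm G D X (nb G {z}) p) (hz : z ∉ D) :
    Fam G (insert z D) X {z} p := by
  obtain ⟨m, d, hd, h⟩ := h
  refine ⟨m + 1, d, hd, fun a ha i hi => ?_⟩
  rw [Finset.mem_singleton] at ha
  subst ha
  obtain ⟨u, hu, v, hv, hp⟩ := h i hi
  refine ⟨u, hu, ?_⟩
  rw [add_right_comm]
  exact (hp.append (mem_nb_one.1 hv) (W₂ := {a}) (by simpa using hz)
    (.single (Finset.mem_singleton_self a))).mono (fun x hx => by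
      rw [Finset.mem_union, Finset.mem_singleton] at hx
      rw [Finset.mem_insert]
      exact hx.symm)

lemma Fam.adm {W X Y : Finset V} {z : V} {p : ℕ} (h : Fam G W X {z} p) (hz : z ∈ Y) :
    Adm G W X Y p := by
  obtain ⟨m, d, hd, h⟩ := h
  refine ⟨m, d, hd, fun i hi => ?_⟩
  obtain ⟨u, hu, hp⟩ := h z (by simp) i hi
  exact ⟨u, hu, z, hz, hp⟩

lemma fam_empty {W X : Finset V} {p : ℕ} : Fam G W X ∅ p :=
  ⟨1, 1, .inl rfl, fun a ha => by simp at ha⟩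

/-- A part `D` of `C` that is a union of components of `C`, or is cut off from `Z` by one
vertex. -/
def Part (G : SimpleGraph V) (C Z D : Finset V) : Prop :=
  Cl G D C ∨ ∃ c ∈ C, D ⊆ C.erase c ∧ Cl G D (C.erase c) ∧ ∀ d ∈ D, d ∉ Z

/-- A family with index `δ` that ends anywhere in `A` is continued by induction, with index `K - δ`,
through a part `D` all of whose subparts see `A`. -/
lemma adm_through {W H R X Z A D : Finset V} {K δ : ℕ} (ih : Below G W) (hHW : H ⊆ W)
    (hRW : R ⊆ W) (hHR : Disjoint H R) (hH : H.Nonempty) (hF : Fam G H X A δ)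
    (hD : D ⊆ Reach G R Z) (hDn : D.Nonempty) (hpart : Part G (Reach G R Z) Z D)
    (hsub : ∀ D' ⊆ D, D'.Nonempty → Part G (Reach G R Z) Z D' → ∃ x ∈ D', x ∈ nb G A)
    (hdeg : K ≤ δ ∨ ∀ v ∈ D, K + 2 ≤ dg G R v + ind Z v + ind (nb G A) v + δ) :
    Adm G W X Z K := by
  set C := Reach G R Z with hC
  have hCR : C ⊆ R := reach_subset
  obtain ⟨h₀, hh₀⟩ := hH
  have hDlt : D.card < W.card := card_lt_of_not_mem (hD.trans (hCR.trans hRW)) (hHW hh₀)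
    (fun hh => Finset.disjoint_left.1 hHR hh₀ (hCR (hD hh)))
  have hRC : ∀ v ∈ D, dg G R v ≤ dg G C v := fun v hv => by
    have h1 : dg G R v ≤ dg G C v + dg G ∅ v := dg_closed reach_closed (hD hv) (by simp)
    have h2 : dg G ∅ v = 0 := by simp [dg]
    omega
  have hA : Adm G C (nb G A) Z (K - δ) := by
    rcases hpart with hcl | ⟨c, hc, hDc, hcl, hDZ⟩
    · have hg : Good G D (nb G A) Z := by
        refine ⟨hDn, ?_, ?_, ?_⟩
        · intro E hE hn hcE
          exact hsub E hE hn (.inl fun u hu v hv ha => hcE u hu v (hcl u (hE hu) v hv ha) ha)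
        · intro E hE hn hcE
          exact reach_hits (hE.trans hD) hn
            (fun u hu v hv ha => hcE u hu v (hcl u (hE hu) v hv ha) ha)
        · intro w hw E hE hn hcE
          by_contra hcon
          push Not at hcon
          obtain ⟨x, hx, hxx⟩ := hsub E (hE.trans (Finset.erase_subset _ _)) hn
            (.inr ⟨w, hD hw, hE.trans (Finset.erase_subset_erase _ hD), fun u hu v hv ha => by
              rw [Finset.mem_erase] at hv
              exact hcE u hu v (Finset.mem_erase.2 ⟨hv.1,
                hcl u (Finset.mem_of_mem_erase (hE hu)) v hv.2 ha⟩) ha,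
              fun d hd => (hcon d hd).2⟩)
          exact (hcon x hx).1 hxx
      refine (ih D _ _ (K - δ) hDlt hg ?_).mono hD le_rfl
      refine or_iff_not_imp_left.2 fun hKδ v hv => ?_
      have h1 := hdeg.resolve_left (by omega) v hv
      have h2 := dg_closed (S := ∅) (W := C) hcl hv (by simp)
      have h3 : dg G ∅ v = 0 := by simp [dg]
      have := hRC v hv
      omega
    · have hg : Good G D (nb G A) (nb G {c}) := by
        refine ⟨hDn, ?_, ?_, ?_⟩
        · intro E hE hn hcE
          exact hsub E hE hn (.inr ⟨c, hc, hE.trans hDc, fun u hu v hv ha =>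
            hcE u hu v (hcl u (hE hu) v hv ha) ha, fun d hd => hDZ d (hE hd)⟩)
        · intro E hE hn hcE
          by_contra hcon
          push Not at hcon
          obtain ⟨z, hz, hzZ⟩ := reach_hits (hE.trans hD) hn (fun u hu v hv ha => by
            by_cases hvc : v = c
            · subst hvc
              exact absurd (mem_nb_one.2 ha) (hcon u hu)
            · exact hcE u hu v (hcl u (hE hu) v (Finset.mem_erase.2 ⟨hvc, hv⟩) ha) ha)
          exact hDZ z (hE hz) hzZ
        · intro w hw E hE hn hcE
          by_contra hcon
          push Not at hcon
          obtain ⟨x, hx, hxx⟩ := hsub E (hE.trans (Finset.erase_subset _ _)) hn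
            (.inr ⟨w, hD hw, hE.trans (Finset.erase_subset_erase _ hD), fun u hu v hv ha => by
              rw [Finset.mem_erase] at hv
              have huD := Finset.mem_of_mem_erase (hE hu)
              by_cases hvc : v = c
              · subst hvc
                exact absurd (mem_nb_one.2 ha) (hcon u hu).2
              · exact hcE u hu v (Finset.mem_erase.2 ⟨hv.1,
                  hcl u huD v (Finset.mem_erase.2 ⟨hvc, hv.2⟩) ha⟩) ha,
              fun d hd => hDZ d (Finset.mem_of_mem_erase (hE hd))⟩)
          exact (hcon x hx).1 hxx
      refine Adm.of_cut (fun E hE hn hcE => reach_hits hE hn hcE) hc hDc hcl hDZ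
        (ih D _ _ (K - δ) hDlt hg ?_)
      refine or_iff_not_imp_left.2 fun hKδ v hv => ?_
      have h1 := hdeg.resolve_left (by omega) v hv
      have h2 := dg_cut hv hcl
      have := hRC v hv
      rw [ind_of_not_mem (hDZ v hv)] at h1
      omega
  exact (hF.comp hA (hHR.mono_right hCR)).mono (Finset.union_subset hHW (hCR.trans hRW)) (by omega)

/-- The engine of the induction: a family with index `ℓ` ending in `T` and a fallback family with
index `δ` ending in `A`, the latter used when some part of the rest is not adjacent to `T`. -/
lemma adm_engine {W H R X Z T A : Finset V} {K ℓ δ : ℕ} (ih : Below G W) (hHW : H ⊆ W)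
    (hRW : R ⊆ W) (hHR : Disjoint H R) (hH : H.Nonempty) (hT : Fam G H X T ℓ)
    (hA : Fam G H X A δ) (hZ : ∃ z ∈ R, z ∈ Z)
    (hpart : ∀ D ⊆ Reach G R Z, D.Nonempty → Part G (Reach G R Z) Z D →
      ∃ x ∈ D, x ∈ nb G T ∨ x ∈ nb G A)
    (hdT : K ≤ ℓ ∨ ∀ v ∈ Reach G R Z, K + 2 ≤ dg G R v + ind Z v + ind (nb G T) v + ℓ)
    (hdA : K ≤ δ ∨ ∀ v ∈ Reach G R Z, v ∉ nb G T →
      K + 2 ≤ dg G R v + ind Z v + ind (nb G A) v + δ) :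
    Adm G W X Z K := by
  by_cases hall : ∀ D ⊆ Reach G R Z, D.Nonempty → Part G (Reach G R Z) Z D → ∃ x ∈ D, x ∈ nb G T
  · obtain ⟨z, hz, hzZ⟩ := hZ
    exact adm_through ih hHW hRW hHR hH hT subset_rfl ⟨z, mem_reach hz hzZ⟩
      (.inl fun _ _ v hv _ => hv) (fun D hD hn hp => hall D hD hn hp) hdT
  · push Not at hall
    obtain ⟨D, hD, hn, hp, hDT⟩ := hall
    refine adm_through ih hHW hRW hHR hH hA hD hn hp (fun D' hD' hn' hp' => ?_)
      (hdA.imp_right fun h v hv => h v (hD hv) (hDT v hv))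
    obtain ⟨x, hx, hxx⟩ := hpart D' (hD'.trans hD) hn' hp'
    exact ⟨x, hx, hxx.resolve_left (hDT x (hD' hx))⟩

/-- What may be assumed about a minimal counterexample: `G[W]` is connected, it has no cut vertex,
and both `X` and `Y` survive the deletion of any one vertex.  (By `cut`, the fields `cutX` and `cutY`
only concern `D = W.erase c`.) -/
structure Irred (G : SimpleGraph V) (W X Y : Finset V) : Prop where
  ne : W.Nonempty
  conn : ∀ D ⊆ W, D.Nonempty → Cl G D W → D = W
  cutY : ∀ c ∈ W, ∀ D ⊆ W.erase c, D.Nonempty → Cl G D (W.erase c) → ∃ y ∈ D, y ∈ Y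
  cutX : ∀ c ∈ W, ∀ D ⊆ W.erase c, D.Nonempty → Cl G D (W.erase c) → ∃ x ∈ D, x ∈ X
  cut : ∀ c ∈ W, ∀ D ⊆ W.erase c, D.Nonempty → Cl G D (W.erase c) → D = W.erase c

lemma Irred.symm {W X Y : Finset V} (h : Irred G W X Y) : Irred G W Y X :=
  ⟨h.ne, h.conn, h.cutX, h.cutY, h.cut⟩

/-- Small cuts are handled by induction: a part that does not see `X` or `Y` except through one vertex
`c` by `Adm.of_cut`, and a cut vertex `c` by crossing both sides of it, each with index `K - 1`,
where `(K - 1) + (K - 1) ≥ K`. -/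
lemma irred_of_not_adm {W X Y : Finset V} {K : ℕ} (hK : 2 ≤ K) (ih : Below G W)
    (h : Good G W X Y) (hdeg : ∀ v ∈ W, K + 2 ≤ dg G W v + ind X v + ind Y v)
    (hno : ¬ Adm G W X Y K) : Irred G W X Y := by
  have hconn : ∀ D ⊆ W, D.Nonempty → Cl G D W → D = W := by
    intro D hD hn hc
    by_contra hDW
    refine hno ((ih D X Y K (Finset.card_lt_card (hD.ssubset_of_ne hDW)) (h.closed hD hn hc)
      (.inr fun v hv => ?_)).mono hD le_rfl)
    have h1 := hdeg v (hD hv)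
    have h2 := dg_closed (S := ∅) hc hv (W := W) (by simp)
    have h3 : dg G ∅ v = 0 := by simp [dg]
    omega
  have hcut : ∀ X Y : Finset V, Good G W X Y →
      (∀ v ∈ W, K + 2 ≤ dg G W v + ind X v + ind Y v) → ¬ Adm G W X Y K →
      ∀ c ∈ W, ∀ D ⊆ W.erase c, D.Nonempty → Cl G D (W.erase c) → ∃ y ∈ D, y ∈ Y := by
    intro X Y h hdeg hno c hc D hD hn hcl
    by_contra hcon
    push Not at hcon
    have hDW : D ⊆ W := hD.trans (Finset.erase_subset _ _)
    refine hno (Adm.of_cut h.hitY hc hD hcl hcon (ih D _ _ K (card_lt_of_not_mem hDW hc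
      fun h => by simpa using hD h) (h.cut hc hD hn hcl hcon) (.inr fun v hv => ?_)))
    have h1 := hdeg v (hDW hv)
    have h2 := dg_cut hv hcl
    rw [ind_of_not_mem (hcon v hv)] at h1
    omega
  have hcutY := hcut X Y h hdeg hno
  have hcutX := hcut Y X h.symm (fun v hv => by have := hdeg v hv; omega) fun h => hno h.symm
  refine ⟨h.ne, hconn, hcutY, hcutX, ?_⟩
  -- Two parts separated by `c` are traversed one after the other, with index `K - 1` each.
  have side : ∀ X : Finset V, (∀ v ∈ W, K + 1 ≤ dg G W v + ind X v) →
      (∀ c ∈ W, ∀ D ⊆ W.erase c, D.Nonempty → Cl G D (W.erase c) → ∃ x ∈ D, x ∈ X) →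
      ∀ c ∈ W, ∀ D ⊆ W.erase c, D.Nonempty → Cl G D (W.erase c) →
      Adm G D X (nb G {c}) (K - 1) := by
    intro X hdeg hcutX c hc D hD hn hcl
    have hDW : D ⊆ W := hD.trans (Finset.erase_subset _ _)
    have hcD : c ∉ D := fun h => by simpa using hD h
    refine ih D _ _ (K - 1) (card_lt_of_not_mem hDW hc hcD) ⟨hn, ?_, ?_, ?_⟩ (.inr fun v hv => ?_)
    · intro E hE hn hcE
      exact hcutX c hc E (hE.trans hD) hn
        (fun u hu v hv ha => hcE u hu v (hcl u (hE hu) v hv ha) ha)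
    · intro E hE hn hcE
      by_contra hcon
      push Not at hcon
      have := hconn E (hE.trans hDW) hn (fun u hu v hv ha => by
        by_cases hvc : v = c
        · subst hvc
          exact absurd (mem_nb_one.2 ha) (hcon u hu)
        · exact hcE u hu v (hcl u (hE hu) v (Finset.mem_erase.2 ⟨hvc, hv⟩) ha) ha)
      exact hcD (hE (this ▸ hc))
    · intro w hw E hE hn hcE
      by_contra hcon
      push Not at hcon
      obtain ⟨x, hx, hxx⟩ := hcutX w (hDW hw) E (hE.trans (Finset.erase_subset_erase _ hDW)) hn
        (fun u hu v hv ha => by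
          rw [Finset.mem_erase] at hv
          have huD := Finset.mem_of_mem_erase (hE hu)
          by_cases hvc : v = c
          · subst hvc
            exact absurd (mem_nb_one.2 ha) (hcon u hu).2
          · exact hcE u hu v (Finset.mem_erase.2 ⟨hv.1,
              hcl u huD v (Finset.mem_erase.2 ⟨hvc, hv.2⟩) ha⟩) ha)
      exact (hcon x hx).1 hxx
    · have h1 := hdeg v (hDW hv)
      have h2 := dg_cut hv hcl
      omega
  intro c hc D hD hn hcl
  by_contra hDc
  have h1 := side X (fun v hv => by
    have := hdeg v hv
    have := ind_le_one (X := Y) (v := v)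
    omega) hcutX c hc D hD hn hcl
  have h2 := side Y (fun v hv => by
    have := hdeg v hv
    have := ind_le_one (X := X) (v := v)
    omega) hcutY c hc (W.erase c \ D) Finset.sdiff_subset
    (by rw [Finset.sdiff_nonempty]; exact fun hs => hDc (hD.antisymm hs))
    (by
      intro u hu v hv ha
      rw [Finset.mem_sdiff] at hu ⊢
      exact ⟨hv, fun hvD => hu.2 (hcl v hvD u hu.1 ha.symm)⟩)
  have h3 := (h1.to_fam (fun h => by simpa using hD h)).comp h2.symm (by
    rw [Finset.disjoint_left]
    intro x hx hx'
    rw [Finset.mem_sdiff, Finset.mem_erase] at hx'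
    rw [Finset.mem_insert] at hx
    exact hx.elim hx'.1.1 hx'.2)
  refine hno (h3.mono ?_ (by omega))
  refine Finset.union_subset (Finset.insert_subset hc (hD.trans (Finset.erase_subset _ _)))
    (Finset.sdiff_subset.trans (Finset.erase_subset _ _))

/-- Every part of what is left after deleting `H ⊆ T ∪ A` sees `T` or `A`, when the target is `Y`. -/
lemma Irred.part_Y {W X Y H T A : Finset V} (h : Irred G W X Y) (hHW : H ⊆ W) (hH : H.Nonempty)
    (hHTA : H ⊆ T ∪ A) : ∀ D ⊆ Reach G (W \ H) Y, D.Nonempty → Part G (Reach G (W \ H) Y) Y D →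
      ∃ x ∈ D, x ∈ nb G T ∨ x ∈ nb G A := by
  intro D hD hn hp
  by_contra hcon
  push Not at hcon
  have hCW : Reach G (W \ H) Y ⊆ W := reach_subset.trans Finset.sdiff_subset
  have key : ∀ u ∈ D, ∀ v ∈ W, G.Adj u v → v ∈ Reach G (W \ H) Y := by
    intro u hu v hv ha
    by_cases hvH : v ∈ H
    · rcases Finset.mem_union.1 (hHTA hvH) with hv' | hv'
      · exact absurd (mem_nb.2 ⟨v, hv', ha⟩) (hcon u hu).1
      · exact absurd (mem_nb.2 ⟨v, hv', ha⟩) (hcon u hu).2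
    · exact reach_closed u (hD hu) v (by simp [hv, hvH]) ha
  rcases hp with hcl | ⟨c, hc, hDc, hcl, hDY⟩
  · have := h.conn D (hD.trans hCW) hn (fun u hu v hv ha => hcl u hu v (key u hu v hv ha) ha)
    obtain ⟨x, hx⟩ := hH
    have := reach_subset (hD (this ▸ hHW hx))
    simp [hx] at this
  · obtain ⟨y, hy, hyy⟩ := h.cutY c (hCW hc) D (hDc.trans (Finset.erase_subset_erase _ hCW)) hn
      (fun u hu v hv ha => by
        rw [Finset.mem_erase] at hv
        exact hcl u hu v (Finset.mem_erase.2 ⟨hv.1, key u hu v hv.2 ha⟩) ha)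
    exact hDY y hy hyy

/-- As `Irred.part_Y`, when `u` is deleted as well, its neighbourhood being the target, and
`H ∪ {u}` contains `X`. -/
lemma Irred.part_nb {W X Y H T A : Finset V} {u : V} (h : Irred G W X Y) (hu : u ∈ W)
    (hX : ∀ x ∈ W, x ∈ X → x ∈ insert u H) (hHTA : H ⊆ T ∪ A) :
    ∀ D ⊆ Reach G (W \ insert u H) (nb G {u}), D.Nonempty →
      Part G (Reach G (W \ insert u H) (nb G {u})) (nb G {u}) D →
      ∃ x ∈ D, x ∈ nb G T ∨ x ∈ nb G A := by
  intro D hD hn hp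
  by_contra hcon
  push Not at hcon
  have hCW : Reach G (W \ insert u H) (nb G {u}) ⊆ W := reach_subset.trans Finset.sdiff_subset
  have key : ∀ s ∈ D, ∀ v ∈ W, v ≠ u → G.Adj s v → v ∈ Reach G (W \ insert u H) (nb G {u}) := by
    intro s hs v hv hvu ha
    by_cases hvH : v ∈ H
    · rcases Finset.mem_union.1 (hHTA hvH) with hv' | hv'
      · exact absurd (mem_nb.2 ⟨v, hv', ha⟩) (hcon s hs).1
      · exact absurd (mem_nb.2 ⟨v, hv', ha⟩) (hcon s hs).2
    · exact reach_closed s (hD hs) v (by simp [hv, hvH, hvu]) ha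
  have hDX : ∀ x ∈ D, x ∉ X := fun x hx hxX => by
    have h1 := reach_subset (hD hx)
    rw [Finset.mem_sdiff] at h1
    exact h1.2 (hX x h1.1 hxX)
  rcases hp with hcl | ⟨c, hc, hDc, hcl, hDY⟩
  · obtain ⟨x, hx, hxX⟩ := h.cutX u hu D (fun x hx => by
      have h1 := reach_subset (hD hx)
      rw [Finset.mem_sdiff, Finset.mem_insert] at h1
      rw [Finset.mem_erase]
      tauto) hn (fun s hs v hv ha => by
        rw [Finset.mem_erase] at hv
        exact hcl s hs v (key s hs v hv.2 hv.1 ha) ha)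
    exact hDX x hx hxX
  · obtain ⟨x, hx, hxX⟩ := h.cutX c (hCW hc) D (hDc.trans (Finset.erase_subset_erase _ hCW)) hn
      (fun s hs v hv ha => by
        rw [Finset.mem_erase] at hv
        by_cases hvu : v = u
        · subst hvu
          exact absurd (mem_nb_one.2 ha) (hDY s hs)
        · exact hcl s hs v (Finset.mem_erase.2 ⟨hv.1, key s hs v hv.2 hvu ha⟩) ha)
    exact hDX x hx hxX

/-! ### Deleting a subgraph of an irreducible triple -/

lemma Below.mono {W W' : Finset V} (h : Below G W) (hW : W' ⊆ W) : Below G W' :=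
  fun U X Y K hU => h U X Y K (hU.trans_le (Finset.card_le_card hW))

/-- It suffices to reach the neighbours of a vertex `u ∈ Y` inside `W \ {u}`. -/
lemma adm_finish {W X Y : Finset V} {u : V} {K : ℕ} (hu : u ∈ W) (huY : u ∈ Y)
    (h : Adm G (W.erase u) X (nb G {u}) K) : Adm G W X Y K :=
  ((h.to_fam (by simp)).adm huY).mono (by rw [Finset.insert_erase hu]) le_rfl

/-- Deleting `H` and continuing to `Y` (see `adm_engine`).  The hypotheses `hlT`, `hlA` say that the degree lost by deleting
`H` is made up for by the index already gained. -/
lemma Irred.engine {W X Y H T A : Finset V} {K ℓ δ : ℕ} (h : Irred G W X Y) (ih : Below G W)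
    (hdeg : ∀ v ∈ W, K + 2 ≤ dg G W v + ind X v + ind Y v) (hHW : H ⊆ W) (hH : H.Nonempty)
    (hHTA : H ⊆ T ∪ A) (hT : Fam G H X T ℓ) (hA : Fam G H X A δ) (hY : ∃ y ∈ W \ H, y ∈ Y)
    (hlT : ∀ v ∈ W \ H, dg G H v + ind X v ≤ ind (nb G T) v + ℓ)
    (hlA : ∀ v ∈ W \ H, v ∉ nb G T → dg G H v + ind X v ≤ ind (nb G A) v + δ) :
    Adm G W X Y K := by
  have hd : ∀ v ∈ W \ H, K + 2 ≤ dg G (W \ H) v + dg G H v + ind X v + ind Y v := fun v hv => by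
    have h1 := hdeg v (Finset.mem_sdiff.1 hv).1
    have h2 : dg G W v ≤ dg G (W \ H) v + dg G H v :=
      dg_le_add (by rw [Finset.sdiff_union_of_subset hHW])
    omega
  refine adm_engine ih hHW Finset.sdiff_subset Finset.disjoint_sdiff hH hT hA hY
    (h.part_Y hHW hH hHTA) (.inr fun v hv => ?_) (.inr fun v hv hvT => ?_)
  · have h1 := hd v (reach_subset hv)
    have h2 := hlT v (reach_subset hv)
    omega
  · have h1 := hd v (reach_subset hv)
    have h2 := hlA v (reach_subset hv) hvT
    omega

/-- The variant of `Irred.engine` when `X` and `Y` are contained in `H ∪ {u}`: every path finishes at `u ∈ Y`. -/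
lemma Irred.engine_nb {W X Y H T A : Finset V} {u : V} {K ℓ δ : ℕ} (h : Irred G W X Y)
    (ih : Below G W) (hdeg : ∀ v ∈ W, K + 2 ≤ dg G W v + ind X v + ind Y v) (hHW : H ⊆ W)
    (hH : H.Nonempty) (hHTA : H ⊆ T ∪ A) (hT : Fam G H X T ℓ) (hA : Fam G H X A δ) (hu : u ∈ W)
    (huY : u ∈ Y) (huH : u ∉ H) (hX : ∀ x ∈ W, x ∈ X → x ∈ insert u H)
    (hY : ∀ y ∈ W, y ∈ Y → y ∈ insert u H) (huK : dg G H u < K)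
    (hlT : ∀ v ∈ W \ insert u H, dg G H v ≤ ind (nb G T) v + ℓ)
    (hlA : ∀ v ∈ W \ insert u H, v ∉ nb G T → dg G H v ≤ ind (nb G A) v + δ) :
    Adm G W X Y K := by
  have hsub : insert u H ⊆ W := Finset.insert_subset hu hHW
  have hsplit : ∀ v ∈ W, dg G W v ≤ dg G (W \ insert u H) v + ind (nb G {u}) v + dg G H v :=
    fun v hv => by
      have h2 : dg G W v ≤ dg G (W \ insert u H) v + dg G (insert u H) v :=
        dg_le_add (by rw [Finset.sdiff_union_of_subset hsub])
      have h3 : dg G (insert u H) v ≤ dg G {u} v + dg G H v :=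
        dg_le_add (by rw [Finset.insert_eq])
      rw [dg_singleton] at h3
      omega
  have hd : ∀ v ∈ W \ insert u H,
      K + 2 ≤ dg G (W \ insert u H) v + ind (nb G {u}) v + dg G H v := fun v hv => by
    rw [Finset.mem_sdiff] at hv
    have h1 := hdeg v hv.1
    rw [ind_of_not_mem fun hx => hv.2 (hX v hv.1 hx),
      ind_of_not_mem fun hx => hv.2 (hY v hv.1 hx)] at h1
    have h2 := hsplit v hv.1
    omega
  refine adm_finish hu huY (adm_engine (ih.mono (Finset.erase_subset u W)) (R := W \ insert u H)
    (fun x hx => Finset.mem_erase.2 ⟨fun hxu => huH (hxu ▸ hx), hHW hx⟩)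
    (fun x hx => ?_) (Finset.disjoint_sdiff.mono_left (Finset.subset_insert _ _)) hH hT hA ?_
    (h.part_nb hu hX hHTA) (.inr fun v hv => ?_) (.inr fun v hv hvT => ?_))
  · simp only [Finset.mem_sdiff, Finset.mem_insert] at hx
    rw [Finset.mem_erase]
    tauto
  · have h1 := hdeg u hu
    have h2 := hsplit u hu
    rw [ind_of_not_mem (X := nb G {u}) (by simp [mem_nb])] at h2
    have := ind_le_one (X := X) (v := u)
    have := ind_le_one (X := Y) (v := u)
    obtain ⟨z, hz, hzu⟩ := mem_nb.1 (dg_pos (show 1 ≤ dg G (W \ insert u H) u by omega))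
    exact ⟨z, hz, mem_nb_one.2 hzu.symm⟩
  · have h1 := hd v (reach_subset hv)
    have h2 := hlT v (reach_subset hv)
    omega
  · have h1 := hd v (reach_subset hv)
    have h2 := hlA v (reach_subset hv) hvT
    omega

lemma Irred.two_le_card {W X Y : Finset V} {K : ℕ} (h : Irred G W X Y) (hK : 2 ≤ K)
    (hdeg : ∀ v ∈ W, K + 2 ≤ dg G W v + ind X v + ind Y v) : 2 ≤ (Y ∩ W).card := by
  have key : ∀ w ∈ W, ∃ y ∈ W.erase w, y ∈ Y := fun w hw => by
    have h1 := hdeg w hw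
    have := ind_le_one (X := X) (v := w)
    have := ind_le_one (X := Y) (v := w)
    obtain ⟨z, hz, hwz⟩ := mem_nb.1 (dg_pos (show 1 ≤ dg G W w by omega))
    exact h.cutY w hw _ subset_rfl ⟨z, by simp [hz, hwz.ne']⟩ (fun _ _ v hv _ => hv)
  obtain ⟨w, hw⟩ := h.ne
  obtain ⟨y, hy, hyY⟩ := key w hw
  obtain ⟨y', hy', hyY'⟩ := key y (Finset.mem_of_mem_erase hy)
  rw [Finset.mem_erase] at hy hy'
  exact Finset.one_lt_card.2 ⟨y, by simp [hy, hyY], y', by simp [hy', hyY'], hy'.1.symm⟩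

/-! ### Cliques -/

/-- `H` spans a clique. -/
def Clq (G : SimpleGraph V) (H : Finset V) : Prop := ∀ a ∈ H, ∀ b ∈ H, a ≠ b → G.Adj a b

lemma exists_max_clique (S : Finset V) : ∃ H ⊆ S, Clq G H ∧
    ∀ H' ⊆ S, Clq G H' → H'.card ≤ H.card := by
  obtain ⟨H, hH, hmax⟩ := Finset.exists_max_image (S.powerset.filter (Clq G)) Finset.card
    ⟨∅, by simp [Clq]⟩
  simp only [Finset.mem_filter, Finset.mem_powerset] at hH hmax
  exact ⟨H, hH.1, hH.2, fun H' h1 h2 => hmax H' ⟨h1, h2⟩⟩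

lemma Clq.mono {H H' : Finset V} (h : Clq G H) (hH : H' ⊆ H) : Clq G H' :=
  fun a ha b hb => h a (hH ha) b (hH hb)

lemma Clq.insert {H : Finset V} {v : V} (h : Clq G H) (hv : ∀ a ∈ H, G.Adj v a) :
    Clq G (insert v H) := by
  intro a ha b hb hab
  rw [Finset.mem_insert] at ha hb
  rcases ha with rfl | ha <;> rcases hb with rfl | hb
  · exact absurd rfl hab
  · exact hv b hb
  · exact (hv a ha).symm
  · exact h a ha b hb hab

/-- A vertex that cannot be added to a maximum clique of `S` has a non-neighbour in it. -/
lemma dg_lt_of_max {S H : Finset V} {v : V} (hHS : H ⊆ S) (hc : Clq G H)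
    (hmax : ∀ H' ⊆ S, Clq G H' → H'.card ≤ H.card) (hv : v ∈ S) (hvH : v ∉ H) :
    dg G H v < H.card := by
  by_contra hcon
  have heq : H.filter (G.Adj v) = H :=
    Finset.eq_of_subset_of_card_le (Finset.filter_subset _ _) (by unfold dg at hcon; omega)
  have := hmax (Insert.insert v H) (Finset.insert_subset hv hHS) (hc.insert fun a ha => by
    rw [← heq, Finset.mem_filter] at ha
    exact ha.2)
  rw [Finset.card_insert_of_notMem hvH] at this
  omega

/-- A clique has paths of all orders from `1` to `|H|` ending at a given vertex. -/
lemma Clq.pth {H : Finset V} {t : V} {n : ℕ} (h : Clq G H) (ht : t ∈ H) (hn : n + 1 ≤ H.card) :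
    ∃ u ∈ H, Pth G H (n + 1) u t := by
  suffices h' : ∃ u ∈ H, Pth G H (n + 1) t u by
    obtain ⟨u, hu, hp⟩ := h'
    exact ⟨u, hu, hp.symm⟩
  induction n generalizing H t with
  | zero => exact ⟨t, ht, .single ht⟩
  | succ n ih =>
    have hc : (H.erase t).card = H.card - 1 := Finset.card_erase_of_mem ht
    obtain ⟨s, hs⟩ := Finset.card_pos.1 (show 0 < (H.erase t).card by omega)
    obtain ⟨u, hu, hp⟩ := ih (h.mono (Finset.erase_subset _ _)) hs (by omega)
    have hs' := Finset.mem_erase.1 hs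
    exact ⟨u, Finset.mem_of_mem_erase hu, .cons ht (h t ht s hs'.2 hs'.1.symm) hp⟩

lemma Clq.fam {H X : Finset V} (h : Clq G H) (hX : H ⊆ X) : Fam G H X H (H.card - 1) := by
  refine ⟨1, 1, .inl rfl, fun t ht i hi => ?_⟩
  have := Finset.card_pos.2 ⟨t, ht⟩
  obtain ⟨u, hu, hp⟩ := h.pth ht (show i + 1 ≤ H.card by omega)
  exact ⟨u, hX hu, by rwa [one_mul, add_comm]⟩

lemma dg_eq_zero_of_indep {X S : Finset V} {W : Finset V} {v : V}
    (hX : ∀ a ∈ W, a ∈ X → ∀ b ∈ W, b ∈ X → ¬ G.Adj a b) (hS : ∀ s ∈ S, s ∈ W ∧ s ∈ X)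
    (hv : v ∈ W) (hvX : v ∈ X) : dg G S v = 0 :=
  dg_eq_zero fun hn => by
    obtain ⟨t, ht, ha⟩ := mem_nb.1 hn
    exact hX v hv hvX t (hS t ht).1 (hS t ht).2 ha

/-- The case where `X` contains an edge: `H` is a maximum clique in `X`.  A vertex of `X` outside `H`
misses some vertex of `H`, so deleting `H` costs it no more than the index gained. -/
lemma Irred.adm_of_edge {W X Y : Finset V} {K : ℕ} (h : Irred G W X Y) (ih : Below G W)
    (hK : 2 ≤ K) (hdeg : ∀ v ∈ W, K + 2 ≤ dg G W v + ind X v + ind Y v)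
    (hX : ∃ a ∈ W, a ∈ X ∧ ∃ b ∈ W, b ∈ X ∧ G.Adj a b)
    (hY : (∀ a ∈ W, a ∈ Y → ∀ b ∈ W, b ∈ Y → ¬ G.Adj a b) ∨ (X ∩ W).card ≤ (Y ∩ W).card) :
    Adm G W X Y K := by
  obtain ⟨H, hHS, hc, hmax⟩ := exists_max_clique (G := G) (X ∩ W)
  have hHW : H ⊆ W := hHS.trans Finset.inter_subset_right
  have hHX : H ⊆ X := hHS.trans Finset.inter_subset_left
  have hH2 : 2 ≤ H.card := by
    obtain ⟨a, ha, haX, b, hb, hbX, hab⟩ := hX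
    have h1 : Clq G {a, b} := by
      intro x hx y hy hxy
      simp only [Finset.mem_insert, Finset.mem_singleton] at hx hy
      rcases hx with rfl | rfl <;> rcases hy with rfl | rfl
      exacts [absurd rfl hxy, hab, hab.symm, absurd rfl hxy]
    have h2 := hmax {a, b} (by
      intro x hx
      simp only [Finset.mem_insert, Finset.mem_singleton] at hx
      rcases hx with rfl | rfl <;> simp [*]) h1
    rwa [Finset.card_pair hab.ne] at h2
  have hHne : H.Nonempty := Finset.card_pos.1 (by omega)
  by_cases hYH : ∃ y ∈ W \ H, y ∈ Y
  · refine h.engine ih hdeg hHW hHne (T := H) (A := ∅) (δ := 1) (by simp) (hc.fam hHX) fam_empty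
      hYH ?_ ?_
    · intro v hv
      rw [Finset.mem_sdiff] at hv
      have h1 := ind_le_one (X := X) (v := v)
      by_cases hvH : v ∈ nb G H
      · rw [ind_of_mem hvH]
        by_cases hvX : v ∈ X
        · have := dg_lt_of_max hHS hc hmax (by simp [hv, hvX]) hv.2
          omega
        · rw [ind_of_not_mem hvX]
          have : dg G H v ≤ H.card := dg_le_card
          omega
      · rw [dg_eq_zero hvH]
        omega
    · intro v hv hvH
      rw [dg_eq_zero hvH]
      have h1 := ind_le_one (X := X) (v := v)
      omega
  · -- If `Y` lies in `H`, then `X`, `Y` and `H` agree inside `W`, and one vertex `u` of `H` is kept as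
    -- the end of all paths.
    push Not at hYH
    have hYH' : Y ∩ W ⊆ H := fun y hy => by
      rw [Finset.mem_inter] at hy
      by_contra hyH
      exact hYH y (by simp [hy, hyH]) hy.1
    have hle : (X ∩ W).card ≤ (Y ∩ W).card := by
      refine hY.resolve_left fun hY => ?_
      obtain ⟨y, hy, y', hy', hne⟩ := Finset.one_lt_card.1 (h.two_le_card hK hdeg)
      have h1 := hc y (hYH' hy) y' (hYH' hy') hne
      rw [Finset.mem_inter] at hy hy'
      exact hY y hy.2 hy.1 y' hy'.2 hy'.1 h1
    have hYX : Y ∩ W = X ∩ W := Finset.eq_of_subset_of_card_le (hYH'.trans hHS) hle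
    have hHY : H = Y ∩ W := (hHS.trans hYX.symm.subset).antisymm hYH'
    obtain ⟨u, hu⟩ := hHne
    have huY : u ∈ Y := (Finset.mem_inter.1 (hHY ▸ hu)).1
    by_cases hKl : K ≤ H.card - 1
    · exact (((hc.fam hHX).mono subset_rfl (Finset.singleton_subset_iff.2 hu) le_rfl).adm
        huY).mono hHW hKl
    · have hc1 : (H.erase u).card = H.card - 1 := Finset.card_erase_of_mem hu
      have hle1 : ∀ v, dg G (H.erase u) v ≤ (H.erase u).card := fun v => dg_le_card
      refine h.engine_nb ih hdeg (H := H.erase u) (T := H.erase u) (A := ∅) (δ := 0) (u := u)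
        ((Finset.erase_subset _ _).trans hHW) (Finset.card_pos.1 (by omega)) (by simp)
        ((hc.mono (Finset.erase_subset _ _)).fam ((Finset.erase_subset _ _).trans hHX)) fam_empty
        (hHW hu) huY (by simp) ?_ ?_ ?_ ?_ ?_
      · intro x hx hxX
        rw [Finset.insert_erase hu, hHY, hYX]
        simp [hx, hxX]
      · intro x hx hxX
        rw [Finset.insert_erase hu, hHY]
        simp [hx, hxX]
      · have := hle1 u
        omega
      · intro v hv
        by_cases hvH : v ∈ nb G (H.erase u)
        · rw [ind_of_mem hvH]
          have := hle1 v
          omega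
        · rw [dg_eq_zero hvH]
          omega
      · intro v hv hvH
        rw [dg_eq_zero hvH]
        omega

/-- The case where `X` and `Y` are independent and some edge `z w` has two common neighbours `a`, `b`
in `X`: `H` consists of `a`, `b` and a maximum clique `B` among their common neighbours. -/
lemma Irred.adm_of_diamond {W X Y : Finset V} {K : ℕ} (h : Irred G W X Y) (ih : Below G W)
    (hK : 2 ≤ K) (hdeg : ∀ v ∈ W, K + 2 ≤ dg G W v + ind X v + ind Y v)
    (hX : ∀ a ∈ W, a ∈ X → ∀ b ∈ W, b ∈ X → ¬ G.Adj a b)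
    (hY : ∀ a ∈ W, a ∈ Y → ∀ b ∈ W, b ∈ Y → ¬ G.Adj a b)
    (hle : (X ∩ W).card ≤ (Y ∩ W).card) {a b : V} (ha : a ∈ W) (haX : a ∈ X) (hb : b ∈ W)
    (hbX : b ∈ X) (hab : a ≠ b) {z w : V} (hz : z ∈ W) (hw : w ∈ W) (hzw : G.Adj z w)
    (hza : G.Adj z a) (hzb : G.Adj z b) (hwa : G.Adj w a) (hwb : G.Adj w b) : Adm G W X Y K := by
  obtain ⟨B, hBS, hc, hmax⟩ := exists_max_clique (G := G)
    (W.filter fun v => G.Adj v a ∧ G.Adj v b)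
  have hBmem : ∀ v ∈ B, v ∈ W ∧ G.Adj v a ∧ G.Adj v b := fun v hv => by
    simpa using hBS hv
  have hB2 : 2 ≤ B.card := by
    have h1 : Clq G {z, w} := by
      intro x hx y hy hxy
      simp only [Finset.mem_insert, Finset.mem_singleton] at hx hy
      rcases hx with rfl | rfl <;> rcases hy with rfl | rfl
      exacts [absurd rfl hxy, hzw, hzw.symm, absurd rfl hxy]
    have h2 := hmax {z, w} (by
      intro x hx
      simp only [Finset.mem_insert, Finset.mem_singleton] at hx
      rcases hx with rfl | rfl <;> simp [*]) h1
    rwa [Finset.card_pair hzw.ne] at h2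
  have hBX : ∀ v ∈ B, v ∉ X := fun v hv hvX => hX v (hBmem v hv).1 hvX a ha haX (hBmem v hv).2.1
  have haB : a ∉ B := fun h => hBX a h haX
  have hbB : b ∉ B := fun h => hBX b h hbX
  set H : Finset V := {a, b} ∪ B with hHdef
  have hHW : H ⊆ W := by
    intro x hx
    simp only [hHdef, Finset.mem_union, Finset.mem_insert, Finset.mem_singleton] at hx
    rcases hx with (rfl | rfl) | hx
    exacts [ha, hb, (hBmem x hx).1]
  -- Paths from `a` to a vertex of `B` of every order from `2` to `|B| + 2`; the longest begins with
  -- the detour `a`, `s`, `b`, where `s ∈ B`.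
  have hFB : Fam G H X B B.card := by
    refine ⟨2, 1, .inl rfl, fun t ht i hi => ⟨a, haX, ?_⟩⟩
    rcases hi.lt_or_eq with hi | rfl
    · obtain ⟨s, hs, hp⟩ := hc.pth ht (show i + 1 ≤ B.card by omega)
      rw [show 2 + 1 * i = i + 1 + 1 by omega]
      refine .cons (by simp [hHdef]) (hBmem s hs).2.1.symm (hp.mono fun x hx => ?_)
      rw [Finset.mem_erase]
      exact ⟨fun h => haB (h ▸ hx), by simp [hHdef, hx]⟩
    · have hc1 : (B.erase t).card = B.card - 1 := Finset.card_erase_of_mem ht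
      obtain ⟨s, hs⟩ := Finset.card_pos.1 (show 0 < (B.erase t).card by omega)
      rw [Finset.mem_erase] at hs
      have hc2 : (B.erase s).card = B.card - 1 := Finset.card_erase_of_mem hs.2
      obtain ⟨r, hr, hp⟩ := (hc.mono (Finset.erase_subset s B)).pth (n := B.card - 2)
        (t := t) (by simp [ht, hs.1.symm]) (by omega)
      rw [Finset.mem_erase] at hr
      rw [show 2 + 1 * B.card = B.card - 2 + 1 + 1 + 1 + 1 by omega]
      have hsa : s ≠ a := fun h => haB (h ▸ hs.2)
      have hsb : s ≠ b := fun h => hbB (h ▸ hs.2)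
      refine .cons (w := s) (by simp [hHdef]) (hBmem s hs.2).2.1.symm
        (.cons (w := b) (by simp [hHdef, hs.2, hsa]) (hBmem s hs.2).2.2
        (.cons (w := r) (by simp [hHdef, hab.symm, hsb.symm]) (hBmem r hr.2).2.2.symm
          (hp.mono fun x hx => ?_)))
      rw [Finset.mem_erase] at hx
      have h1 : x ≠ a := fun h => haB (h ▸ hx.2)
      have h2 : x ≠ b := fun h => hbB (h ▸ hx.2)
      simp [hHdef, hx, h1, h2]
  -- Paths between `a` and `b` through one or two vertices of `B`.
  have hFA : Fam G H X {a, b} 1 := by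
    obtain ⟨s, hs, s', hs', hss⟩ := Finset.one_lt_card.1 (show 1 < B.card by omega)
    have hadj := hc s hs s' hs' hss
    have hsH : s ∈ H := by simp [hHdef, hs]
    have hsH' : s' ∈ H := by simp [hHdef, hs']
    have key : ∀ p q : V, p ∈ H → q ∈ H → p ≠ q → p ∉ B → q ∉ B → G.Adj s p →
        G.Adj s q → G.Adj s' q → ∀ i ≤ 1, Pth G H (3 + 1 * i) p q := by
      intro p q hp hq hpq hpB hqB h1 h2 h3 i hi
      have e1 : s ≠ p := fun h => hpB (h ▸ hs)
      have e2 : s' ≠ p := fun h => hpB (h ▸ hs')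
      have e3 : s ≠ q := fun h => hqB (h ▸ hs)
      have e4 : s' ≠ q := fun h => hqB (h ▸ hs')
      obtain rfl | rfl : i = 0 ∨ i = 1 := by omega
      · exact .cons hp h1.symm (.cons (by simp [hsH, e1]) h2 (.single (by
          simp [hq, hpq.symm, e3.symm])))
      · exact .cons hp h1.symm (.cons (by simp [hsH, e1]) hadj (.cons (by
          simp [hsH', e2, hss.symm]) h3 (.single (by
          simp [hq, hpq.symm, e3.symm, e4.symm]))))
    have haH : a ∈ H := by simp [hHdef]
    have hbH : b ∈ H := by simp [hHdef]
    refine ⟨3, 1, .inl rfl, fun t ht i hi => ?_⟩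
    rw [Finset.mem_insert, Finset.mem_singleton] at ht
    rcases ht with rfl | rfl
    · exact ⟨b, hbX, key b t hbH haH hab.symm hbB haB (hBmem s hs).2.2 (hBmem s hs).2.1
        (hBmem s' hs').2.1 i hi⟩
    · exact ⟨a, haX, key a t haH hbH hab haB hbB (hBmem s hs).2.1 (hBmem s hs).2.2
        (hBmem s' hs').2.2 i hi⟩
  have hsplit : ∀ v, dg G H v ≤ dg G {a, b} v + dg G B v := fun v => dg_le_add subset_rfl
  have hab2 : ∀ v, dg G {a, b} v ≤ 2 := fun v => dg_le_card.trans (Finset.card_le_two)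
  have habX : ∀ v ∈ W, v ∈ X → dg G {a, b} v = 0 := fun v hv hvX =>
    dg_eq_zero_of_indep hX (by
      intro s hs
      rw [Finset.mem_insert, Finset.mem_singleton] at hs
      rcases hs with rfl | rfl <;> constructor <;> assumption) hv hvX
  by_cases hYH : ∃ y ∈ W \ H, y ∈ Y
  · refine h.engine ih hdeg hHW ⟨a, by simp [hHdef]⟩ (T := B) (A := {a, b})
      (by rw [Finset.union_comm]) hFB hFA hYH ?_ ?_
    · intro v hv
      have hvW := (Finset.mem_sdiff.1 hv).1
      have hvB : v ∉ B := fun h => (Finset.mem_sdiff.1 hv).2 (by simp [hHdef, h])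
      have h1 := hsplit v
      have h2 := hab2 v
      have h3 : dg G B v ≤ B.card := dg_le_card
      have h3' := ind_le_one (X := X) (v := v)
      by_cases hvn : v ∈ nb G B
      · rw [ind_of_mem hvn]
        by_cases hvX : v ∈ X
        · have := habX v hvW hvX
          omega
        · rw [ind_of_not_mem hvX]
          by_cases hfull : dg G {a, b} v = 2
          · have heq : ({a, b} : Finset V).filter (G.Adj v) = {a, b} :=
              Finset.eq_of_subset_of_card_le (Finset.filter_subset _ _)
                (by unfold dg at hfull; rw [hfull]; exact Finset.card_le_two)
            have hva : a ∈ ({a, b} : Finset V).filter (G.Adj v) := by rw [heq]; simp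
            have hvb : b ∈ ({a, b} : Finset V).filter (G.Adj v) := by rw [heq]; simp
            rw [Finset.mem_filter] at hva hvb
            have := dg_lt_of_max hBS hc hmax (by simp [hvW, hva.2, hvb.2]) hvB
            omega
          · omega
      · have h4 := dg_eq_zero hvn
        by_cases hvX : v ∈ X
        · have := habX v hvW hvX
          omega
        · rw [ind_of_not_mem hvX]
          omega
    · intro v hv hvn
      have hvW := (Finset.mem_sdiff.1 hv).1
      have h1 := hsplit v
      have h2 := hab2 v
      have h3' := ind_le_one (X := X) (v := v)
      have h4 := dg_eq_zero hvn
      by_cases hvX : v ∈ X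
      · have := habX v hvW hvX
        omega
      · rw [ind_of_not_mem hvX]
        by_cases hva : v ∈ nb G {a, b}
        · rw [ind_of_mem hva]
          omega
        · have := dg_eq_zero hva
          omega
  · -- Then `Y` is an independent subset of `H` with at least two vertices, i.e. `Y = {a, b} = X`.
    push Not at hYH
    have hYH' : ∀ y ∈ W, y ∈ Y → y ∈ H := fun y hy hyY => by
      by_contra hyH
      exact hYH y (by simp [hy, hyH]) hyY
    obtain ⟨y, hy, y', hy', hne⟩ := Finset.one_lt_card.1 (h.two_le_card hK hdeg)
    rw [Finset.mem_inter] at hy hy'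
    have hYB : ∀ y ∈ W, y ∈ Y → y ∉ B := by
      have key : ∀ p ∈ W, p ∈ Y → ∀ q ∈ W, q ∈ Y → p ≠ q → p ∉ B := by
        intro p hp hpY q hq hqY hpq hpB
        have hqH := hYH' q hq hqY
        simp only [hHdef, Finset.mem_union, Finset.mem_insert, Finset.mem_singleton] at hqH
        refine hY p hp hpY q hq hqY ?_
        rcases hqH with (rfl | rfl) | hqB
        · exact (hBmem p hpB).2.1
        · exact (hBmem p hpB).2.2
        · exact hc p hpB q hqB hpq
      intro p hp hpY
      by_cases hpy : p = y
      · exact key p hp hpY y' hy'.2 hy'.1 (hpy ▸ hne)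
      · exact key p hp hpY y hy.2 hy.1 hpy
    have hYab : Y ∩ W ⊆ {a, b} := fun p hp => by
      rw [Finset.mem_inter] at hp
      have h1 := hYH' p hp.2 hp.1
      rw [hHdef, Finset.mem_union] at h1
      exact h1.resolve_right (hYB p hp.2 hp.1)
    have hc2 := h.two_le_card hK hdeg
    have hYeq : Y ∩ W = {a, b} := Finset.eq_of_subset_of_card_le hYab
      (Finset.card_le_two.trans hc2)
    have hXeq : ({a, b} : Finset V) = X ∩ W := Finset.eq_of_subset_of_card_le (by
        intro x hx
        rw [Finset.mem_insert, Finset.mem_singleton] at hx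
        rcases hx with rfl | rfl <;> simp [*]) (by rw [← hYeq]; exact hle)
    have hbY : b ∈ Y := by
      have : b ∈ Y ∩ W := by rw [hYeq]; simp
      exact (Finset.mem_inter.1 this).1
    refine h.engine_nb ih hdeg (H := {a}) (T := {a}) (A := ∅) (ℓ := 0) (δ := 0) (u := b)
      (by simpa) (by simp) (by simp) (fam_self (by simpa)) fam_empty hb hbY
      (by simpa using hab.symm) ?_ ?_ ?_ ?_ ?_
    · intro x hx hxX
      rw [Finset.pair_comm, hXeq]
      simp [hx, hxX]
    · intro x hx hxX
      rw [Finset.pair_comm, ← hYeq]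
      simp [hx, hxX]
    · have : dg G {a} b ≤ 1 := dg_le_card
      omega
    · intro v _
      rw [dg_singleton]
      omega
    · intro v _ hv
      rw [dg_eq_zero hv]
      omega

/-! ### Stars -/

/-- If `D` misses `Y` and its neighbours outside `D` are among `c` and `z`, then there are two
admissible paths from `Y` to `c` outside `D`.  They come from `adm_one_exceptional`, the exceptional
vertex being one that replaces `z` after shrinking the complement of `D`. -/
lemma Irred.fam_outside {W X Y D : Finset V} {c z : V} (h : Irred G W X Y)
    (hdeg : ∀ v ∈ W, 3 ≤ dg G W v + ind Y v) (hD : D ⊆ W) (hDn : D.Nonempty) (hc : c ∈ W)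
    (hcD : c ∉ D) (hz : z ∈ W) (hzD : z ∉ D) (hzc : z ≠ c)
    (hnb : ∀ d ∈ D, ∀ v ∈ W, G.Adj d v → v ∈ D ∨ v = z ∨ v = c) (hDY : ∀ d ∈ D, d ∉ Y)
    (hbig : ∃ t ∈ W, t ≠ z ∧ t ≠ c ∧ t ∉ D) : Fam G (W \ D) Y {c} 1 := by
  set W₂ := (W \ D).erase c with hW₂
  have hW₂mem : ∀ v, v ∈ W₂ ↔ v ∈ W ∧ v ∉ D ∧ v ≠ c := by
    intro v
    simp only [hW₂, Finset.mem_erase, Finset.mem_sdiff]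
    tauto
  -- Choose a vertex `e` cutting off as large a part `F` as possible that misses `Y` and the
  -- neighbours of `c`, with `z ∈ F ∪ {e}`.
  let P : Finset V → V → Prop := fun F e => e ∈ W₂ ∧ e ∉ F ∧ (z = e ∨ z ∈ F) ∧
    Cl G F (W₂.erase e) ∧ ∀ f ∈ F, f ∉ nb G {c} ∧ f ∉ Y
  obtain ⟨F, hF, hFmax⟩ := Finset.exists_max_image
    (W₂.powerset.filter fun F => ∃ e, P F e) Finset.card ⟨∅, by
      simp only [Finset.mem_filter, Finset.mem_powerset, Finset.empty_subset, true_and]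
      exact ⟨z, (hW₂mem z).2 ⟨hz, hzD, hzc⟩, by simp, .inl rfl, fun u hu => by simp at hu,
        fun f hf => by simp at hf⟩⟩
  simp only [Finset.mem_filter, Finset.mem_powerset] at hF hFmax
  obtain ⟨hFW, e, heW, heF, hze, hFcl, hFno⟩ := hF
  have heW' := (hW₂mem e).1 heW
  set U := W₂ \ F with hU
  have hUmem : ∀ v, v ∈ U ↔ v ∈ W ∧ v ∉ D ∧ v ≠ c ∧ v ∉ F := by
    intro v
    simp only [hU, Finset.mem_sdiff, hW₂mem]
    tauto
  have heU : e ∈ U := (hUmem e).2 ⟨heW'.1, heW'.2.1, heW'.2.2, heF⟩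
  have hUW : U ⊆ W := fun v hv => ((hUmem v).1 hv).1
  have hFW' : F ⊆ W := fun v hv => ((hW₂mem v).1 (hFW hv)).1
  have hzU : ∀ v ∈ U, v ≠ e → v ≠ z := by
    rintro v hv hve rfl
    exact hze.elim hve ((hUmem v).1 hv).2.2.2
  have hFU : ∀ f ∈ F, ∀ v ∈ U, G.Adj f v → v = e := fun f hf v hv ha => by
    by_contra hve
    have hv' := (hUmem v).1 hv
    exact hv'.2.2.2 (hFcl f hf v (Finset.mem_erase.2 ⟨hve, (hW₂mem v).2 ⟨hv'.1, hv'.2.1,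
      hv'.2.2.1⟩⟩) ha)
  have hDU : ∀ d ∈ D, ∀ v ∈ U, G.Adj d v → v = e := fun d hd v hv ha => by
    by_contra hve
    have hv' := (hUmem v).1 hv
    rcases hnb d hd v hv'.1 ha with h1 | h1 | h1
    exacts [hv'.2.1 h1, hzU v hv hve h1, hv'.2.2.1 h1]
  have hcases : ∀ v ∈ W, v = c ∨ v ∈ D ∨ v ∈ F ∨ v ∈ U := fun v hv => by
    rw [hUmem]
    tauto
  -- Parts of `U` avoiding `e` have no neighbours outside `U` except `c`.
  have hclU : ∀ E ⊆ U, e ∉ E → ∀ u ∈ E, ∀ v ∈ W, v ≠ c → G.Adj u v → v ∈ U := by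
    intro E hE heE u hu v hv hvc ha
    rcases hcases v hv with h1 | h1 | h1 | h1
    · exact absurd h1 hvc
    · exact absurd (hDU v h1 u (hE hu) ha.symm ▸ hu) heE
    · exact absurd (hFU v h1 u (hE hu) ha.symm ▸ hu) heE
    · exact h1
  have hdiff : ∀ E ⊆ U, E.Nonempty → Cl G E U → e ∈ E := by
    intro E hE hn hcl
    by_contra heE
    have := h.cut c hc E (fun x hx => Finset.mem_erase.2
      ⟨((hUmem x).1 (hE hx)).2.2.1, hUW (hE hx)⟩) hn (fun u hu v hv ha => by
        rw [Finset.mem_erase] at hv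
        exact hcl u hu v (hclU E hE heE u hu v hv.2 hv.1 ha) ha)
    obtain ⟨d, hd⟩ := hDn
    have hdE : d ∈ E := by
      rw [this, Finset.mem_erase]
      exact ⟨fun h => hcD (h ▸ hd), hD hd⟩
    exact ((hUmem d).1 (hE hdE)).2.1 hd
  have hwhole : ∀ E ⊆ U, E.Nonempty → Cl G E U → E ∪ F ∪ D = W.erase c := by
    intro E hE hn hcl
    have heE := hdiff E hE hn hcl
    refine h.cut c hc _ ?_ ⟨e, by simp [heE]⟩ ?_
    · intro x hx
      rw [Finset.mem_union, Finset.mem_union] at hx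
      rw [Finset.mem_erase]
      rcases hx with (hx | hx) | hx
      · exact ⟨((hUmem x).1 (hE hx)).2.2.1, hUW (hE hx)⟩
      · exact ⟨((hW₂mem x).1 (hFW hx)).2.2, hFW' hx⟩
      · exact ⟨fun h => hcD (h ▸ hx), hD hx⟩
    · intro u hu v hv ha
      rw [Finset.mem_erase] at hv
      simp only [Finset.mem_union] at hu ⊢
      rcases hcases v hv.2 with h1 | h1 | h1 | h1
      · exact absurd h1 hv.1
      · exact .inr h1
      · exact .inl (.inr h1)
      · left; left
        rcases hu with (hu | hu) | hu
        · exact hcl u hu v h1 ha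
        · exact hFU u hu v h1 ha ▸ heE
        · exact hDU u hu v h1 ha ▸ heE
  have hg : Good G U (nb G {c}) Y := by
    refine ⟨⟨e, heU⟩, ?_, ?_, ?_⟩
    · intro E hE hn hcl
      by_contra hcon
      push Not at hcon
      have hEq := hwhole E hE hn hcl
      have := h.cut z hz (insert c D) (fun x hx => by
        rw [Finset.mem_insert] at hx
        rw [Finset.mem_erase]
        rcases hx with rfl | hx
        · exact ⟨hzc.symm, hc⟩
        · exact ⟨fun h => hzD (h ▸ hx), hD hx⟩) (by simp) (by
        intro u hu v hv ha
        rw [Finset.mem_erase] at hv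
        rw [Finset.mem_insert] at hu ⊢
        by_cases hvc : v = c
        · exact .inl hvc
        right
        rcases hu with rfl | hu
        · have hvE : v ∈ E ∪ F ∪ D := by rw [hEq]; simp [hvc, hv]
          simp only [Finset.mem_union] at hvE
          rcases hvE with (h1 | h1) | h1
          · exact absurd (mem_nb_one.2 ha.symm) (hcon v h1)
          · exact absurd (mem_nb_one.2 ha.symm) (hFno v h1).1
          · exact h1
        · rcases hnb u hu v hv.2 ha with h1 | h1 | h1
          · exact h1
          · exact absurd h1 hv.1
          · exact absurd h1 hvc)
      obtain ⟨t, ht, htz, htc, htD⟩ := hbig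
      have h1 : t ∈ insert c D := by rw [this]; simp [ht, htz]
      rw [Finset.mem_insert] at h1
      exact h1.elim htc htD
    · intro E hE hn hcl
      have hEq := hwhole E hE hn hcl
      obtain ⟨y, hy, hyY⟩ := h.cutY c hc _ subset_rfl ⟨e, by simp [heW']⟩ (fun _ _ v hv _ => hv)
      rw [← hEq] at hy
      simp only [Finset.mem_union] at hy
      rcases hy with (h1 | h1) | h1
      · exact ⟨y, h1, hyY⟩
      · exact absurd hyY (hFno y h1).2
      · exact absurd hyY (hDY y h1)
    · intro w hw E hE hn hcl
      by_contra hcon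
      push Not at hcon
      have hEU : E ⊆ U := hE.trans (Finset.erase_subset _ _)
      by_cases heE : e ∈ E
      · have hwU := (hUmem w).1 hw
        have hEdis : Disjoint E F := Finset.disjoint_left.2 fun x hx hxF =>
          ((hUmem x).1 (hEU hx)).2.2.2 hxF
        have := hFmax (E ∪ F) ⟨Finset.union_subset (hEU.trans Finset.sdiff_subset) hFW, w,
          (hW₂mem w).2 ⟨hwU.1, hwU.2.1, hwU.2.2.1⟩, ?_, ?_, ?_, ?_⟩
        · rw [Finset.card_union_of_disjoint hEdis] at this
          have := Finset.card_pos.2 hn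
          omega
        · rw [Finset.mem_union]
          rintro (h1 | h1)
          · simpa using hE h1
          · exact hwU.2.2.2 h1
        · right
          rw [Finset.mem_union]
          rcases hze with h1 | h1
          · exact .inl (h1 ▸ heE)
          · exact .inr h1
        · intro u hu v hv ha
          rw [Finset.mem_erase, hW₂mem] at hv
          rw [Finset.mem_union] at hu ⊢
          by_cases hvF : v ∈ F
          · exact .inr hvF
          left
          have hvU := (hUmem v).2 ⟨hv.2.1, hv.2.2.1, hv.2.2.2, hvF⟩
          rcases hu with hu | hu
          · exact hcl u hu v (Finset.mem_erase.2 ⟨hv.1, hvU⟩) ha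
          · exact hFU u hu v hvU ha ▸ heE
        · intro f hf
          exact (Finset.mem_union.1 hf).elim (hcon f) (hFno f)
      · obtain ⟨y, hy, hyY⟩ := h.cutY w (hUW hw) E (hE.trans (Finset.erase_subset_erase _ hUW)) hn
          (fun u hu v hv ha => by
            rw [Finset.mem_erase] at hv
            by_cases hvc : v = c
            · subst hvc
              exact absurd (mem_nb_one.2 ha) (hcon u hu).1
            · exact hcl u hu v (Finset.mem_erase.2 ⟨hv.1, hclU E hEU heE u hu v hv.2 hvc ha⟩) ha)
        exact (hcon y hy).2 hyY
  by_cases hex : ∃ v ∈ U, v ≠ e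
  · have hA := adm_one_exceptional U _ _ e hg (fun v hv hve => by
      have h1 := hdeg v (hUW hv)
      have h2 := dg_closed (G := G) (D := U) (U := U) (S := {c} ∪ (F ∪ D)) (W := W)
        (fun _ _ v hv _ => hv) hv (fun x hx => by
          simp only [Finset.mem_union, Finset.mem_singleton]
          have := hcases x hx
          tauto)
      have h3 : dg G ({c} ∪ (F ∪ D)) v ≤ dg G {c} v + dg G (F ∪ D) v := dg_le_add subset_rfl
      have h4 : dg G (F ∪ D) v = 0 := dg_eq_zero fun hn => by
        obtain ⟨t, ht, ha⟩ := mem_nb.1 hn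
        rw [Finset.mem_union] at ht
        rcases ht with ht | ht
        · exact hve (hFU t ht v hv ha.symm)
        · exact hve (hDU t ht v hv ha.symm)
      rw [dg_singleton] at h3
      omega) hex
    refine (hA.symm.to_fam fun hc' => ((hUmem c).1 hc').2.2.1 rfl).mono ?_ subset_rfl le_rfl
    intro x hx
    rw [Finset.mem_insert] at hx
    rw [Finset.mem_sdiff]
    rcases hx with rfl | hx
    · exact ⟨hc, hcD⟩
    · exact ⟨hUW hx, ((hUmem x).1 hx).2.1⟩
  · push Not at hex
    obtain ⟨y, hy, hyY⟩ := hg.hitY U subset_rfl ⟨e, heU⟩ (fun _ _ v hv _ => hv)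
    obtain ⟨x, hx, hxc⟩ := hg.hitX U subset_rfl ⟨e, heU⟩ (fun _ _ v hv _ => hv)
    obtain rfl := hex y hy
    obtain rfl := hex x hx
    rw [mem_nb_one] at hxc
    have hcY : c ∈ Y := by
      obtain ⟨y, hy, hyY'⟩ := h.cutY x heW'.1 _ subset_rfl ⟨c, by simp [hc, heW'.2.2.symm]⟩
        (fun _ _ v hv _ => hv)
      rw [Finset.mem_erase] at hy
      rcases hcases y hy.2 with h1 | h1 | h1 | h1
      · exact h1 ▸ hyY'
      · exact absurd hyY' (hDY y h1)
      · exact absurd hyY' (hFno y h1).2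
      · exact absurd (hex y h1) hy.1
    have hcm : c ∈ W \ D := by simp [hc, hcD]
    refine ⟨1, 1, .inl rfl, fun a ha i hi => ?_⟩
    rw [Finset.mem_singleton] at ha
    subst ha
    obtain rfl | rfl : i = 0 ∨ i = 1 := by omega
    · exact ⟨a, hcY, .single hcm⟩
    · exact ⟨x, hyY, Pth.pair (by simp [heW']) hcm hxc⟩

/-- The case where the complete bipartite graph `H` is a star with centre `z` and leaves `T`.  The
fallback family ending at `z` has index `0`, which is not enough for vertices of `X`.  So suppose the
part `D` that misses `N(T)` and is cut off from `Y` by `c` has all its subparts meeting `X`: then `D`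
itself is crossed from `X` to `c` with index `K - 1`, and `Irred.fam_outside` adds `1`. -/
lemma Irred.adm_of_star {W X Y H T : Finset V} {K : ℕ} {z : V} (h : Irred G W X Y)
    (ih : Below G W) (hK : 2 ≤ K) (hdeg : ∀ v ∈ W, K + 2 ≤ dg G W v + ind X v + ind Y v)
    (hz : z ∈ W) (hTW : T ⊆ W) (hTn : T.Nonempty) (hzT : z ∉ T) (hH : H = {z} ∪ T)
    (hFT : Fam G H X T 1) (hFz : Fam G H X {z} 0) (hYH : ∃ y ∈ W \ H, y ∈ Y)
    (hl : ∀ v ∈ W \ H, dg G H v + ind X v ≤ ind (nb G T) v + 1) : Adm G W X Y K := by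
  have hHW : H ⊆ W := by
    rw [hH]
    exact Finset.union_subset (by simpa) hTW
  have hHn : H.Nonempty := ⟨z, by simp [hH]⟩
  have hd : ∀ v ∈ W, K + 2 ≤ dg G (W \ H) v + dg G H v + ind X v + ind Y v := fun v hv => by
    have h1 := hdeg v hv
    have h2 : dg G W v ≤ dg G (W \ H) v + dg G H v :=
      dg_le_add (by rw [Finset.sdiff_union_of_subset hHW])
    omega
  have hHv : ∀ v, dg G H v ≤ ind (nb G {z}) v + dg G T v := fun v => by
    rw [← dg_singleton]
    exact dg_le_add hH.subset
  set C := Reach G (W \ H) Y with hC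
  have hCR : C ⊆ W \ H := reach_subset
  have hCW : C ⊆ W := hCR.trans Finset.sdiff_subset
  have hCH : ∀ v ∈ C, v ∉ H := fun v hv => (Finset.mem_sdiff.1 (hCR hv)).2
  have hzH : z ∈ H := by simp [hH]
  have hpart := h.part_Y hHW hHn (T := T) (A := {z}) (by rw [hH, Finset.union_comm])
  by_cases hall : ∀ D ⊆ C, D.Nonempty → Part G C Y D → ∃ x ∈ D, x ∈ nb G T
  · obtain ⟨y, hy, hyY⟩ := hYH
    refine adm_through ih hHW Finset.sdiff_subset Finset.disjoint_sdiff hHn hFT subset_rfl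
      ⟨y, mem_reach hy hyY⟩ (.inl fun _ _ v hv _ => hv) hall (.inr fun v hv => ?_)
    have h1 := hd v (hCW hv)
    have h2 := hl v (hCR hv)
    omega
  · push Not at hall
    obtain ⟨D, hD, hDn, hp, hDT⟩ := hall
    have hDW : D ⊆ W := hD.trans hCW
    obtain ⟨t₀, ht₀⟩ := hTn
    have ht₀H : t₀ ∈ H := by simp [hH, ht₀]
    have ht₀z : t₀ ≠ z := fun h => hzT (h ▸ ht₀)
    have hnbC : ∀ d ∈ D, ∀ v ∈ W, G.Adj d v → v ∈ C ∨ v = z := by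
      intro d hd v hv ha
      by_cases hvH : v ∈ H
      · rw [hH, Finset.mem_union, Finset.mem_singleton] at hvH
        exact hvH.elim .inr fun hvT => absurd (mem_nb.2 ⟨v, hvT, ha⟩) (hDT d hd)
      · exact .inl (reach_closed d (hD hd) v (by simp [hv, hvH]) ha)
    rcases hp with hcl | ⟨c, hc, hDc, hcl, hDY⟩
    · have := h.cut z hz D (fun x hx => Finset.mem_erase.2
        ⟨fun h => hCH x (hD hx) (h ▸ hzH), hDW hx⟩) hDn (fun u hu v hv ha => by
          rw [Finset.mem_erase] at hv
          exact hcl u hu v ((hnbC u hu v hv.2 ha).resolve_right hv.1) ha)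
      have h1 : t₀ ∈ D := by rw [this]; simp [ht₀z, hTW ht₀]
      exact absurd ht₀H (hCH t₀ (hD h1))
    · have hcD : c ∉ D := fun h => by simpa using hDc h
      by_cases hex : ∃ D' ⊆ D, D'.Nonempty ∧ ∃ w ∈ C, D' ⊆ C.erase w ∧ Cl G D' (C.erase w) ∧
          ∀ x ∈ D', x ∉ X
      · obtain ⟨D', hD', hn', w, hw, hDw, hcl', hDX⟩ := hex
        refine adm_through ih hHW Finset.sdiff_subset Finset.disjoint_sdiff hHn hFz
          (hD'.trans hD) hn' (.inr ⟨w, hw, hDw, hcl', fun d hd => hDY d (hD' hd)⟩) ?_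
          (.inr fun v hv => ?_)
        · intro E hE hEn hEp
          obtain ⟨x, hx, hxx⟩ := hpart E (hE.trans (hD'.trans hD)) hEn hEp
          exact ⟨x, hx, hxx.resolve_left (hDT x (hD' (hE hx)))⟩
        · have h1 := hd v (hDW (hD' hv))
          have h2 := hHv v
          rw [dg_eq_zero (hDT v (hD' hv))] at h2
          rw [ind_of_not_mem (hDX v hv)] at h1
          omega
      · push Not at hex
        have hDlt : D.card < W.card := card_lt_of_not_mem hDW hz
          (fun h => hCH z (hD h) hzH)
        have hg : Good G D X (nb G {c}) := by
          refine ⟨hDn, ?_, ?_, ?_⟩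
          · intro E hE hn hcE
            exact hex E hE hn c hc (hE.trans hDc)
              (fun u hu v hv ha => hcE u hu v (hcl u (hE hu) v hv ha) ha)
          · intro E hE hn hcE
            by_contra hcon
            push Not at hcon
            obtain ⟨y, hy, hyY⟩ := reach_hits (hE.trans hD) hn (fun u hu v hv ha => by
              by_cases hvc : v = c
              · subst hvc
                exact absurd (mem_nb_one.2 ha) (hcon u hu)
              · exact hcE u hu v (hcl u (hE hu) v (Finset.mem_erase.2 ⟨hvc, hv⟩) ha) ha)
            exact hDY y (hE hy) hyY
          · intro w hw E hE hn hcE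
            by_contra hcon
            push Not at hcon
            obtain ⟨x, hx, hxX⟩ := hex E (hE.trans (Finset.erase_subset _ _)) hn w (hD hw)
              (hE.trans (Finset.erase_subset_erase _ hD)) (fun u hu v hv ha => by
                rw [Finset.mem_erase] at hv
                have huD := Finset.mem_of_mem_erase (hE hu)
                by_cases hvc : v = c
                · subst hvc
                  exact absurd (mem_nb_one.2 ha) (hcon u hu).2
                · exact hcE u hu v (Finset.mem_erase.2 ⟨hv.1,
                    hcl u huD v (Finset.mem_erase.2 ⟨hvc, hv.2⟩) ha⟩) ha)
            exact (hcon x hx).1 hxX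
        have hA : Adm G D X (nb G {c}) (K - 1) := by
          refine ih D _ _ (K - 1) hDlt hg (.inr fun v hv => ?_)
          have h1 := hd v (hDW hv)
          have h2 := hHv v
          rw [dg_eq_zero (hDT v hv)] at h2
          rw [ind_of_not_mem (hDY v hv)] at h1
          have h3 := ind_le_one (X := nb G {z}) (v := v)
          have h4 : dg G (W \ H) v ≤ dg G C v + dg G ∅ v :=
            dg_closed reach_closed (hD hv) (by simp)
          have h5 : dg G ∅ v = 0 := by simp [dg]
          have h6 := dg_cut hv hcl
          omega
        have hF : Fam G (W \ D) Y {c} 1 := by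
          refine h.fam_outside (z := z) (fun v hv => ?_) hDW hDn (hCW hc) hcD hz
            (fun h => hCH z (hD h) hzH) (fun h => hCH c hc (h ▸ hzH)) ?_ hDY
            ⟨t₀, hTW ht₀, ht₀z, fun h => hCH c hc (h ▸ ht₀H), fun h => hCH t₀ (hD h) ht₀H⟩
          · have h1 := hdeg v hv
            have h2 := ind_le_one (X := X) (v := v)
            omega
          · intro d hdD v hv ha
            rcases hnbC d hdD v hv ha with h1 | h1
            · by_cases hvc : v = c
              · exact .inr (.inr hvc)
              · exact .inl (hcl d hdD v (Finset.mem_erase.2 ⟨hvc, h1⟩) ha)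
            · exact .inr (.inl h1)
        exact (hF.comp hA.symm Finset.sdiff_disjoint).symm.mono
          (Finset.union_subset Finset.sdiff_subset hDW) (by omega)

/-! ### Complete bipartite graphs -/

/-- Paths in a complete bipartite graph with parts `S` and `T` that start and end in `T`. -/
lemma pth_bip : ∀ (i : ℕ) {S T : Finset V} {t : V}, Disjoint S T →
    (∀ s ∈ S, ∀ t ∈ T, G.Adj s t) → t ∈ T → i ≤ S.card → i + 1 ≤ T.card →
    ∃ u ∈ T, Pth G (S ∪ T) (1 + 2 * i) t u := by
  intro i
  induction i with
  | zero => exact fun {S T t} _ _ ht _ _ => ⟨t, ht, .single (by simp [ht])⟩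
  | succ i ih =>
    intro S T t hd hadj ht hS hT
    obtain ⟨s, hs⟩ := Finset.card_pos.1 (show 0 < S.card by omega)
    have hST := Finset.disjoint_left.1 hd
    have hTc := Finset.card_erase_of_mem ht
    have hSc := Finset.card_erase_of_mem hs
    obtain ⟨t', ht'⟩ := Finset.card_pos.1 (show 0 < (T.erase t).card by omega)
    have ht'2 := Finset.mem_erase.1 ht'
    obtain ⟨u, hu, hp⟩ := ih (S := S.erase s) (T := T.erase t) (t := t')
      (hd.mono (Finset.erase_subset _ _) (Finset.erase_subset _ _))
      (fun a ha b hb => hadj a (Finset.mem_of_mem_erase ha) b (Finset.mem_of_mem_erase hb)) ht'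
      (by omega) (by omega)
    refine ⟨u, Finset.mem_of_mem_erase hu, ?_⟩
    rw [show 1 + 2 * (i + 1) = (1 + 2 * i) + 1 + 1 by ring]
    refine .cons (by simp [ht]) (hadj s hs t ht).symm (.cons ?_ (hadj s hs t' ht'2.2) (hp.mono ?_))
    · simp [hs, (hadj s hs t ht).ne]
    · intro x hx
      simp only [Finset.mem_union, Finset.mem_erase] at hx ⊢
      rcases hx with hx | hx
      · exact ⟨hx.1, fun h => hST hx.2 (h ▸ ht), .inl hx.2⟩
      · exact ⟨fun h => hST hs (h ▸ hx.2), hx.1, .inr hx.2⟩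

lemma fam_bip_right {S T X : Finset V} {p : ℕ} (hd : Disjoint S T)
    (hadj : ∀ s ∈ S, ∀ t ∈ T, G.Adj s t) (hTX : T ⊆ X) (hS : p ≤ S.card) (hT : p + 1 ≤ T.card) :
    Fam G (S ∪ T) X T p :=
  ⟨1, 2, .inr rfl, fun _ ha i hi => by
    obtain ⟨u, hu, hp⟩ := pth_bip i hd hadj ha (by omega) (by omega)
    exact ⟨u, hTX hu, hp.symm⟩⟩

lemma fam_bip_left {S T X : Finset V} (hd : Disjoint S T)
    (hadj : ∀ s ∈ S, ∀ t ∈ T, G.Adj s t) (hTX : T ⊆ X) (hT : S.card ≤ T.card) :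
    Fam G (S ∪ T) X S (S.card - 1) :=
  ⟨2, 2, .inr rfl, fun s hs i hi => by
    have hpos := Finset.card_pos.2 ⟨s, hs⟩
    have hSc := Finset.card_erase_of_mem hs
    obtain ⟨t, ht⟩ := Finset.card_pos.1 (hpos.trans_le hT)
    obtain ⟨u, hu, hp⟩ := pth_bip i (S := S.erase s) (hd.mono_left (Finset.erase_subset _ _))
      (fun a ha => hadj a (Finset.mem_of_mem_erase ha)) ht (by omega) (by omega)
    refine ⟨u, hTX hu, ?_⟩
    rw [show 2 + 2 * i = 1 + 2 * i + 1 by ring]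
    refine (Pth.cons (by simp [hs]) (hadj s hs t ht) (hp.mono fun x hx => ?_)).symm
    simp only [Finset.mem_union, Finset.mem_erase] at hx ⊢
    rcases hx with hx | hx
    · exact ⟨hx.1, .inl hx.2⟩
    · exact ⟨fun h => Finset.disjoint_left.1 hd hs (h ▸ hx), .inr hx⟩⟩

/-- The remaining case, where `X` and `Y` are independent and no edge has two common neighbours in `X`:
`H` is a complete bipartite graph with parts `S` and `T ⊆ X`, where `|S| < |T|`.  The families ending
in `T` and in `S` have indices `|S|` and `|S| - 1`. -/
lemma Irred.adm_of_bip {W X Y : Finset V} {K : ℕ} (h : Irred G W X Y) (ih : Below G W)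
    (hK : 2 ≤ K) (hdeg : ∀ v ∈ W, K + 2 ≤ dg G W v + ind X v + ind Y v)
    (hX : ∀ a ∈ W, a ∈ X → ∀ b ∈ W, b ∈ X → ¬ G.Adj a b)
    (hY : ∀ a ∈ W, a ∈ Y → ∀ b ∈ W, b ∈ Y → ¬ G.Adj a b)
    (hle : (X ∩ W).card ≤ (Y ∩ W).card)
    (hM : ∀ z ∈ W, ∀ w ∈ W, G.Adj z w → ∀ a ∈ W, a ∈ X → ∀ b ∈ W, b ∈ X → a ≠ b →
      G.Adj z a → G.Adj z b → G.Adj w a → ¬ G.Adj w b) : Adm G W X Y K := by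
  have hX2 : 2 ≤ (X ∩ W).card := h.symm.two_le_card hK fun v hv => by
    have := hdeg v hv
    omega
  let N : Finset V → Finset V := fun S => (X ∩ W).filter fun t => ∀ s ∈ S, G.Adj s t
  -- A largest `S` with more than `|S|` common neighbours in `X`; together with these it spans a
  -- complete bipartite graph.
  obtain ⟨S, hS, hSmax⟩ := Finset.exists_max_image
    (W.powerset.filter fun S => S.card + 1 ≤ (N S).card) Finset.card ⟨∅, by
      simp only [Finset.mem_filter, Finset.mem_powerset, Finset.empty_subset, true_and, N]
      simp only [Finset.notMem_empty, false_imp_iff, implies_true, Finset.filter_true,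
        Finset.card_empty]
      omega⟩
  simp only [Finset.mem_filter, Finset.mem_powerset] at hS hSmax
  obtain ⟨hSW, hST⟩ := hS
  set T := N S with hT
  have hTmem : ∀ t, t ∈ T ↔ (t ∈ X ∧ t ∈ W) ∧ ∀ s ∈ S, G.Adj s t := fun t => by
    simp only [hT, N, Finset.mem_filter, Finset.mem_inter]
  have hTX : T ⊆ X := fun t ht => ((hTmem t).1 ht).1.1
  have hTW : T ⊆ W := fun t ht => ((hTmem t).1 ht).1.2
  have hadj : ∀ s ∈ S, ∀ t ∈ T, G.Adj s t := fun s hs t ht => ((hTmem t).1 ht).2 s hs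
  have hdis : Disjoint S T := Finset.disjoint_left.2 fun x hx hx' => (hadj x hx x hx').ne rfl
  obtain ⟨t₀, ht₀⟩ := Finset.card_pos.1 (show 0 < T.card by omega)
  have hHW : S ∪ T ⊆ W := Finset.union_subset hSW hTW
  -- Maximality of `S` bounds the degree into `T` outside `S`.
  have hdT : ∀ v ∈ W, v ∉ S → dg G T v ≤ S.card + 1 := fun v hv hvS => by
    by_contra hcon
    push Not at hcon
    have := hSmax (insert v S) ⟨Finset.insert_subset hv hSW, ?_⟩
    · rw [Finset.card_insert_of_notMem hvS] at this
      omega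
    · rw [Finset.card_insert_of_notMem hvS]
      refine (show S.card + 1 + 1 ≤ dg G T v by omega).trans (Finset.card_le_card fun t ht => ?_)
      rw [Finset.mem_filter, hTmem] at ht
      simp only [N, Finset.mem_filter, Finset.mem_inter, Finset.mem_insert, forall_eq_or_imp]
      exact ⟨ht.1.1, ht.2, ht.1.2⟩
  have hdT1 : ∀ v ∈ W, v ∈ nb G S → dg G T v ≤ 1 := fun v hv hvS => by
    by_contra hcon
    obtain ⟨s, hs, hvs⟩ := mem_nb.1 hvS
    obtain ⟨a, ha, b, hb, hab, hva, hvb⟩ := exists_of_two_le_dg (show 2 ≤ dg G T v by omega)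
    exact hM v hv s (hSW hs) hvs a (hTW ha) (hTX ha) b (hTW hb) (hTX hb) hab hva hvb
      (hadj s hs a ha) (hadj s hs b hb)
  have hdX : ∀ v ∈ W, v ∈ X → dg G T v = 0 := fun v hv hvX =>
    dg_eq_zero_of_indep hX (fun t ht => ⟨hTW ht, hTX ht⟩) hv hvX
  -- A vertex of `X` outside `T` misses some vertex of `S`.
  have hdS : ∀ v ∈ W, v ∈ X → v ∉ T → dg G S v + 1 ≤ S.card := fun v hv hvX hvT => by
    rw [hTmem] at hvT
    push Not at hvT
    obtain ⟨s, hs, hvs⟩ := hvT ⟨hvX, hv⟩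
    refine Finset.card_lt_card ⟨Finset.filter_subset _ _, fun hc => ?_⟩
    have := hc hs
    rw [Finset.mem_filter] at this
    exact hvs this.2.symm
  have hsplit : ∀ v, dg G (S ∪ T) v ≤ dg G S v + dg G T v := fun v => dg_le_add subset_rfl
  have hFT : Fam G (S ∪ T) X T S.card := fam_bip_right hdis hadj hTX le_rfl hST
  have hFS : Fam G (S ∪ T) X S (S.card - 1) := fam_bip_left hdis hadj hTX (by omega)
  by_cases hYH : ∃ y ∈ W \ (S ∪ T), y ∈ Y
  · have hl : ∀ v ∈ W \ (S ∪ T), dg G (S ∪ T) v + ind X v ≤ ind (nb G T) v + S.card := by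
      intro v hv
      rw [Finset.mem_sdiff, Finset.mem_union, not_or] at hv
      have h1 := hsplit v
      by_cases hvX : v ∈ X
      · have h2 := hdX v hv.1 hvX
        have h3 := hdS v hv.1 hvX hv.2.2
        rw [ind_of_mem hvX]
        omega
      · rw [ind_of_not_mem hvX]
        by_cases hvS : v ∈ nb G S
        · have h2 := dg_le_ind (hdT1 v hv.1 hvS)
          have h3 : dg G S v ≤ S.card := dg_le_card
          omega
        · have h2 := dg_eq_zero hvS
          by_cases hvT : v ∈ nb G T
          · rw [ind_of_mem hvT]
            have := hdT v hv.1 hv.2.1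
            omega
          · have := dg_eq_zero hvT
            omega
    by_cases hS1 : S.card = 1
    · obtain ⟨z, rfl⟩ := Finset.card_eq_one.1 hS1
      refine h.adm_of_star ih hK hdeg (hSW (by simp)) hTW ⟨t₀, ht₀⟩
        (Finset.disjoint_singleton_left.1 hdis) rfl (by simpa using hFT) (by simpa using hFS) hYH
        (by simpa using hl)
    · refine h.engine ih hdeg hHW ⟨t₀, by simp [ht₀]⟩ (Finset.union_comm S T).subset hFT hFS hYH hl
        fun v hv hvT => ?_
      rw [Finset.mem_sdiff, Finset.mem_union, not_or] at hv
      have h1 := hsplit v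
      rw [dg_eq_zero hvT] at h1
      by_cases hvX : v ∈ X
      · have h3 := hdS v hv.1 hvX hv.2.2
        rw [ind_of_mem hvX]
        by_cases hvS : v ∈ nb G S
        · rw [ind_of_mem hvS]
          omega
        · have := dg_eq_zero hvS
          omega
      · rw [ind_of_not_mem hvX]
        by_cases hvS : v ∈ nb G S
        · rw [ind_of_mem hvS]
          have h3 : dg G S v ≤ S.card := dg_le_card
          omega
        · have := dg_eq_zero hvS
          omega
  · -- If `Y` lies in `S ∪ T`, then being independent and larger than `S` it lies in `T`, so that `X`,
    -- `Y` and `T` agree inside `W`.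
    push Not at hYH
    have hYH' : ∀ y ∈ W, y ∈ Y → y ∈ S ∨ y ∈ T := fun y hy hyY => by
      by_contra hcon
      exact hYH y (by simp [hy, hcon]) hyY
    have hTle : T.card ≤ (X ∩ W).card := Finset.card_le_card (Finset.filter_subset _ _)
    have hYT : Y ∩ W ⊆ T := by
      by_contra hcon
      obtain ⟨s, hs, hsT⟩ := Finset.not_subset.1 hcon
      rw [Finset.mem_inter] at hs
      have hsS := (hYH' s hs.2 hs.1).resolve_right hsT
      have : Y ∩ W ⊆ S := fun y hy => by
        rw [Finset.mem_inter] at hy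
        exact (hYH' y hy.2 hy.1).resolve_right fun hyT =>
          hY s hs.2 hs.1 y hy.2 hy.1 (hadj s hsS y hyT)
      have := Finset.card_le_card this
      omega
    have hYeq : Y ∩ W = T := Finset.eq_of_subset_of_card_le hYT (by omega)
    have hXeq : T = X ∩ W := Finset.eq_of_subset_of_card_le (Finset.filter_subset _ _)
      (by rw [← hYeq]; exact hle)
    have hTY : T ⊆ Y := hYeq ▸ Finset.inter_subset_left
    have hTc : 2 ≤ T.card := hXeq ▸ hX2
    by_cases hKS : K ≤ S.card
    · exact ((hFT.mono hHW (Finset.singleton_subset_iff.2 ht₀) le_rfl).adm (hTY ht₀)).mono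
        subset_rfl hKS
    · -- One vertex `t₀` of `T` serves as the end; a vertex of `S` is dropped when `T` is too small.
      obtain ⟨S', hS'S, hS'T, hS'b⟩ : ∃ S' ⊆ S, S'.card + 2 ≤ T.card ∧
          ∀ v ∈ W, v ∉ S' → dg G (T.erase t₀) v ≤ S'.card + 1 := by
        by_cases hc : S.card + 2 ≤ T.card
        · exact ⟨S, subset_rfl, hc, fun v hv hvS =>
            (dg_mono (Finset.erase_subset _ _)).trans (hdT v hv hvS)⟩
        · obtain ⟨s, hs⟩ := Finset.card_pos.1 (show 0 < S.card by omega)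
          have h1 := Finset.card_erase_of_mem hs
          have h2 := Finset.card_erase_of_mem ht₀
          refine ⟨S.erase s, Finset.erase_subset _ _, by omega, fun v _ _ => ?_⟩
          have : dg G (T.erase t₀) v ≤ (T.erase t₀).card := dg_le_card
          omega
      have hT1 : T.erase t₀ ⊆ T := Finset.erase_subset _ _
      have hdis' : Disjoint S' (T.erase t₀) := hdis.mono hS'S hT1
      have hadj' : ∀ s ∈ S', ∀ t ∈ T.erase t₀, G.Adj s t := fun s hs t ht =>
        hadj s (hS'S hs) t (hT1 ht)
      have hT1c := Finset.card_erase_of_mem ht₀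
      obtain ⟨t₁, ht₁⟩ := Finset.card_pos.1 (show 0 < (T.erase t₀).card by omega)
      have hins : ∀ t ∈ T, t ∈ insert t₀ (S' ∪ T.erase t₀) := fun t ht => by
        by_cases htt : t = t₀ <;> simp [htt, ht]
      have hsplit' : ∀ v, dg G (S' ∪ T.erase t₀) v ≤ dg G S' v + dg G (T.erase t₀) v :=
        fun v => dg_le_add subset_rfl
      have hdS' : ∀ v, dg G S' v ≤ S'.card := fun v => dg_le_card
      refine h.engine_nb ih hdeg (Finset.union_subset (hS'S.trans hSW) (hT1.trans hTW))
        ⟨t₁, by simp only [Finset.mem_union, ht₁, or_true]⟩ (Finset.union_comm S' _).subset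
        (fam_bip_right hdis' hadj' (hT1.trans hTX) le_rfl (by omega))
        (fam_bip_left hdis' hadj' (hT1.trans hTX) (by omega)) (hTW ht₀) (hTY ht₀) ?_
        (fun x hx hxX => hins x (by rw [hXeq]; simp [hx, hxX]))
        (fun x hx hxY => hins x (by rw [← hYeq]; simp [hx, hxY])) ?_ (fun v hv => ?_)
        (fun v hv hvT => ?_)
      · simp only [Finset.mem_union, Finset.notMem_erase, or_false]
        exact fun hc => Finset.disjoint_left.1 hdis (hS'S hc) ht₀
      · have h1 := hsplit' t₀
        have h2 := hdX t₀ (hTW ht₀) (hTX ht₀)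
        have h3 : dg G (T.erase t₀) t₀ ≤ dg G T t₀ := dg_mono hT1
        have h4 := hdS' t₀
        have h5 := Finset.card_le_card hS'S
        omega
      · simp only [Finset.mem_sdiff, Finset.mem_insert, Finset.mem_union, not_or] at hv
        have h1 := hsplit' v
        have h2 := hdS' v
        by_cases hvS : v ∈ nb G S'
        · have h3 : dg G (T.erase t₀) v ≤ ind (nb G (T.erase t₀)) v := by
            refine dg_le_ind ((dg_mono hT1).trans (hdT1 v hv.1 ?_))
            obtain ⟨s, hs, ha⟩ := mem_nb.1 hvS
            exact mem_nb.2 ⟨s, hS'S hs, ha⟩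
          omega
        · have h3 := dg_eq_zero hvS
          by_cases hvT : v ∈ nb G (T.erase t₀)
          · rw [ind_of_mem hvT]
            have := hS'b v hv.1 hv.2.2.1
            omega
          · have := dg_eq_zero hvT
            omega
      · have h1 := hsplit' v
        have h2 := hdS' v
        have h3 := dg_eq_zero hvT
        by_cases hvS : v ∈ nb G S'
        · rw [ind_of_mem hvS]
          omega
        · have := dg_eq_zero hvS
          omega

/-! ### The rooted theorem and its consequence for cycles -/

/-- The rooted theorem: a good triple in which every vertex `v` of `W` has at least
`K + 2 - [v ∈ X] - [v ∈ Y]` neighbours in `W` has `K + 1` admissible paths from `X` to `Y`.  For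
`K = 0` a single path is claimed, and no degree condition is needed. -/
theorem adm_of_good : ∀ (n : ℕ) (W X Y : Finset V) (K : ℕ), W.card = n → Good G W X Y →
    (K = 0 ∨ ∀ v ∈ W, K + 2 ≤ dg G W v + ind X v + ind Y v) → Adm G W X Y K := by
  intro n
  induction n using Nat.strong_induction_on with
  | _ n ihn =>
  rintro W X Y K rfl h hdeg
  obtain rfl | rfl | hK : K = 0 ∨ K = 1 ∨ 2 ≤ K := by omega
  · exact h.adm_zero
  · have hdeg := hdeg.resolve_left one_ne_zero
    obtain ⟨e, he⟩ := h.ne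
    refine adm_one_exceptional W X Y e h (fun v hv _ => hdeg v hv) ?_
    have h1 := hdeg e he
    have := ind_le_one (X := X) (v := e)
    have := ind_le_one (X := Y) (v := e)
    obtain ⟨v, hv, ha⟩ := mem_nb.1 (dg_pos (show 1 ≤ dg G W e by omega))
    exact ⟨v, hv, ha.ne'⟩
  · have hdeg := hdeg.resolve_left (by omega)
    have hdeg' : ∀ v ∈ W, K + 2 ≤ dg G W v + ind Y v + ind X v := fun v hv => by
      have := hdeg v hv
      omega
    have ih : Below G W := fun W' X' Y' K' hlt => ihn _ hlt W' X' Y' K' rfl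
    by_contra hno
    have hI := irred_of_not_adm hK ih h hdeg hno
    have hnoX := fun hX hY => hno (hI.adm_of_edge ih hK hdeg hX hY)
    have hnoY := fun hY hX => hno (hI.symm.adm_of_edge ih hK hdeg' hY hX).symm
    have indep : ∀ Z : Finset V, (¬ ∃ a ∈ W, a ∈ Z ∧ ∃ b ∈ W, b ∈ Z ∧ G.Adj a b) →
        ∀ a ∈ W, a ∈ Z → ∀ b ∈ W, b ∈ Z → ¬ G.Adj a b :=
      fun Z hZ a ha haZ b hb hbZ hab => hZ ⟨a, ha, haZ, b, hb, hbZ, hab⟩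
    -- For independent `X` and `Y`, with `X` the smaller one.
    have key : ∀ X Y : Finset V, Irred G W X Y →
        (∀ v ∈ W, K + 2 ≤ dg G W v + ind X v + ind Y v) →
        (∀ a ∈ W, a ∈ X → ∀ b ∈ W, b ∈ X → ¬ G.Adj a b) →
        (∀ a ∈ W, a ∈ Y → ∀ b ∈ W, b ∈ Y → ¬ G.Adj a b) →
        (X ∩ W).card ≤ (Y ∩ W).card → Adm G W X Y K := by
      intro X Y hI hdeg hX hY hle
      by_contra hno
      exact hno <| hI.adm_of_bip ih hK hdeg hX hY hle
        fun z hz w hw hzw a ha haX b hb hbX hab hza hzb hwa hwb =>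
          hno (hI.adm_of_diamond ih hK hdeg hX hY hle ha haX hb hbX hab hz hw hzw hza hzb hwa hwb)
    have hXi : ∀ a ∈ W, a ∈ X → ∀ b ∈ W, b ∈ X → ¬ G.Adj a b := indep X fun hX => by
      have hYe : ∃ a ∈ W, a ∈ Y ∧ ∃ b ∈ W, b ∈ Y ∧ G.Adj a b := by
        by_contra hc
        exact hnoX hX (.inl (indep Y hc))
      rcases le_total (X ∩ W).card (Y ∩ W).card with hle | hle
      · exact hnoX hX (.inr hle)
      · exact hnoY hYe (.inr hle)
    have hYi : ∀ a ∈ W, a ∈ Y → ∀ b ∈ W, b ∈ Y → ¬ G.Adj a b := indep Y fun hY =>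
      hnoY hY (.inl hXi)
    rcases le_total (X ∩ W).card (Y ∩ W).card with hle | hle
    · exact hno (key X Y hI hdeg hXi hYi hle)
    · exact hno (key Y X hI.symm hdeg' hYi hXi hle).symm

/-- Connectedness of `G - v` in terms of neighbour-closed sets. -/
lemma mem_of_closed {v : V} (hc : (G.induce ({v}ᶜ : Set V)).Connected) {D : Finset V}
    (hn : D.Nonempty) (hv : v ∉ D) (hD : ∀ u ∈ D, ∀ w, w ≠ v → G.Adj u w → w ∈ D) {w : V}
    (hw : w ≠ v) : w ∈ D := by
  obtain ⟨d, hd⟩ := hn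
  have hdv : d ≠ v := fun h => hv (h ▸ hd)
  have key : ∀ a b : ({v}ᶜ : Set V), (G.induce ({v}ᶜ : Set V)).Walk a b → a.1 ∈ D → b.1 ∈ D := by
    intro a b p
    induction p with
    | nil => exact id
    | @cons a b c hab _ ih => exact fun ha => ih (hD a.1 ha b.1 b.2 hab)
  obtain ⟨p⟩ := hc.preconnected ⟨d, hdv⟩ ⟨w, hw⟩
  exact key _ _ p hd

/-- Deleting the ends of an edge of a 2-connected graph leaves a good triple. -/
lemma good_of_edge (hc : ∀ v : V, (G.induce ({v}ᶜ : Set V)).Connected) {x y : V}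
    (hxy : G.Adj x y) (hne : (Finset.univ \ {x, y} : Finset V).Nonempty) :
    Good G (Finset.univ \ {x, y}) (nb G {x}) (nb G {y}) := by
  have hW : ∀ v, v ∈ (Finset.univ \ {x, y} : Finset V) ↔ v ≠ x ∧ v ≠ y := fun v => by
    simp [not_or]
  have hit : ∀ w, ∀ D ⊆ (Finset.univ \ {x, y} : Finset V).erase w, D.Nonempty →
      Cl G D ((Finset.univ \ {x, y} : Finset V).erase w) →
      (w = x ∨ ∃ d ∈ D, G.Adj d x) ∨ (w = y ∨ ∃ d ∈ D, G.Adj d y) := by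
    intro w D hD hn hcl
    by_contra hcon
    push Not at hcon
    obtain ⟨⟨hwx, h1⟩, -, h2⟩ := hcon
    have hDm : ∀ d ∈ D, d ≠ w ∧ d ≠ x ∧ d ≠ y := fun d hd => by
      have := hD hd
      rwa [Finset.mem_erase, hW] at this
    have := mem_of_closed (hc w) hn (fun h => (hDm w h).1 rfl) (fun u hu v hv ha => by
      refine hcl u hu v ?_ ha
      rw [Finset.mem_erase, hW]
      exact ⟨hv, fun h => h1 u hu (h ▸ ha), fun h => h2 u hu (h ▸ ha)⟩) hwx.symm
    exact (hDm x this).2.1 rfl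
  have hx : x ∉ (Finset.univ \ {x, y} : Finset V) := fun h => ((hW x).1 h).1 rfl
  have hy : y ∉ (Finset.univ \ {x, y} : Finset V) := fun h => ((hW y).1 h).2 rfl
  refine ⟨hne, fun D hD hn hcl => ?_, fun D hD hn hcl => ?_, fun w hw D hD hn hcl => ?_⟩
  · by_contra hcon
    push Not at hcon
    have hDm : ∀ d ∈ D, d ≠ x ∧ d ≠ y := fun d hd => (hW d).1 (hD hd)
    have := mem_of_closed (hc y) hn (fun h => (hDm y h).2 rfl) (fun u hu v hv ha =>
      hcl u hu v ((hW v).2 ⟨fun h => hcon u hu (mem_nb_one.2 (h ▸ ha)), hv⟩) ha) hxy.ne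
    exact (hDm x this).1 rfl
  · by_contra hcon
    push Not at hcon
    have hDm : ∀ d ∈ D, d ≠ x ∧ d ≠ y := fun d hd => (hW d).1 (hD hd)
    have := mem_of_closed (hc x) hn (fun h => (hDm x h).1 rfl) (fun u hu v hv ha =>
      hcl u hu v ((hW v).2 ⟨hv, fun h => hcon u hu (mem_nb_one.2 (h ▸ ha))⟩) ha) hxy.ne'
    exact (hDm y this).2 rfl
  · rcases hit w D hD hn hcl with (h1 | ⟨d, hd, ha⟩) | (h1 | ⟨d, hd, ha⟩)
    · exact absurd hw (h1 ▸ hx)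
    · exact ⟨d, hd, .inl (mem_nb_one.2 ha)⟩
    · exact absurd hw (h1 ▸ hy)
    · exact ⟨d, hd, .inr (mem_nb_one.2 ha)⟩

/-- A path avoiding the adjacent vertices `x` and `y`, from a neighbour of `x` to a neighbour
of `y`, closes up to a cycle. -/
lemma Pth.cycle {W : Finset V} {n : ℕ} {x y u v : V} (h : Pth G W n u v) (hx : x ∉ W) (hy : y ∉ W)
    (hxy : G.Adj x y) (hu : G.Adj u x) (hv : G.Adj v y) :
    ∃ c : G.Walk x x, c.IsCycle ∧ c.length = n + 2 := by
  obtain ⟨p, hp, hl, hs⟩ := (h.symm.append hu (W₂ := {x}) (by simpa using hx)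
    (.single (by simp))).toWalk
  have hyp : y ∉ p.support := fun hc => by
    have := hs y hc
    rw [Finset.mem_union, Finset.mem_singleton] at this
    exact this.elim hy hxy.ne'
  refine ⟨.cons hxy (.cons hv.symm p), ?_, by simp only [Walk.length_cons]; omega⟩
  rw [Walk.cons_isCycle_iff, Walk.cons_isPath_iff, Walk.edges_cons, List.mem_cons]
  refine ⟨⟨hp, hyp⟩, ?_⟩
  rintro (hc | hc)
  · rw [Sym2.eq_swap, Sym2.congr_right] at hc
    exact hx (hc ▸ h.right_mem)
  · exact hyp (p.snd_mem_support_of_mem_edges hc)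

/-- Multiplication by `1` or `2` is invertible modulo an odd number, so `k` consecutive terms of a
progression with such a difference cover all residues. -/
lemma exists_term {k d : ℕ} (hk : 0 < k) (hodd : Odd k) (hd : d = 1 ∨ d = 2) (a m : ℤ) :
    ∃ i : ℕ, i ≤ k - 1 ∧ a + d * i ≡ m [ZMOD (k : ℤ)] := by
  obtain ⟨e, he⟩ : ∃ e : ℤ, (k : ℤ) ∣ d * e - 1 := by
    rcases hd with rfl | rfl
    · exact ⟨1, by simp⟩
    · obtain ⟨r, rfl⟩ := hodd
      exact ⟨r + 1, 1, by push_cast; ring⟩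
  have hk' : (0 : ℤ) < k := by exact_mod_cast hk
  have h0 := Int.emod_nonneg (e * (m - a)) hk'.ne'
  have h1 := Int.emod_lt_of_pos (e * (m - a)) hk'
  refine ⟨(e * (m - a) % k).toNat, by omega, ?_⟩
  rw [Int.toNat_of_nonneg h0, Int.modEq_comm, Int.modEq_iff_dvd]
  obtain ⟨q, hq⟩ := he
  refine ⟨q * (m - a) - d * (e * (m - a) / k), ?_⟩
  have h2 := Int.emod_add_mul_ediv (e * (m - a)) k
  linear_combination (m - a) * hq + (d : ℤ) * h2

/-- All residues modulo `k` occur among the cycle lengths. -/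
theorem exists_cycle [DecidableRel G.Adj] {k : ℕ} (hk : 0 < k) (hodd : Odd k)
    (hcard : 3 ≤ Fintype.card V) (hc : ∀ v : V, (G.induce ({v}ᶜ : Set V)).Connected)
    (hdeg : ∀ v : V, k + 1 ≤ G.degree v) (m : ℤ) :
    ∃ (v : V) (c : G.Walk v v), c.IsCycle ∧ (c.length : ℤ) ≡ m [ZMOD (k : ℤ)] := by
  have hdg : ∀ v, G.degree v = dg G Finset.univ v := fun v => by
    rw [← G.card_neighborFinset_eq_degree, dg]
    congr 1
    ext w
    simp
  obtain ⟨x⟩ : Nonempty V := Fintype.card_pos_iff.1 (by omega)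
  obtain ⟨y, -, hxy⟩ := mem_nb.1 (dg_pos (show 1 ≤ dg G Finset.univ x by
    have := hdeg x
    rw [hdg] at this
    omega))
  have hne : (Finset.univ \ {x, y} : Finset V).Nonempty := by
    rw [← Finset.card_pos, Finset.card_sdiff_of_subset (Finset.subset_univ _), Finset.card_univ]
    have : ({x, y} : Finset V).card ≤ 2 := Finset.card_le_two
    omega
  obtain ⟨m₀, d, hd, hP⟩ := adm_of_good _ _ _ _ (k - 1) rfl (good_of_edge hc hxy hne)
    (.inr fun v _ => by
      have h1 := hdeg v
      rw [hdg] at h1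
      have h2 : dg G Finset.univ v ≤ dg G (Finset.univ \ {x, y}) v + dg G {x, y} v :=
        dg_le_add (by rw [Finset.sdiff_union_of_subset (Finset.subset_univ _)])
      have h3 : dg G {x, y} v ≤ dg G {x} v + dg G {y} v := dg_le_add (by rw [Finset.insert_eq])
      rw [dg_singleton, dg_singleton] at h3
      omega)
  obtain ⟨i, hi, hmod⟩ := exists_term hk hodd hd ((m₀ : ℤ) + 2) m
  obtain ⟨u, hu, v, hv, hp⟩ := hP i hi
  obtain ⟨c, hcyc, hlen⟩ := hp.cycle (by simp) (by simp) hxy (mem_nb_one.1 hu) (mem_nb_one.1 hv)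
  refine ⟨x, c, hcyc, ?_⟩
  rw [hlen]
  convert hmod using 1
  push_cast
  ring

end
end EvenCycles

/-- For every odd positive integer `k`, every 2-connected finite simple graph of
minimum degree at least `k + 1` contains cycles of all even lengths modulo `k`:
for every even integer `m` there is a cycle whose length is congruent to `m`
modulo `k`. -/
theorem cycles_all_even_lengths_mod_k {V : Type*} [Fintype V] (k : ℕ) (hk : 0 < k)
    (hodd : Odd k) (G : SimpleGraph V) [DecidableRel G.Adj]
    (h2 : TwoConnected G)
    (hdeg : ∀ v : V, k + 1 ≤ G.degree v) :
    ∀ m : ℤ, Even m → ∃ (v : V) (c : G.Walk v v), c.IsCycle ∧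
      (c.length : ℤ) ≡ m [ZMOD (k : ℤ)] :=
  fun m _ => EvenCycles.exists_cycle hk hodd h2.2.1 h2.2.2 hdeg m
end
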